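/- Let ε > 0, let d ∈ {3,4} and n ∈ {5,6,7,8}, and let F ∈ ℤ[X_0,…,X_n] be a non-singular form of degree d, defining the non-singular hypersurface X ⊂ P^n. Then N_X(B) = O_{d,ε,n}(B^{n−1+ε}); that is, there is a constant depending only on d, ε and n such that for every B ≥ 1 the number of rational points on X of height at most B is at most that constant times B^{n−1+ε}. -/

import Mathlib

noncomputable section

abbrev KK : Type := AlgebraicClosure ℚ

/-- A primitive integer vector: the gcd of its coordinates is 1. -/
def IsPrimitiveVec {n : ℕ} (x : Fin n → ℤ) : Prop := Finset.univ.gcd x = 1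

/-- Height of an integer vector: the maximum modulus of its coordinates. -/
def heightVec {n : ℕ} (x : Fin n → ℤ) : ℝ :=
  ((Finset.univ.sup fun i => (x i).natAbs : ℕ) : ℝ)

/-- An integer form is non-singular if its partial derivatives have no common
non-trivial zero over the algebraic closure of ℚ, so that the hypersurface it
defines is non-singular. -/
def NonsingularZ {n : ℕ} (F : MvPolynomial (Fin (n + 1)) ℤ) : Prop :=
  ∀ z : Fin (n + 1) → KK,
    (∀ i, MvPolynomial.aeval z (MvPolynomial.pderiv i F) = 0) → z = 0

/-!
The height of a rational subspace `W` is the largest modulus of a maximal minor of an integral basis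
of `W`. Rational points on `X = {F = 0}` are the subspaces of rank one on which `F` vanishes; more
generally one expects the subspaces of rank `r` and height at most `D` contained in `X` to number
`O(D ^ (n - r + ε))`. Non-singularity enters only through the fact that such a subspace satisfies
`2 * r ≤ n + 1`, so that the expected bound in rank `r` implies the one in rank `r + 1` for trivial
reasons when `r` is large. This implication is extended to every `r ≥ 1` by downward induction.

Let `K` be a large constant. A subspace of rank `r` in `X` of height between `D / 2` and `D` either
lies in a subspace of rank `r + 1` in `X` of height at most a constant times `D / K`, or is
isolated. The implication from `r` to `r + 1` bounds the number of containing subspaces in terms of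
the count in rank `r` at smaller heights, so the first kind contributes a small proportion of the
expected bound, which induction on `D` absorbs. For isolated subspaces of rank `r ≥ 2`, one counts
their hyperplanes of height about `K * D`. If two isolated subspaces share one, then by
submodularity of the height their sum has small height, so `F` does not vanish on it. A given
subspace lies in few such sums, and each sum has at most `deg F` hyperplanes contained in `X`.
Hence few hyperplanes are shared, and Cauchy–Schwarz bounds the number of isolated subspaces by the
count in rank `r - 1`.

In rank one the hyperplanes are replaced by reductions modulo the primes in `[P, 4 * P]`, with `P`
about `K * D`: a collision modulo such a prime again makes the height of the span small, and the
reductions lie on the zero set of `F` modulo `p`, whose size Schwartz–Zippel bounds.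
-/

namespace DimensionGrowth

open Finset Module

variable {ι : Type*}

/-! ### Maximal minors -/

section Minor

variable {R K : Type*} [CommRing R] [Field K] {r : ℕ}

/-- The square matrix formed by the columns `J` of the matrix with rows `b`. -/
def minorMatrix (b : Fin r → ι → R) (J : Fin r → ι) : Matrix (Fin r) (Fin r) R :=
  .of fun k l => b k (J l)

/-- The maximal minor, on the columns `J`, of the matrix with rows `b`. -/
def minor (b : Fin r → ι → R) (J : Fin r → ι) : R :=
  (minorMatrix b J).det

omit [CommRing R] in
@[simp]
theorem minorMatrix_apply (b : Fin r → ι → R) (J : Fin r → ι) (k l : Fin r) :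
    minorMatrix b J k l = b k (J l) :=
  rfl

theorem minor_eq_det_mul {b c : Fin r → ι → R} {U : Matrix (Fin r) (Fin r) R}
    (h : ∀ k, c k = ∑ l, U k l • b l) (J : Fin r → ι) : minor c J = U.det * minor b J := by
  rw [minor, minor, ← Matrix.det_mul]
  congr 1
  ext k l
  simp [Matrix.mul_apply, h k]

theorem minor_map {S : Type*} [CommRing S] (φ : R →+* S) (b : Fin r → ι → R) (J : Fin r → ι) :
    minor (fun k i => φ (b k i)) J = φ (minor b J) :=
  (φ.map_det _).symm

theorem minor_update (b : Fin r → ι → R) (k : Fin r) (q : Fin r → R) (J : Fin r → ι) :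
    minor (Function.update b k (∑ l, q l • b l)) J = q k * minor b J := by
  rw [minor, minor, ← smul_eq_mul, ← Matrix.det_updateRow_sum]
  congr 1
  ext i j
  obtain rfl | hik := eq_or_ne i k
  · simp [minorMatrix]
  · simp [minorMatrix, hik]

theorem minor_cons_sum (w : ι → R) (b : Fin r → ι → R) (a : R) (q : Fin r → R)
    (J : Fin (r + 1) → ι) :
    minor (Fin.cons (a • w + ∑ k, q k • b k) b : Fin (r + 1) → ι → R) J =
      a * minor (Fin.cons w b : Fin (r + 1) → ι → R) J := by
  have h := minor_update (Fin.cons w b : Fin (r + 1) → ι → R) 0 (Fin.cons a q) J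
  rwa [Fin.sum_univ_succ, Fin.update_cons_zero] at h

theorem exists_minor_ne_zero_iff [Finite ι] {b : Fin r → ι → K} :
    (∃ J, minor b J ≠ 0) ↔ LinearIndependent K b := by
  have := Fintype.ofFinite ι
  constructor
  · rintro ⟨J, hJ⟩
    rw [Fintype.linearIndependent_iff]
    intro g hg
    refine congrFun (Matrix.eq_zero_of_vecMul_eq_zero hJ (v := g) ?_)
    ext l
    simpa [Matrix.vecMul, dotProduct] using congrFun hg (J l)
  · intro h
    have hrank : (Matrix.of b).rank = r := by
      simpa using LinearIndependent.rank_matrix (M := Matrix.of b) h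
    rw [Matrix.rank_eq_finrank_span_cols] at hrank
    have hcols := Submodule.exists_fun_fin_finrank_span_eq K (Set.range (Matrix.of b).col)
    rw [hrank] at hcols
    obtain ⟨f, hf, -, hli⟩ := hcols
    choose J hJ using hf
    refine ⟨J, IsUnit.ne_zero ((Matrix.isUnit_iff_isUnit_det _).1 ?_)⟩
    rw [← Matrix.linearIndependent_cols_iff_isUnit]
    rwa [← show (fun l => (Matrix.of b).col (J l)) = f from funext hJ] at hli

end Minor

section IntegerVectors

variable {r : ℕ}

/-- The inclusion `ℤ^ι → ℚ^ι`. -/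
def ratVec : (ι → ℤ) →ₗ[ℤ] (ι → ℚ) :=
  (Algebra.linearMap ℤ ℚ).compLeft ι

@[simp]
theorem ratVec_apply (x : ι → ℤ) (i : ι) : ratVec x i = x i :=
  rfl

@[simp]
theorem ratVec_smul (z : ℤ) (x : ι → ℤ) : ratVec (z • x) = (z : ℚ) • ratVec x := by
  ext i
  simp

theorem ratVec_injective : Function.Injective (ratVec (ι := ι)) := fun x y h => by
  ext i
  simpa using congrFun h i

theorem minor_ratVec (b : Fin r → ι → ℤ) (J : Fin r → ι) :
    minor (fun k => ratVec (b k)) J = minor b J :=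
  minor_map (Int.castRingHom ℚ) b J

theorem ratVec_cons (w : ι → ℤ) (b : Fin r → ι → ℤ) :
    (fun k => ratVec ((Fin.cons w b : Fin (r + 1) → ι → ℤ) k)) =
      Fin.cons (ratVec w) fun k => ratVec (b k) := by
  ext k : 1
  cases k using Fin.cases <;> rfl

theorem exists_ratVec_eq_smul [Finite ι] (x : ι → ℚ) :
    ∃ (m : ℤ) (y : ι → ℤ), m ≠ 0 ∧ ratVec y = (m : ℚ) • x := by
  obtain ⟨m, hm⟩ := IsLocalization.exist_integer_multiples_of_finite (nonZeroDivisors ℤ) x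
  choose y hy using hm
  refine ⟨m, y, nonZeroDivisors.coe_ne_zero m, ?_⟩
  ext i
  simpa using hy i

/-- The largest absolute value of a maximal minor of the integer matrix with rows `b`. -/
def maxMinor [Fintype ι] (b : Fin r → ι → ℤ) : ℕ :=
  univ.sup fun J => (minor b J).natAbs

variable [Fintype ι] {b : Fin r → ι → ℤ}

theorem abs_minor_le_maxMinor (b : Fin r → ι → ℤ) (J : Fin r → ι) : |minor b J| ≤ maxMinor b := by
  rw [Int.abs_eq_natAbs]
  exact_mod_cast le_sup (f := fun J => (minor b J).natAbs) (mem_univ J)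

theorem maxMinor_le {m : ℕ} (h : ∀ J, |minor b J| ≤ m) : maxMinor b ≤ m :=
  Finset.sup_le fun J _ => by
    have := h J
    rw [Int.abs_eq_natAbs] at this
    exact_mod_cast this

theorem exists_abs_minor_eq_maxMinor (h : maxMinor b ≠ 0) : ∃ J, |minor b J| = maxMinor b := by
  have hne : (univ : Finset (Fin r → ι)).Nonempty := by
    by_contra hc
    rw [not_nonempty_iff_eq_empty] at hc
    exact h (by simp [maxMinor, hc])
  obtain ⟨J, -, hJ⟩ := exists_mem_eq_sup univ hne fun J => (minor b J).natAbs
  exact ⟨J, by rw [Int.abs_eq_natAbs, maxMinor, hJ]⟩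

theorem maxMinor_eq_natAbs_det_mul {c : Fin r → ι → ℤ} {U : Matrix (Fin r) (Fin r) ℤ}
    (h : ∀ k, c k = ∑ l, U k l • b l) : maxMinor c = U.det.natAbs * maxMinor b := by
  simp_rw [maxMinor, minor_eq_det_mul h, Int.natAbs_mul]
  exact (apply_sup_eq_sup_comp_of_linearOrder (fun t : ℕ => U.det.natAbs * t)
    (fun _ _ hab => Nat.mul_le_mul_left _ hab) (by simp)).symm

theorem maxMinor_ne_zero_iff :
    maxMinor b ≠ 0 ↔ LinearIndependent ℚ fun k => ratVec (b k) := by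
  rw [← exists_minor_ne_zero_iff, maxMinor, ← bot_eq_zero, Ne, Finset.sup_eq_bot_iff]
  simp [minor_ratVec]

end IntegerVectors

/-! ### Integral bases and heights of rational subspaces -/

section Height

variable {r : ℕ} {W W' : Submodule ℚ (ι → ℚ)} {b : Fin r → ι → ℤ}

/-- `b` is a `ℤ`-basis of the lattice of integer points of the rational subspace `W`. -/
structure IsIntegralBasis (W : Submodule ℚ (ι → ℚ)) (b : Fin r → ι → ℤ) : Prop where
  linearIndependent : LinearIndependent ℚ fun k => ratVec (b k)
  mem : ∀ k, ratVec (b k) ∈ W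
  exists_coeff : ∀ x, ratVec x ∈ W → ∃ z : Fin r → ℤ, x = ∑ k, z k • b k

/-- The height of a rational subspace: the largest absolute value of a maximal minor of an integral
basis (see `IsIntegralBasis.maxMinor_eq`). It is encoded as the least value attained by independent
integral families in the subspace, which does not presuppose the existence of integral bases. -/
def subspaceHeight [Fintype ι] (W : Submodule ℚ (ι → ℚ)) : ℕ :=
  sInf {t | ∃ b : Fin (finrank ℚ W) → ι → ℤ, (LinearIndependent ℚ fun k => ratVec (b k)) ∧
    (∀ k, ratVec (b k) ∈ W) ∧ maxMinor b = t}

theorem subspaceHeight_le [Fintype ι] (hW : finrank ℚ W = r)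
    (hli : LinearIndependent ℚ fun k => ratVec (b k)) (hb : ∀ k, ratVec (b k) ∈ W) :
    subspaceHeight W ≤ maxMinor b := by
  subst hW
  exact Nat.sInf_le ⟨b, hli, hb, rfl⟩

theorem span_ratVec_eq [Finite ι] (hb : ∀ k, ratVec (b k) ∈ W)
    (hcoeff : ∀ x, ratVec x ∈ W → ∃ z : Fin r → ℤ, x = ∑ k, z k • b k) :
    Submodule.span ℚ (Set.range fun k => ratVec (b k)) = W := by
  refine le_antisymm (Submodule.span_le.2 (Set.range_subset_iff.2 hb)) fun x hx => ?_
  obtain ⟨m, y, hm, hy⟩ := exists_ratVec_eq_smul x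
  obtain ⟨z, rfl⟩ := hcoeff y (hy ▸ W.smul_mem _ hx)
  rw [← Submodule.smul_mem_iff _ (Int.cast_ne_zero.2 hm : (m : ℚ) ≠ 0), ← hy, map_sum]
  refine Submodule.sum_mem _ fun k _ => ?_
  rw [ratVec_smul]
  exact Submodule.smul_mem _ _ (Submodule.subset_span ⟨k, rfl⟩)

namespace IsIntegralBasis

variable [Finite ι]

theorem span_eq (h : IsIntegralBasis W b) :
    Submodule.span ℚ (Set.range fun k => ratVec (b k)) = W :=
  span_ratVec_eq h.mem h.exists_coeff

theorem of_finrank_eq (hW : finrank ℚ W = r) (hb : ∀ k, ratVec (b k) ∈ W)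
    (hcoeff : ∀ x, ratVec x ∈ W → ∃ z : Fin r → ℤ, x = ∑ k, z k • b k) : IsIntegralBasis W b where
  linearIndependent := by
    rw [linearIndependent_iff_card_eq_finrank_span, Set.finrank, span_ratVec_eq hb hcoeff, hW,
      Fintype.card_fin]
  mem := hb
  exists_coeff := hcoeff

theorem span_sup_span_singleton {w : ι → ℤ} (hb : IsIntegralBasis W b)
    (hw : IsIntegralBasis W' (Fin.cons w b : Fin (r + 1) → ι → ℤ)) :
    W ⊔ Submodule.span ℚ {ratVec w} = W' := by
  rw [← hw.span_eq, ratVec_cons, Fin.range_cons, Submodule.span_insert, hb.span_eq, sup_comm]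

theorem finrank_eq (h : IsIntegralBasis W b) : finrank ℚ W = r := by
  rw [← h.span_eq, finrank_span_eq_card h.linearIndependent, Fintype.card_fin]

omit [Finite ι] in
theorem abs_minor_eq {c : Fin r → ι → ℤ} (hb : IsIntegralBasis W b) (hc : IsIntegralBasis W c)
    (J : Fin r → ι) : |minor c J| = |minor b J| := by
  have hdvd {b c : Fin r → ι → ℤ} (hb : IsIntegralBasis W b) (hc : IsIntegralBasis W c) :
      minor b J ∣ minor c J := by
    choose U hU using fun k => hb.exists_coeff (c k) (hc.mem k)
    exact ⟨_, (minor_eq_det_mul hU J).trans (mul_comm _ _)⟩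
  rw [Int.abs_eq_natAbs, Int.abs_eq_natAbs,
    Int.natAbs_eq_of_dvd_dvd (hdvd hc hb) (hdvd hb hc)]

end IsIntegralBasis

theorem IsIntegralBasis.maxMinor_eq [Fintype ι]
    (h : IsIntegralBasis W b) : maxMinor b = subspaceHeight W := by
  refine le_antisymm ?_ (subspaceHeight_le h.finrank_eq h.linearIndependent h.mem)
  obtain rfl := h.finrank_eq
  refine le_csInf ⟨_, b, h.linearIndependent, h.mem, rfl⟩ ?_
  rintro _ ⟨c, hc, hcW, rfl⟩
  choose U hU using fun k => h.exists_coeff (c k) (hcW k)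
  have hc0 := maxMinor_ne_zero_iff.2 hc
  rw [maxMinor_eq_natAbs_det_mul hU] at hc0 ⊢
  exact Nat.le_mul_of_pos_left _ (Nat.pos_of_ne_zero (left_ne_zero_of_mul hc0))

theorem exists_isIntegralBasis [Finite ι] (hW : finrank ℚ W = r) :
    ∃ b : Fin r → ι → ℤ, IsIntegralBasis W b := by
  obtain ⟨n, B⟩ := Submodule.basisOfPid (Pi.basisFun ℤ ι)
    ((W.restrictScalars ℤ).comap ratVec)
  have h : IsIntegralBasis W fun k => (B k : ι → ℤ) := by
    refine ⟨?_, fun k => (B k).2, fun x hx => ⟨B.repr ⟨x, hx⟩, ?_⟩⟩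
    · rw [← LinearIndependent.iff_fractionRing ℤ ℚ]
      exact (B.linearIndependent.map' (Submodule.subtype _) (Submodule.ker_subtype _)).map' ratVec
        (LinearMap.ker_eq_bot.2 ratVec_injective)
    · simpa only [AddSubmonoidClass.coe_finsetSum, Submodule.coe_smul] using
        congrArg Subtype.val (B.sum_repr ⟨x, hx⟩).symm
  obtain rfl : n = r := h.finrank_eq.symm.trans hW
  exact ⟨_, h⟩

theorem subspaceHeight_pos [Fintype ι] (W : Submodule ℚ (ι → ℚ)) : 0 < subspaceHeight W := by
  obtain ⟨b, hb⟩ := exists_isIntegralBasis (W := W) rfl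
  rw [← hb.maxMinor_eq]
  exact Nat.pos_of_ne_zero (maxMinor_ne_zero_iff.2 hb.linearIndependent)

theorem exists_int_functional [Finite ι] (f : (ι → ℚ) →ₗ[ℚ] ℚ) :
    ∃ (m : ℤ) (φ : (ι → ℤ) →ₗ[ℤ] ℤ), m ≠ 0 ∧ ∀ x, (φ x : ℚ) = m * f (ratVec x) := by
  classical
  have := Fintype.ofFinite ι
  obtain ⟨m, y, hm, hy⟩ := exists_ratVec_eq_smul fun i => f (Pi.single i 1)
  refine ⟨m, Fintype.linearCombination ℤ y, hm, fun x => ?_⟩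
  have hx : f (ratVec x) = ∑ i, (x i : ℚ) * f (Pi.single i 1) := by
    conv_lhs => rw [pi_eq_sum_univ' (ratVec x)]
    simp
  have hy' (i : ι) : (y i : ℚ) = m * f (Pi.single i 1) := congrFun hy i
  rw [hx, Fintype.linearCombination_apply, mul_sum]
  push_cast [smul_eq_mul]
  exact sum_congr rfl fun i _ => by rw [hy']; ring

theorem exists_inf_ker_eq (hle : W ≤ W') (hW : finrank ℚ W' = finrank ℚ W + 1) [Finite ι] :
    ∃ f : (ι → ℚ) →ₗ[ℚ] ℚ, W' ⊓ LinearMap.ker f = W := by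
  obtain ⟨x, hx', hx⟩ := SetLike.exists_of_lt
    (lt_of_le_of_ne hle fun h => by rw [h] at hW; omega)
  obtain ⟨f, hfx, hf⟩ := Submodule.exists_le_ker_of_notMem hx
  refine ⟨f, (Submodule.eq_of_le_of_finrank_le (le_inf hle hf) ?_).symm⟩
  have hlt : W' ⊓ LinearMap.ker f < W' :=
    lt_of_le_of_ne inf_le_left fun h => hfx (inf_eq_left.1 h hx')
  have := Submodule.finrank_lt_finrank_of_lt hlt
  omega

theorem IsIntegralBasis.exists_abs_minor_eq [Fintype ι] (h : IsIntegralBasis W b) :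
    ∃ I, |minor b I| = subspaceHeight W := by
  rw [← h.maxMinor_eq]
  exact exists_abs_minor_eq_maxMinor (maxMinor_ne_zero_iff.2 h.linearIndependent)

theorem IsIntegralBasis.abs_minor_le [Fintype ι] (h : IsIntegralBasis W b) (J : Fin r → ι) :
    |minor b J| ≤ subspaceHeight W :=
  h.maxMinor_eq ▸ abs_minor_le_maxMinor b J

theorem IsIntegralBasis.exists_complement [Finite ι] {f : (ι → ℚ) →ₗ[ℚ] ℚ}
    (h : IsIntegralBasis (W ⊓ LinearMap.ker f) b) :
    ∃ w, ratVec w ∈ W ∧ ∀ x, ratVec x ∈ W →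
      ∃ (a : ℤ) (z : Fin r → ℤ), x = a • w + ∑ k, z k • b k := by
  obtain ⟨m, φ, hm, hφ⟩ := exists_int_functional f
  have hφ0 (x : ι → ℤ) : φ x = 0 ↔ f (ratVec x) = 0 := by
    rw [← Int.cast_eq_zero (α := ℚ), hφ, mul_eq_zero, or_iff_right (Int.cast_ne_zero.2 hm)]
  -- `φ` maps the lattice of `W` onto a cyclic group; `w` is a preimage of a generator.
  let Λ := (W.restrictScalars ℤ).comap ratVec
  obtain ⟨g, hg⟩ := (IsPrincipalIdealRing.principal (Λ.map φ : Ideal ℤ)).principal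
  obtain ⟨w, hw, rfl⟩ : g ∈ Λ.map φ := hg ▸ Submodule.mem_span_singleton_self g
  refine ⟨w, hw, fun x hx => ?_⟩
  have hmem : φ x ∈ Λ.map φ := Submodule.mem_map_of_mem hx
  rw [hg, Submodule.mem_span_singleton] at hmem
  obtain ⟨a, ha⟩ := hmem
  have hker : φ (x - a • w) = 0 := by rw [map_sub, map_smul, ha, sub_self]
  obtain ⟨z, hz⟩ := h.exists_coeff _ ⟨Λ.sub_mem hx (Λ.smul_mem a hw), (hφ0 _).1 hker⟩
  exact ⟨a, z, by rw [← hz, add_sub_cancel]⟩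

theorem IsIntegralBasis.exists_cons [Finite ι] (hle : W ≤ W') (hW' : finrank ℚ W' = r + 1)
    (h : IsIntegralBasis W b) : ∃ w, IsIntegralBasis W' (Fin.cons w b : Fin (r + 1) → ι → ℤ) := by
  obtain ⟨f, rfl⟩ := exists_inf_ker_eq hle (by rw [hW', h.finrank_eq])
  obtain ⟨w, hw, hcoeff⟩ := h.exists_complement
  refine ⟨w, .of_finrank_eq hW' (Fin.cases hw fun k => (h.mem k).1) fun x hx => ?_⟩
  obtain ⟨a, z, rfl⟩ := hcoeff x hx
  exact ⟨Fin.cons a z, by simp [Fin.sum_univ_succ]⟩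

end Height

/-! ### Residues modulo a pivot minor -/

section PivotResidue

open Matrix

variable {R : Type*} [CommRing R] {r : ℕ}

theorem minor_cons (w : ι → R) (b : Fin r → ι → R) (J : Fin (r + 1) → ι) :
    minor (Fin.cons w b : Fin (r + 1) → ι → R) J =
      ∑ j : Fin (r + 1), (-1) ^ (j : ℕ) * w (J j) * minor b (J ∘ j.succAbove) :=
  Matrix.det_succ_row_zero _

/-- The combination of `w` and the rows `b`, with coefficient `minor b I` at `w`, which vanishes
on the columns `I`. -/
def pivotResidue (b : Fin r → ι → R) (I : Fin r → ι) : (ι → R) →ₗ[R] ι → R :=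
  minor b I • LinearMap.id - Fintype.linearCombination R b ∘ₗ
    (minorMatrix b I).adjugate.vecMulLinear ∘ₗ LinearMap.funLeft R R I

variable (b : Fin r → ι → R) (I : Fin r → ι) (w : ι → R)

theorem pivotResidue_eq_add_sum :
    pivotResidue b I w =
      minor b I • w + ∑ k, (-((w ∘ I) ᵥ* (minorMatrix b I).adjugate) k) • b k := by
  simp only [neg_smul, sum_neg_distrib, ← sub_eq_add_neg]
  rfl

theorem exists_pivotResidue_eq :
    ∃ κ : Fin r → R, pivotResidue b I w = minor b I • w + ∑ k, κ k • b k :=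
  ⟨_, pivotResidue_eq_add_sum b I w⟩

theorem pivotResidue_apply_pivot (l : Fin r) : pivotResidue b I w (I l) = 0 := by
  have h := congrFun (vecMul_vecMul (w ∘ I) (minorMatrix b I).adjugate (minorMatrix b I)) l
  rw [adjugate_mul, vecMul_smul, vecMul_one] at h
  simp only [vecMul, dotProduct, minorMatrix_apply, Pi.smul_apply, smul_eq_mul,
    Function.comp_apply] at h
  simp [pivotResidue_eq_add_sum, minor, ← h, vecMul, dotProduct]

theorem pivotResidue_sum_smul (z : Fin r → R) : pivotResidue b I (∑ k, z k • b k) = 0 := by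
  have hz : (∑ k, z k • b k) ∘ I = z ᵥ* minorMatrix b I := by
    ext l
    simp [vecMul, dotProduct]
  rw [pivotResidue_eq_add_sum, hz, vecMul_vecMul, mul_adjugate, vecMul_smul, vecMul_one, smul_sum,
    ← sum_add_distrib]
  exact sum_eq_zero fun k _ => by simp [minor, mul_smul]

theorem pivotResidue_of_apply_pivot_eq_zero {w : ι → R} (hw : ∀ l, w (I l) = 0) :
    pivotResidue b I w = minor b I • w := by
  have : w ∘ I = 0 := funext hw
  simp [pivotResidue_eq_add_sum, this]

theorem pivotResidue_apply [IsDomain R] {b : Fin r → ι → R} {I : Fin r → ι} {w : ι → R}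
    (hI : minor b I ≠ 0) (j : ι) :
    pivotResidue b I w j =
      minor (Fin.cons w b : Fin (r + 1) → ι → R) (Fin.cons j I : Fin (r + 1) → ι) := by
  refine mul_left_cancel₀ hI ?_
  rw [← minor_cons_sum w b (minor b I) fun k => -((w ∘ I) ᵥ* (minorMatrix b I).adjugate) k,
    ← pivotResidue_eq_add_sum, minor_cons, Fin.sum_univ_succ]
  have hcomp : (Fin.cons j I : Fin (r + 1) → ι) ∘ Fin.succ = I := rfl
  simp [pivotResidue_apply_pivot, Fin.succAbove_zero, hcomp, mul_comm]

end PivotResidue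

section Tube

open Matrix

variable {r : ℕ} {W W' Θ : Submodule ℚ (ι → ℚ)} {b : Fin r → ι → ℤ} {I : Fin r → ι} {w : ι → ℤ}

theorem pivotResidue_eq_of_ediv_eq {w w' : ι → ℤ} {z : Fin r → ℤ}
    (hz : ∀ l, w (I l) - w' (I l) = ∑ k, z k * b k (I l))
    (hdiv : ∀ j, pivotResidue b I w j / |minor b I| = pivotResidue b I w' j / |minor b I|) :
    pivotResidue b I w = pivotResidue b I w' := by
  have hsub : pivotResidue b I w - pivotResidue b I w' =
      minor b I • (w - w' - ∑ k, z k • b k) := by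
    rw [← pivotResidue_of_apply_pivot_eq_zero _ _ fun l => by simp [hz], map_sub, map_sub,
      pivotResidue_sum_smul, sub_zero]
  ext j
  have hdvd : |minor b I| ∣ pivotResidue b I w j - pivotResidue b I w' j := by
    rw [abs_dvd]
    exact ⟨_, congrFun hsub j⟩
  rw [← Int.mul_ediv_add_emod (pivotResidue b I w j) |minor b I|, hdiv,
    Int.emod_eq_emod_iff_emod_sub_eq_zero.2 (Int.emod_eq_zero_of_dvd hdvd), Int.mul_ediv_add_emod]

theorem card_quotient_range_toLin' {A : Matrix (Fin r) (Fin r) ℤ} (hA : A.det ≠ 0) :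
    Nat.card ((Fin r → ℤ) ⧸ LinearMap.range A.toLin') = A.det.natAbs := by
  have hinj : Function.Injective A.toLin' := Matrix.mulVec_injective_of_det_ne_zero hA
  rw [← Submodule.natAbs_det_equiv _ (LinearEquiv.ofInjective A.toLin' hinj),
    ← LinearMap.det_toLin']
  rfl

theorem sup_span_singleton_eq_of_eq_smul_add {K V : Type*} [Field K] [AddCommGroup V] [Module K V]
    {U : Submodule K V} {x y v : V} {c : K} (hc : c ≠ 0) (hv : v ∈ U) (h : x = c • y + v) :
    U ⊔ Submodule.span K {x} = U ⊔ Submodule.span K {y} := by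
  have hy : y = c⁻¹ • x + -(c⁻¹ • v) := by rw [h, smul_add, inv_smul_smul₀ hc]; abel
  apply le_antisymm <;> refine sup_le le_sup_left ?_ <;>
    rw [Submodule.span_singleton_le_iff_mem]
  · rw [h]
    exact add_mem (Submodule.smul_mem _ _ (Submodule.mem_sup_right
      (Submodule.mem_span_singleton_self y))) (Submodule.mem_sup_left hv)
  · rw [hy]
    exact add_mem (Submodule.smul_mem _ _ (Submodule.mem_sup_right
      (Submodule.mem_span_singleton_self x)))
      (Submodule.mem_sup_left (neg_mem (U.smul_mem _ hv)))

theorem IsIntegralBasis.sup_span_pivotResidue [Finite ι] (hb : IsIntegralBasis W b)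
    (hw : IsIntegralBasis W' (Fin.cons w b : Fin (r + 1) → ι → ℤ)) (hI : minor b I ≠ 0) :
    W ⊔ Submodule.span ℚ {ratVec (pivotResidue b I w)} = W' := by
  rw [← hb.span_sup_span_singleton hw]
  obtain ⟨κ, hκ⟩ := exists_pivotResidue_eq b I w
  refine sup_span_singleton_eq_of_eq_smul_add (v := ∑ k, (κ k : ℚ) • ratVec (b k))
    (Int.cast_ne_zero.2 hI) (sum_mem fun k _ => W.smul_mem _ (hb.mem k)) ?_
  simp only [hκ, map_add, map_sum, ratVec_smul]

theorem IsIntegralBasis.eq_of_pivotResidue_ediv_eq [Finite ι] {W₁ W₂ : Submodule ℚ (ι → ℚ)}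
    {w₁ w₂ : ι → ℤ} (hb : IsIntegralBasis W b) (hI : minor b I ≠ 0)
    (hw₁ : IsIntegralBasis W₁ (Fin.cons w₁ b : Fin (r + 1) → ι → ℤ))
    (hw₂ : IsIntegralBasis W₂ (Fin.cons w₂ b : Fin (r + 1) → ι → ℤ))
    (hclass : w₁ ∘ I - w₂ ∘ I ∈ LinearMap.range (minorMatrix b I)ᵀ.toLin')
    (hdiv : ∀ j, pivotResidue b I w₁ j / |minor b I| = pivotResidue b I w₂ j / |minor b I|) :
    W₁ = W₂ := by
  obtain ⟨z, hz⟩ := hclass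
  have hres : pivotResidue b I w₁ = pivotResidue b I w₂ := by
    refine pivotResidue_eq_of_ediv_eq (z := z) (fun l => ?_) hdiv
    simpa [Matrix.mulVec, dotProduct, mul_comm] using (congrFun hz l).symm
  rw [← hb.sup_span_pivotResidue hw₁ hI, ← hb.sup_span_pivotResidue hw₂ hI, hres]

variable [Fintype ι]

theorem IsIntegralBasis.abs_pivotResidue_le
    (hw : IsIntegralBasis W' (Fin.cons w b : Fin (r + 1) → ι → ℤ)) (hI : minor b I ≠ 0) (j : ι) :
    |pivotResidue b I w j| ≤ subspaceHeight W' :=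
  pivotResidue_apply (w := w) hI j ▸ hw.abs_minor_le _

theorem card_le_of_subspaceHeight_le {ρ : ℕ} {S : Finset (Submodule ℚ (ι → ℚ))}
    (hS : ∀ W' ∈ S, W ≤ W' ∧ finrank ℚ W' = finrank ℚ W + 1 ∧
      subspaceHeight W' ≤ ρ * subspaceHeight W) :
    #S ≤ subspaceHeight W * (2 * ρ + 1) ^ Fintype.card ι := by
  classical
  obtain ⟨b, hb⟩ := exists_isIntegralBasis (W := W) rfl
  obtain ⟨I, hI⟩ := hb.exists_abs_minor_eq
  have hH : (0 : ℤ) < subspaceHeight W := by exact_mod_cast subspaceHeight_pos W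
  have hI0 : minor b I ≠ 0 := abs_pos.1 (hI ▸ hH)
  have hdet : (minorMatrix b I)ᵀ.det = minor b I := Matrix.det_transpose _
  let Q := (Fin (finrank ℚ W) → ℤ) ⧸ LinearMap.range (minorMatrix b I)ᵀ.toLin'
  have hQ : Nat.card Q = subspaceHeight W := by
    rw [card_quotient_range_toLin' (hdet ▸ hI0), hdet, ← Nat.cast_inj (R := ℤ), ← Int.abs_eq_natAbs,
      hI]
  have : Finite Q := Nat.finite_of_card_ne_zero (hQ ▸ (subspaceHeight_pos W).ne')
  have := Fintype.ofFinite Q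
  -- `W'` is determined by the class of `w ∘ I` modulo the pivot lattice, which has index `H(W)`,
  -- and by the integer parts of the entries of the pivot residue of `w` divided by `H(W)`.
  choose! w hw using fun W' h => hb.exists_cons (hS W' h).1 (hS W' h).2.1
  let f (W' : Submodule ℚ (ι → ℚ)) : Q × (ι → ℤ) :=
    (Submodule.Quotient.mk (w W' ∘ I), fun j => pivotResidue b I (w W') j / |minor b I|)
  have hmaps : ∀ W' ∈ S, f W' ∈ univ ×ˢ Fintype.piFinset fun _ : ι => Icc (-(ρ : ℤ)) ρ := by
    intro W' h
    refine mem_product.2 ⟨mem_univ _, Fintype.mem_piFinset.2 fun j => ?_⟩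
    have hle : |pivotResidue b I (w W') j| ≤ ρ * subspaceHeight W :=
      ((hw W' h).abs_pivotResidue_le hI0 j).trans (by exact_mod_cast (hS W' h).2.2)
    rw [abs_le, ← neg_mul] at hle
    simp only [f, mem_Icc, hI]
    exact ⟨(Int.le_ediv_iff_mul_le hH).2 hle.1, Int.ediv_le_of_le_mul hH hle.2⟩
  have hinj : Set.InjOn f S := by
    intro W₁ h₁ W₂ h₂ h
    obtain ⟨hclass, hdiv⟩ := Prod.mk.inj h
    exact hb.eq_of_pivotResidue_ediv_eq hI0 (hw W₁ h₁) (hw W₂ h₂)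
      ((Submodule.Quotient.eq _).1 hclass) (congrFun hdiv)
  have hcard := card_le_card_of_injOn f hmaps hinj
  rw [card_product, card_univ, ← Nat.card_eq_fintype_card, hQ, Fintype.card_piFinset] at hcard
  simp only [Int.card_Icc, prod_const, card_univ] at hcard
  rwa [show ((ρ : ℤ) + 1 - -ρ).toNat = 2 * ρ + 1 by omega] at hcard

end Tube

section Submodularity

section Finrank

variable {K V : Type*} [DivisionRing K] [AddCommGroup V] [Module K V] [FiniteDimensional K V]
  {q : ℕ} {Θ W W' : Submodule K V}

theorem finrank_inf_le (hW : finrank K W = q + 1) (hW' : finrank K W' = q + 1) (hne : W ≠ W') :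
    finrank K ↥(W ⊓ W') ≤ q := by
  by_contra! h
  have hW_le := Submodule.eq_of_le_of_finrank_le inf_le_left (hW.trans_le h)
  exact hne (Submodule.eq_of_le_of_finrank_eq (inf_eq_left.1 hW_le) (hW.trans hW'.symm))

theorem eq_inf_of_finrank_eq (hΘ : finrank K Θ = q) (hW : finrank K W = q + 1)
    (hW' : finrank K W' = q + 1) (hΘW : Θ ≤ W) (hΘW' : Θ ≤ W') (hne : W ≠ W') : Θ = W ⊓ W' :=
  Submodule.eq_of_le_of_finrank_le (le_inf hΘW hΘW') (hΘ ▸ finrank_inf_le hW hW' hne)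

theorem finrank_sup_eq (hΘ : finrank K Θ = q) (hW : finrank K W = q + 1)
    (hW' : finrank K W' = q + 1) (hΘW : Θ ≤ W) (hΘW' : Θ ≤ W') (hne : W ≠ W') :
    finrank K ↥(W ⊔ W') = q + 2 := by
  have h := Submodule.finrank_sup_add_finrank_inf_eq W W'
  rw [← eq_inf_of_finrank_eq hΘ hW hW' hΘW hΘW' hne] at h
  omega

end Finrank

variable {r : ℕ} {Θ W W' : Submodule ℚ (ι → ℚ)} {b : Fin r → ι → ℤ}

theorem abs_minor_cons_le {w : ι → ℤ} {A B : ℤ} (hw : ∀ j, |w j| ≤ A)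
    (hb : ∀ J, |minor b J| ≤ B) (J : Fin (r + 1) → ι) :
    |minor (Fin.cons w b : Fin (r + 1) → ι → ℤ) J| ≤ (r + 1) * (A * B) := by
  rw [minor_cons]
  have hterm : ∀ j ∈ (univ : Finset (Fin (r + 1))),
      |(-1) ^ (j : ℕ) * w (J j) * minor b (J ∘ j.succAbove)| ≤ A * B := by
    intro j _
    rw [abs_mul, abs_mul, abs_pow, abs_neg, abs_one, one_pow, one_mul]
    exact mul_le_mul (hw _) (hb _) (abs_nonneg _) ((abs_nonneg _).trans (hw (J j)))
  refine (abs_sum_le_sum_abs _ _).trans ((sum_le_card_nsmul _ _ _ hterm).trans ?_)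
  simp

theorem minor_cons_pivotResidue_cons (b : Fin r → ι → ℤ) (I : Fin r → ι) (w w' : ι → ℤ)
    (J : Fin (r + 2) → ι) :
    minor (Fin.cons (pivotResidue b I w') (Fin.cons (pivotResidue b I w) b : Fin (r + 1) → ι → ℤ) :
        Fin (r + 2) → ι → ℤ) J =
      minor b I ^ 2 * minor (Fin.cons w' (Fin.cons w b : Fin (r + 1) → ι → ℤ) :
        Fin (r + 2) → ι → ℤ) J := by
  obtain ⟨κ, hκ⟩ := exists_pivotResidue_eq b I w
  obtain ⟨κ', hκ'⟩ := exists_pivotResidue_eq b I w'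
  set Y : Fin (r + 1) → ι → ℤ := Fin.cons (pivotResidue b I w) b with hY
  have hu' : pivotResidue b I w' =
      minor b I • w' + ∑ k, (Fin.cons 0 κ' : Fin (r + 1) → ℤ) k • Y k := by
    simp [hκ', Fin.sum_univ_succ, hY]
  rw [hu', minor_cons_sum, minor_cons, minor_cons, mul_sum, mul_sum]
  refine sum_congr rfl fun j _ => ?_
  rw [hY, hκ, minor_cons_sum]
  ring

theorem linearIndependent_cons_cons [Finite ι] {w w' : ι → ℤ} (hb : IsIntegralBasis Θ b)
    (hw : IsIntegralBasis W (Fin.cons w b : Fin (r + 1) → ι → ℤ))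
    (hw' : IsIntegralBasis W' (Fin.cons w' b : Fin (r + 1) → ι → ℤ)) (hne : W ≠ W') :
    LinearIndependent ℚ fun k => ratVec
      ((Fin.cons w' (Fin.cons w b : Fin (r + 1) → ι → ℤ) : Fin (r + 2) → ι → ℤ) k) := by
  rw [ratVec_cons, linearIndependent_finCons, hw.span_eq]
  refine ⟨hw.linearIndependent, fun hmem => hne.symm ?_⟩
  refine Submodule.eq_of_le_of_finrank_eq ?_ (hw'.finrank_eq.trans hw.finrank_eq.symm)
  rw [← hb.span_sup_span_singleton hw', sup_le_iff, Submodule.span_singleton_le_iff_mem]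
  exact ⟨le_sup_left.trans (hb.span_sup_span_singleton hw).le, hmem⟩

theorem subspaceHeight_sup_mul_le [Fintype ι] (hΘ : finrank ℚ Θ = r) (hW : finrank ℚ W = r + 1)
    (hW' : finrank ℚ W' = r + 1) (hΘW : Θ ≤ W) (hΘW' : Θ ≤ W') (hne : W ≠ W') :
    subspaceHeight (W ⊔ W') * subspaceHeight Θ ≤
      (r + 2) * (r + 1) * (subspaceHeight W * subspaceHeight W') := by
  obtain ⟨b, hb⟩ := exists_isIntegralBasis hΘ
  obtain ⟨I, hI⟩ := hb.exists_abs_minor_eq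
  have hH : (0 : ℤ) < subspaceHeight Θ := by exact_mod_cast subspaceHeight_pos Θ
  have hI0 : minor b I ≠ 0 := abs_pos.1 (hI ▸ hH)
  obtain ⟨w, hw⟩ := hb.exists_cons hΘW hW
  obtain ⟨w', hw'⟩ := hb.exists_cons hΘW' hW'
  have hli := linearIndependent_cons_cons hb hw hw' hne
  set c : Fin (r + 2) → ι → ℤ := Fin.cons w' (Fin.cons w b : Fin (r + 1) → ι → ℤ) with hc
  have hmem : ∀ k, ratVec (c k) ∈ W ⊔ W' :=
    Fin.cases (Submodule.mem_sup_right (hw'.mem 0)) fun k => Submodule.mem_sup_left (hw.mem k)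
  have hfin := finrank_sup_eq hΘ hW hW' hΘW hΘW' hne
  obtain ⟨J, hJ⟩ := exists_abs_minor_eq_maxMinor (maxMinor_ne_zero_iff.2 hli)
  have hbound := abs_minor_cons_le (hw'.abs_pivotResidue_le hI0)
    (abs_minor_cons_le (hw.abs_pivotResidue_le hI0) hb.abs_minor_le) J
  rw [minor_cons_pivotResidue_cons, abs_mul, abs_pow, hI, ← hc, hJ] at hbound
  push_cast at hbound
  have hmul : (subspaceHeight Θ : ℤ) * maxMinor c ≤
      (r + 2) * (r + 1) * (subspaceHeight W * subspaceHeight W') :=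
    le_of_mul_le_mul_left (by linarith) hH
  calc subspaceHeight (W ⊔ W') * subspaceHeight Θ
      ≤ maxMinor c * subspaceHeight Θ := by gcongr; exact subspaceHeight_le hfin hli hmem
    _ ≤ _ := by rw [mul_comm]; exact_mod_cast hmul

end Submodularity

/-! ### Counting hyperplanes of a rational subspace -/

section Cramer

variable {κ : Type*} [Fintype κ] [DecidableEq κ] {R : Type*} [CommRing R] (A : Matrix κ κ R)

theorem cramer_mulVec (v : κ → R) : A.cramer (A.mulVec v) = A.det • v := by
  rw [Matrix.cramer_eq_adjugate_mulVec, Matrix.mulVec_mulVec, Matrix.adjugate_mul,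
    Matrix.smul_mulVec, Matrix.one_mulVec]

theorem cramer_injective [IsDomain R] {A : Matrix κ κ R} (hA : A.det ≠ 0) :
    Function.Injective A.cramer := by
  intro v w h
  have hvw := congrArg A.mulVec h
  rw [Matrix.mulVec_cramer, Matrix.mulVec_cramer] at hvw
  exact smul_right_injective _ hA hvw

end Cramer

section Box

variable {q : ℕ} {A : Matrix (Fin q) (Fin q) ℤ}

theorem cramer_ediv_injective (hA : A.det ≠ 0) :
    Function.Injective fun v : Fin q → ℤ =>
      ((Submodule.Quotient.mk v : (Fin q → ℤ) ⧸ LinearMap.range A.toLin'),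
        fun l => A.cramer v l / |A.det|) := by
  intro v w h
  obtain ⟨hclass, hdiv⟩ := Prod.mk.inj h
  obtain ⟨z, hz⟩ := (Submodule.Quotient.eq _).1 hclass
  refine cramer_injective hA (funext fun l => ?_)
  have hdvd : |A.det| ∣ A.cramer v l - A.cramer w l := by
    rw [abs_dvd]
    refine ⟨z l, ?_⟩
    rw [← Pi.sub_apply, ← map_sub, ← hz, Matrix.toLin'_apply, cramer_mulVec, Pi.smul_apply,
      smul_eq_mul]
  rw [← Int.mul_ediv_add_emod (A.cramer v l) |A.det|, congrFun hdiv l,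
    Int.emod_eq_emod_iff_emod_sub_eq_zero.2 (Int.emod_eq_zero_of_dvd hdvd), Int.mul_ediv_add_emod]

theorem cramer_ediv_surjective (hA : A.det ≠ 0) :
    Function.Surjective fun v : Fin q → ℤ =>
      ((Submodule.Quotient.mk v : (Fin q → ℤ) ⧸ LinearMap.range A.toLin'),
        fun l => A.cramer v l / |A.det|) := by
  rintro ⟨c, p⟩
  obtain ⟨v, rfl⟩ := Submodule.Quotient.mk_surjective _ c
  let y : Fin q → ℤ := fun l => A.det.sign * (p l - A.cramer v l / |A.det|)
  refine ⟨v + A.toLin' y, Prod.ext ?_ (funext fun l => ?_)⟩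
  · exact (Submodule.Quotient.eq _).2 ⟨y, by simp⟩
  · have hy : A.det * y l = |A.det| * (p l - A.cramer v l / |A.det|) := by
      rw [← mul_assoc, mul_comm A.det, Int.sign_mul_self_eq_abs]
    simp only [Matrix.toLin'_apply, map_add, cramer_mulVec, Pi.add_apply, Pi.smul_apply,
      smul_eq_mul, hy]
    rw [Int.add_mul_ediv_left _ _ (abs_ne_zero.2 hA)]
    ring

theorem exists_card_cramer_mem_Ico (hA : A.det ≠ 0) (u t : ℤ) :
    ∃ S : Finset (Fin q → ℤ),
      (∀ v, v ∈ S ↔ ∀ l, A.cramer v l ∈ Set.Ico (u * |A.det|) (t * |A.det|)) ∧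
        #S = A.det.natAbs * (t - u).toNat ^ q := by
  classical
  have hQ := card_quotient_range_toLin' hA
  have : Finite ((Fin q → ℤ) ⧸ LinearMap.range A.toLin') :=
    Nat.finite_of_card_ne_zero (hQ ▸ Int.natAbs_ne_zero.2 hA)
  have := Fintype.ofFinite ((Fin q → ℤ) ⧸ LinearMap.range A.toLin')
  let e := Equiv.ofBijective _ ⟨cramer_ediv_injective hA, cramer_ediv_surjective hA⟩
  refine ⟨(univ ×ˢ Fintype.piFinset fun _ => Ico u t).map e.symm.toEmbedding, fun v => ?_, ?_⟩
  · have hpos : 0 < |A.det| := abs_pos.2 hA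
    simp only [mem_map_equiv, Equiv.symm_symm, mem_product, mem_univ, true_and,
      Fintype.mem_piFinset, Set.mem_Ico, mem_Ico]
    exact forall_congr' fun l =>
      and_congr (Int.le_ediv_iff_mul_le hpos) (Int.ediv_lt_iff_lt_mul hpos)
  · rw [card_map, card_product, card_univ, ← Nat.card_eq_fintype_card, hQ, Fintype.card_piFinset]
    simp

end Box

section IntegralHyperplane

variable {q r : ℕ} {W Θ : Submodule ℚ (ι → ℚ)} {b : Fin r → ι → ℤ} {v : Fin r → ℤ}

/-- The hyperplane, in the span of the vectors `b`, of the combinations whose coefficients are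
orthogonal to `v`. -/
def integralHyperplane (b : Fin r → ι → ℤ) (v : Fin r → ℤ) : Submodule ℚ (ι → ℚ) :=
  (LinearMap.ker (Fintype.linearCombination ℚ (ratVec v))).map
    (Fintype.linearCombination ℚ fun k => ratVec (b k))

theorem integralHyperplane_smul (b : Fin r → ι → ℤ) (v : Fin r → ℤ) {j : ℤ} (hj : j ≠ 0) :
    integralHyperplane b (j • v) = integralHyperplane b v := by
  have h : Fintype.linearCombination ℚ (ratVec (j • v)) =
      (j : ℚ) • Fintype.linearCombination ℚ (ratVec v) := by
    ext
    simp
  rw [integralHyperplane, h, LinearMap.ker_smul _ _ (Int.cast_ne_zero.2 hj), integralHyperplane]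

theorem IsIntegralBasis.ratVec_mem_integralHyperplane (hb : IsIntegralBasis W b) (v : Fin r → ℤ)
    {z : Fin r → ℤ} :
    ratVec (∑ k, z k • b k) ∈ integralHyperplane b v ↔ ∑ k, z k * v k = 0 := by
  have hz : ratVec (∑ k, z k • b k) =
      Fintype.linearCombination ℚ (fun k => ratVec (b k)) (ratVec z) := by
    simp only [Fintype.linearCombination_apply, map_sum, ratVec_smul, ratVec_apply]
  rw [hz, integralHyperplane, ← SetLike.mem_coe, Submodule.map_coe,
    hb.linearIndependent.fintypeLinearCombination_injective.mem_set_image, SetLike.mem_coe,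
    LinearMap.mem_ker, Fintype.linearCombination_apply]
  simp only [ratVec_apply, smul_eq_mul]
  exact_mod_cast Iff.rfl

theorem IsIntegralBasis.integralHyperplane_le [Finite ι] (hb : IsIntegralBasis W b)
    (v : Fin r → ℤ) : integralHyperplane b v ≤ W := by
  rw [integralHyperplane, ← hb.span_eq, ← Fintype.range_linearCombination]
  exact LinearMap.map_le_range

theorem finrank_integralHyperplane {b : Fin (q + 1) → ι → ℤ} {v : Fin (q + 1) → ℤ}
    (hb : LinearIndependent ℚ fun k => ratVec (b k)) (hv : v ≠ 0) :
    finrank ℚ (integralHyperplane b v) = q := by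
  rw [integralHyperplane, ← (Submodule.equivMapOfInjective _
    hb.fintypeLinearCombination_injective _).finrank_eq]
  have hne : Fintype.linearCombination ℚ (ratVec v) ≠ 0 := by
    obtain ⟨k, hk⟩ := Function.ne_iff.1 hv
    intro h
    simpa using hk (by simpa using LinearMap.congr_fun h (Pi.single k 1))
  simpa using Module.Dual.finrank_ker_add_one_of_ne_zero hne

theorem submodule_le_of_ratVec_mem [Finite ι] {V V' : Submodule ℚ (ι → ℚ)}
    (h : ∀ y, ratVec y ∈ V → ratVec y ∈ V') : V ≤ V' := by
  intro x hx
  obtain ⟨m, y, hm, hy⟩ := exists_ratVec_eq_smul x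
  rw [← Submodule.smul_mem_iff _ (Int.cast_ne_zero.2 hm : (m : ℚ) ≠ 0), ← hy]
  exact h y (hy ▸ V.smul_mem _ hx)

theorem IsIntegralBasis.ext [Finite ι] {V : Submodule ℚ (ι → ℚ)} (hb : IsIntegralBasis W b)
    (hV : V ≤ W) (hΘ : Θ ≤ W)
    (h : ∀ z : Fin r → ℤ, ratVec (∑ k, z k • b k) ∈ V ↔ ratVec (∑ k, z k • b k) ∈ Θ) : V = Θ := by
  apply le_antisymm <;> refine submodule_le_of_ratVec_mem fun y hy => ?_
  · obtain ⟨z, rfl⟩ := hb.exists_coeff y (hV hy)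
    exact (h z).1 hy
  · obtain ⟨z, rfl⟩ := hb.exists_coeff y (hΘ hy)
    exact (h z).2 hy

section Normal

variable {b : Fin (q + 1) → ι → ℤ} {β : Fin q → ι → ℤ} {x₀ : ι → ℤ} {c : Fin (q + 1) → ℤ}
  {U : Fin (q + 1) → Fin q → ℤ}

theorem IsIntegralBasis.ratVec_sub_mem (hβ : IsIntegralBasis Θ β)
    (hbc : ∀ k, b k = c k • x₀ + ∑ i, U k i • β i) (k : Fin (q + 1)) :
    ratVec (b k - c k • x₀) ∈ Θ := by
  rw [hbc, add_sub_cancel_left, map_sum]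
  exact sum_mem fun i _ => ratVec_smul (U k i) (β i) ▸ Θ.smul_mem _ (hβ.mem i)

theorem IsIntegralBasis.ratVec_sum_mem_iff [Finite ι] (hβ : IsIntegralBasis Θ β)
    (hx₀ : IsIntegralBasis W (Fin.cons x₀ β : Fin (q + 1) → ι → ℤ))
    (hbc : ∀ k, b k = c k • x₀ + ∑ i, U k i • β i) (z : Fin (q + 1) → ℤ) :
    ratVec (∑ k, z k • b k) ∈ Θ ↔ ∑ k, z k * c k = 0 := by
  have hx₀Θ : ratVec x₀ ∉ Θ := by
    have h := hx₀.linearIndependent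
    rw [ratVec_cons, linearIndependent_finCons, hβ.span_eq] at h
    exact h.2
  have hz : ∑ k, z k • b k = (∑ k, z k * c k) • x₀ + ∑ k, z k • (b k - c k • x₀) := by
    simp only [smul_sub, sum_sub_distrib, smul_smul, sum_smul, add_sub_cancel]
  have hzΘ : ratVec (∑ k, z k • (b k - c k • x₀)) ∈ Θ := by
    rw [map_sum]
    exact sum_mem fun k _ => ratVec_smul (z k) (b k - c k • x₀) ▸
      Θ.smul_mem _ (hβ.ratVec_sub_mem hbc k)
  rw [hz, map_add, Submodule.add_mem_iff_left _ hzΘ, ratVec_smul]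
  refine ⟨fun h => ?_, fun h => by simp [h]⟩
  by_contra hne
  exact hx₀Θ ((Submodule.smul_mem_iff _ (Int.cast_ne_zero.2 hne)).1 h)

theorem IsIntegralBasis.eq_smul_normal (hb : IsIntegralBasis W b) (hβ : IsIntegralBasis Θ β)
    (hx₀ : ratVec x₀ ∈ W) (hbc : ∀ k, b k = c k • x₀ + ∑ i, U k i • β i) {v : Fin (q + 1) → ℤ}
    (hv : integralHyperplane b v = Θ) : ∃ j : ℤ, v = j • c := by
  obtain ⟨z₀, hz₀⟩ := hb.exists_coeff x₀ hx₀
  refine ⟨∑ i, z₀ i * v i, funext fun k => ?_⟩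
  have hcoeff : b k - c k • x₀ =
      ∑ i, ((Pi.single k 1 : Fin (q + 1) → ℤ) i - c k * z₀ i) • b i := by
    simp only [sub_smul, sum_sub_distrib, mul_smul, ← smul_sum, ← hz₀]
    simp [Pi.single_apply]
  have h := hβ.ratVec_sub_mem hbc k
  rw [← hv, hcoeff, hb.ratVec_mem_integralHyperplane] at h
  simp only [sub_mul, sum_sub_distrib, mul_assoc, ← mul_sum, Pi.single_apply, ite_mul, one_mul,
    zero_mul, sum_ite_eq', mem_univ, if_true] at h
  rw [Pi.smul_apply, smul_eq_mul, mul_comm]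
  exact sub_eq_zero.1 h

theorem minorMatrix_mulVec_minors {ι R : Type*} [CommRing R] {b : Fin (q + 1) → ι → R}
    {β : Fin q → ι → R} {x₀ : ι → R} {c : Fin (q + 1) → R} {U : Fin (q + 1) → Fin q → R}
    (hbc : ∀ k, b k = c k • x₀ + ∑ i, U k i • β i) (I : Fin (q + 1) → ι) :
    (minorMatrix b I).mulVec (fun l => (-1) ^ (l : ℕ) * minor β (I ∘ l.succAbove)) =
      minor (Fin.cons x₀ β : Fin (q + 1) → ι → R) I • c := by
  ext k
  have h := minor_cons_sum x₀ β (c k) (U k) I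
  rw [← hbc, minor_cons] at h
  rw [Pi.smul_apply, smul_eq_mul, mul_comm, ← h]
  simp only [Matrix.mulVec, dotProduct, minorMatrix_apply]
  exact sum_congr rfl fun i _ => by ring

/-- The normal `c` is the vector of coordinates along `x₀` of the vectors `b`, where `x₀` completes
the integral basis `β` of `Θ` to one of `W`. -/
theorem IsIntegralBasis.exists_normal [Finite ι] (hb : IsIntegralBasis W b)
    (hβ : IsIntegralBasis Θ β) (hΘW : Θ ≤ W) :
    ∃ c : Fin (q + 1) → ℤ, integralHyperplane b c = Θ ∧
      (∀ v, integralHyperplane b v = Θ → ∃ j : ℤ, v = j • c) ∧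
      ∀ I l, minor b I ≠ 0 → |(minorMatrix b I).cramer c l| = |minor β (I ∘ l.succAbove)| := by
  obtain ⟨x₀, hx₀⟩ := hβ.exists_cons hΘW hb.finrank_eq
  choose U hU using fun k => hx₀.exists_coeff (b k) (hb.mem k)
  have hbc (k) : b k = U k 0 • x₀ + ∑ i, U k (Fin.succ i) • β i := by
    simpa [Fin.sum_univ_succ] using hU k
  refine ⟨fun k => U k 0, ?_, fun v hv => hb.eq_smul_normal hβ (hx₀.mem 0) hbc hv,
    fun I l hI => ?_⟩
  · refine hb.ext (hb.integralHyperplane_le _) hΘW fun z => ?_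
    rw [hβ.ratVec_sum_mem_iff hx₀ hbc, hb.ratVec_mem_integralHyperplane]
  · have h := congrArg abs (congrFun
      (congrArg (minorMatrix b I).cramer (minorMatrix_mulVec_minors hbc I)) l)
    rw [cramer_mulVec, map_smul, Pi.smul_apply, Pi.smul_apply, smul_eq_mul, smul_eq_mul, abs_mul,
      abs_mul (minor _ I), hb.abs_minor_eq hx₀, ← minor] at h
    rw [← mul_left_cancel₀ (abs_ne_zero.2 hI) h, abs_mul, abs_pow]
    simp

theorem IsIntegralBasis.exists_nonneg_normal [Finite ι] (hb : IsIntegralBasis W b)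
    {I : Fin (q + 1) → ι} (hI : minor b I ≠ 0) {v₀ : Fin (q + 1) → ℤ} (hv₀ : v₀ ≠ 0)
    (hnonneg : ∀ l, 0 ≤ (minorMatrix b I).cramer v₀ l)
    (hβ : IsIntegralBasis (integralHyperplane b v₀) β) :
    ∃ v : Fin (q + 1) → ℤ, v ≠ 0 ∧
      (∀ w, w ≠ 0 ∧ integralHyperplane b w = integralHyperplane b v₀ ↔
        ∃ j : ℤ, j ≠ 0 ∧ w = j • v) ∧
      ∀ l, (minorMatrix b I).cramer v l = |minor β (I ∘ l.succAbove)| := by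
  obtain ⟨c, hc, hcmul, hcβ⟩ := hb.exists_normal hβ (hb.integralHyperplane_le v₀)
  obtain ⟨j₀, rfl⟩ := hcmul v₀ rfl
  obtain ⟨hj₀, hc0⟩ := smul_ne_zero_iff.1 hv₀
  have hsq : j₀.sign * j₀.sign = 1 := by
    rw [← Int.sign_mul, Int.sign_eq_one_of_pos (mul_self_pos.2 hj₀)]
  have hsign : j₀.sign ≠ 0 := left_ne_zero_of_mul_eq_one hsq
  refine ⟨j₀.sign • c, smul_ne_zero hsign hc0, fun w => ⟨?_, ?_⟩, fun l => ?_⟩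
  · rintro ⟨hw, hwΘ⟩
    obtain ⟨j, rfl⟩ := hcmul w hwΘ
    exact ⟨j * j₀.sign, mul_ne_zero (smul_ne_zero_iff.1 hw).1 hsign,
      by rw [smul_smul, mul_assoc, hsq, mul_one]⟩
  · rintro ⟨j, hj, rfl⟩
    refine ⟨smul_ne_zero hj (smul_ne_zero hsign hc0), ?_⟩
    rw [integralHyperplane_smul b _ hj, integralHyperplane_smul b _ hsign, hc]
  · have h := hnonneg l
    rw [map_smul, Pi.smul_apply, smul_eq_mul] at h ⊢
    rw [← hcβ I l hI]
    rcases lt_or_gt_of_ne hj₀ with hj | hj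
    · rw [Int.sign_eq_neg_one_of_neg hj, abs_of_nonpos (nonpos_of_mul_nonneg_right h hj),
        neg_one_mul]
    · rw [Int.sign_eq_one_of_pos hj, abs_of_nonneg (nonneg_of_mul_nonneg_right h hj), one_mul]

end Normal

end IntegralHyperplane

section Columns

variable {q r : ℕ}

theorem abs_minor_comp_le {β : Fin q → ι → ℤ} {I : Fin (q + 1) → ι} {g : ℤ}
    (hg : ∀ l : Fin (q + 1), |minor β (I ∘ l.succAbove)| ≤ g) (L : Fin q → Fin (q + 1)) :
    |minor β (I ∘ L)| ≤ g := by
  by_cases hL : Function.Injective L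
  · obtain ⟨l, hl⟩ : ∃ l, l ∉ Set.range L := by
      by_contra! h
      simpa using Fintype.card_le_of_surjective L h
    choose σ hσ using fun i => Fin.exists_succAbove_eq fun h : L i = l => hl ⟨i, h⟩
    have hσinj : Function.Injective σ := fun i j h => hL (by rw [← hσ i, ← hσ j, h])
    let e := Equiv.ofBijective σ (Finite.injective_iff_bijective.1 hσinj)
    have hperm : minor β (I ∘ L) = Equiv.Perm.sign e * minor β (I ∘ l.succAbove) := by
      rw [minor, minor, ← Int.cast_id (n := ((Equiv.Perm.sign e : ℤˣ) : ℤ)),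
        ← Matrix.det_permute']
      congr 1
      ext k i
      simp [e, hσ]
    have hsign : |((Equiv.Perm.sign e : ℤˣ) : ℤ)| = 1 := by
      rw [Int.abs_eq_natAbs, Int.units_natAbs, Nat.cast_one]
    rw [hperm, abs_mul, hsign, one_mul]
    exact hg l
  · obtain ⟨i, j, hij, hne⟩ := Function.not_injective_iff.1 hL
    have hzero : minor β (I ∘ L) = 0 :=
      Matrix.det_zero_of_column_eq hne fun k => by simp [hij]
    rw [hzero, abs_zero]
    exact (abs_nonneg _).trans (hg 0)

theorem minor_eq_sum_prod_mul {R κ : Type*} [CommRing R] [Fintype κ] {β : Fin q → ι → R}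
    {I : κ → ι} {C : ι → κ → R} (hβ : ∀ k j, β k j = ∑ l, C j l * β k (I l)) (J : Fin q → ι) :
    minor β J = ∑ L : Fin q → κ, (∏ i, C (J i) (L i)) * minor β (I ∘ L) := by
  classical
  have hT : (minorMatrix β J).transpose = fun i => ∑ l, C (J i) l • fun k => β k (I l) := by
    ext i k
    simp [hβ k (J i)]
  have hsum := (Matrix.detRowAlternating (R := R) (n := Fin q)).toMultilinearMap.map_sum
    fun i l => C (J i) l • fun k => β k (I l)
  rw [minor, ← Matrix.det_transpose, hT]
  refine hsum.trans (sum_congr rfl fun L _ => ?_)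
  rw [MultilinearMap.map_smul_univ, minor, ← Matrix.det_transpose, smul_eq_mul]
  rfl

theorem sum_apply_mul_minor_update {R : Type*} [CommRing R] (b : Fin r → ι → R) (I : Fin r → ι)
    (j : ι) (k : Fin r) :
    ∑ l, minor b (Function.update I l j) * b k (I l) = minor b I * b k j := by
  have h := congrFun (Matrix.mulVec_cramer (minorMatrix b I) fun k => b k j) k
  have hupd (l) : (minorMatrix b I).updateCol l (fun k => b k j) =
      minorMatrix b (Function.update I l j) := by
    ext i i'
    obtain rfl | hne := eq_or_ne i' l
    · simp
    · simp [hne]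
  simpa only [Matrix.mulVec, dotProduct, Matrix.cramer_apply, hupd, minorMatrix_apply,
    mul_comm, Pi.smul_apply, smul_eq_mul, minor] using h

variable {W Θ : Submodule ℚ (ι → ℚ)} [Fintype ι]

/-- The coefficients are ratios of minors of `b`, at most `1` in absolute value because `minor b I`
is maximal. -/
theorem IsIntegralBasis.exists_column_coeff {b : Fin r → ι → ℤ} (hb : IsIntegralBasis W b)
    {I : Fin r → ι} (hI : |minor b I| = subspaceHeight W) :
    ∃ C : ι → Fin r → ℚ, (∀ j l, |C j l| ≤ 1) ∧
      ∀ y, ratVec y ∈ W → ∀ j, ratVec y j = ∑ l, C j l * ratVec y (I l) := by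
  have hI0 : minor b I ≠ 0 :=
    abs_pos.1 (hI ▸ Int.natCast_pos.2 (subspaceHeight_pos W))
  have hIQ : ((minor b I : ℤ) : ℚ) ≠ 0 := Int.cast_ne_zero.2 hI0
  refine ⟨fun j l => ((minor b (Function.update I l j) : ℤ) : ℚ) / (minor b I : ℤ),
    fun j l => ?_, fun y hy j => ?_⟩
  · rw [abs_div, div_le_one (abs_pos.2 hIQ), ← Int.cast_abs, ← Int.cast_abs, hI]
    exact_mod_cast hb.abs_minor_le _
  · obtain ⟨z, rfl⟩ := hb.exists_coeff y hy
    rw [← mul_right_inj' hIQ]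
    simp only [mul_sum, ratVec_apply, Finset.sum_apply, Pi.smul_apply, smul_eq_mul,
      ← mul_assoc, mul_div_cancel₀ _ hIQ]
    norm_cast
    simp only [mul_sum]
    rw [sum_comm]
    refine sum_congr rfl fun k _ => ?_
    rw [mul_left_comm, ← sum_apply_mul_minor_update, mul_sum]
    exact sum_congr rfl fun l _ => by ring

theorem IsIntegralBasis.subspaceHeight_le_mul {b : Fin (q + 1) → ι → ℤ} {β : Fin q → ι → ℤ}
    (hb : IsIntegralBasis W b) (hβ : IsIntegralBasis Θ β) (hΘW : Θ ≤ W) {I : Fin (q + 1) → ι}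
    (hI : |minor b I| = subspaceHeight W) {g : ℕ}
    (hg : ∀ l : Fin (q + 1), |minor β (I ∘ l.succAbove)| ≤ g) :
    subspaceHeight Θ ≤ (q + 1) ^ q * g := by
  obtain ⟨C, hC, hCβ⟩ := hb.exists_column_coeff hI
  rw [← hβ.maxMinor_eq]
  refine maxMinor_le fun J => ?_
  have hterm : ∀ L ∈ (univ : Finset (Fin q → Fin (q + 1))),
      |(∏ i, C (J i) (L i)) * minor (fun k => ratVec (β k)) (I ∘ L)| ≤ g := by
    intro L _
    rw [abs_mul, abs_prod, minor_ratVec, ← one_mul (g : ℚ)]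
    refine mul_le_mul (prod_le_one (fun _ _ => abs_nonneg _) fun _ _ => hC _ _) ?_ (abs_nonneg _)
      zero_le_one
    exact_mod_cast abs_minor_comp_le hg L
  have h : |((minor β J : ℤ) : ℚ)| ≤ ((q + 1) ^ q * g : ℕ) := by
    rw [← minor_ratVec, minor_eq_sum_prod_mul (β := fun k => ratVec (β k))
      fun k j => hCβ (β k) (hΘW (hβ.mem k)) j]
    refine (abs_sum_le_sum_abs _ _).trans ((sum_le_card_nsmul _ _ _ hterm).trans ?_)
    simp
  exact_mod_cast h

end Columns

section HyperplaneCount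

variable [Fintype ι] {q : ℕ} {W Θ : Submodule ℚ (ι → ℚ)} {b : Fin (q + 1) → ι → ℤ}
  {I : Fin (q + 1) → ι}

theorem minor_ne_zero_of_abs_eq (hI : |minor b I| = subspaceHeight W) : minor b I ≠ 0 :=
  abs_pos.1 (hI ▸ Int.natCast_pos.2 (subspaceHeight_pos W))

theorem card_hyperplanes_le (hW : finrank ℚ W = q + 1) {Z : ℕ}
    {S : Finset (Submodule ℚ (ι → ℚ))}
    (hS : ∀ Θ ∈ S, Θ ≤ W ∧ finrank ℚ Θ = q ∧ subspaceHeight Θ ≤ Z) :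
    #S ≤ subspaceHeight W * (2 * (Z / subspaceHeight W + 1)) ^ (q + 1) := by
  classical
  obtain ⟨b, hb⟩ := exists_isIntegralBasis hW
  obtain ⟨I, hI⟩ := hb.exists_abs_minor_eq
  have hI0 := minor_ne_zero_of_abs_eq hI
  choose! β hβ using fun Θ h => exists_isIntegralBasis (hS Θ h).2.1
  choose! c hc _ hcβ using fun Θ h => hb.exists_normal (hβ Θ h) (hS Θ h).1
  set t : ℤ := ((Z / subspaceHeight W + 1 : ℕ) : ℤ) with ht
  have hZ : (Z : ℤ) < t * |minor b I| := by
    rw [hI, ht]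
    exact_mod_cast Nat.lt_mul_of_div_lt (Nat.lt_succ_self (Z / subspaceHeight W))
      (subspaceHeight_pos W)
  obtain ⟨V, hV, hcard⟩ := exists_card_cramer_mem_Ico hI0 (-t) t
  have hmaps : ∀ Θ ∈ S, c Θ ∈ V := by
    refine fun Θ h => (hV _).2 fun l => ?_
    have hle : |(minorMatrix b I).cramer (c Θ) l| ≤ Z := by
      rw [hcβ Θ h I l hI0]
      exact ((hβ Θ h).abs_minor_le _).trans (by exact_mod_cast (hS Θ h).2.2)
    rw [← minor, neg_mul]
    exact ⟨by linarith [(abs_le.1 hle).1], (abs_le.1 hle).2.trans_lt hZ⟩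
  have hinj : Set.InjOn c S := fun Θ h Θ' h' heq => by rw [← hc Θ h, ← hc Θ' h', heq]
  refine (card_le_card_of_injOn c hmaps hinj).trans (hcard.trans ?_).le
  rw [← minor, ← Nat.cast_inj (R := ℤ), Nat.cast_mul, ← Int.abs_eq_natAbs, hI,
    show (t - -t).toNat = 2 * (Z / subspaceHeight W + 1) by omega, Nat.cast_mul]

end HyperplaneCount

section Ray

theorem card_multiples_eq {M κ : Type*} [AddCommGroup M] (φ : M →ₗ[ℤ] κ → ℤ)
    {v : M} {l₀ : κ} {g N : ℕ} (hg : 0 < g) (hgl₀ : φ v l₀ = g)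
    (hv : ∀ l, φ v l ∈ Set.Icc 0 (g : ℤ)) {S : Finset M}
    (hS : ∀ w, w ∈ S ↔ (∃ j : ℤ, j ≠ 0 ∧ w = j • v) ∧ ∀ l, φ w l ∈ Set.Ico 0 (N : ℤ)) :
    #S = (N - 1) / g := by
  classical
  have hinj : Function.Injective fun j : ℕ => (j : ℤ) • v := by
    intro i j hij
    have h := congrFun (congrArg φ hij) l₀
    simp only [map_smul, Pi.smul_apply, smul_eq_mul, hgl₀] at h
    exact_mod_cast mul_right_cancel₀ (by exact_mod_cast hg.ne') h
  have hSimage : S = (Icc 1 ((N - 1) / g)).image fun j : ℕ => (j : ℤ) • v := by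
    ext w
    rw [hS, mem_image]
    constructor
    · rintro ⟨⟨j, hj, rfl⟩, hbox⟩
      obtain ⟨hpos, hlt⟩ := hbox l₀
      rw [map_smul, Pi.smul_apply, smul_eq_mul, hgl₀] at hpos hlt
      obtain ⟨i, rfl⟩ := Int.eq_ofNat_of_zero_le
        (nonneg_of_mul_nonneg_left hpos (by exact_mod_cast hg))
      refine ⟨i, mem_Icc.2 ⟨by omega, (Nat.le_div_iff_mul_le hg).2 ?_⟩, rfl⟩
      have : i * g < N := by exact_mod_cast hlt
      omega
    · rintro ⟨i, hi, rfl⟩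
      rw [mem_Icc, Nat.le_div_iff_mul_le hg] at hi
      refine ⟨⟨i, by omega, rfl⟩, fun l => ?_⟩
      have hlt : (i : ℤ) * g < N := by
        have : i * g < N := by have := Nat.mul_pos hi.1 hg; omega
        exact_mod_cast this
      rw [map_smul, Pi.smul_apply, smul_eq_mul]
      exact ⟨mul_nonneg (by positivity) (hv l).1,
        (mul_le_mul_of_nonneg_left (hv l).2 (by positivity)).trans_lt hlt⟩
  rw [hSimage, card_image_of_injective _ hinj, Nat.card_Icc, Nat.add_sub_cancel]

theorem three_mul_sub_one_div_le {M g : ℕ} (hg : 0 < g) :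
    (3 * M - 1) / g ≤ 2 * (if M ≤ g then 1 else 0) + 5 * ((M - 1) / g) := by
  have hM := Nat.lt_mul_of_div_lt (Nat.lt_succ_self ((M - 1) / g)) hg
  have h : (3 * M - 1) / g < 3 * ((M - 1) / g) + 3 := by
    rw [Nat.div_lt_iff_lt_mul hg]
    have : (3 * ((M - 1) / g) + 3) * g = 3 * (((M - 1) / g).succ * g) := by
      rw [Nat.succ_eq_add_one]; ring
    omega
  split_ifs with hMg
  · omega
  · have : 1 ≤ (M - 1) / g := (Nat.le_div_iff_mul_le hg).2 (by omega)
    omega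

variable [Fintype ι] {q : ℕ} {W Θ : Submodule ℚ (ι → ℚ)} {b : Fin (q + 1) → ι → ℤ}
  {I : Fin (q + 1) → ι}

theorem IsIntegralBasis.exists_ray_generator (hb : IsIntegralBasis W b)
    (hI : |minor b I| = subspaceHeight W) {v₀ : Fin (q + 1) → ℤ} (hv₀ : v₀ ≠ 0)
    (hnonneg : ∀ l, 0 ≤ (minorMatrix b I).cramer v₀ l) :
    ∃ (v : Fin (q + 1) → ℤ) (l₀ : Fin (q + 1)) (g : ℕ), 0 < g ∧
      (minorMatrix b I).cramer v l₀ = g ∧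
      (∀ l, (minorMatrix b I).cramer v l ∈ Set.Icc 0 (g : ℤ)) ∧
      (∀ w, w ≠ 0 ∧ integralHyperplane b w = integralHyperplane b v₀ ↔
        ∃ j : ℤ, j ≠ 0 ∧ w = j • v) ∧
      g ≤ subspaceHeight (integralHyperplane b v₀) ∧
      subspaceHeight (integralHyperplane b v₀) ≤ (q + 1) ^ q * g := by
  have hI0 := minor_ne_zero_of_abs_eq hI
  obtain ⟨β, hβ⟩ := exists_isIntegralBasis (finrank_integralHyperplane hb.linearIndependent hv₀)
  obtain ⟨v, hv0, hray, hvβ⟩ := hb.exists_nonneg_normal hI0 hv₀ hnonneg hβ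
  obtain ⟨l₀, -, hl₀⟩ := exists_max_image univ (fun l => |minor β (I ∘ Fin.succAbove l)|)
    ⟨(0 : Fin (q + 1)), mem_univ _⟩
  refine ⟨v, l₀, (minor β (I ∘ l₀.succAbove)).natAbs, ?_, ?_, fun l => ?_, hray, ?_, ?_⟩
  · rw [Nat.pos_iff_ne_zero, Ne, Int.natAbs_eq_zero]
    refine fun h => hv0 (cramer_injective hI0 (funext fun l => ?_))
    have := hl₀ l (mem_univ _)
    rw [h, abs_zero] at this
    rw [hvβ, le_antisymm this (abs_nonneg _), map_zero, Pi.zero_apply]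
  · rw [hvβ, Int.abs_eq_natAbs]
  · rw [hvβ, ← Int.abs_eq_natAbs]
    exact ⟨abs_nonneg _, hl₀ l (mem_univ _)⟩
  · have := hβ.abs_minor_le (I ∘ l₀.succAbove)
    rw [Int.abs_eq_natAbs] at this
    exact_mod_cast this
  · exact hb.subspaceHeight_le_mul hβ (hb.integralHyperplane_le v₀) hI fun l => by
      rw [← Int.abs_eq_natAbs]; exact hl₀ l (mem_univ _)

theorem IsIntegralBasis.card_ray_le (hb : IsIntegralBasis W b)
    (hI : |minor b I| = subspaceHeight W) {v₀ : Fin (q + 1) → ℤ} (hv₀ : v₀ ≠ 0)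
    (hnonneg : ∀ l, 0 ≤ (minorMatrix b I).cramer v₀ l) {M : ℕ} {S₁ S₃ : Finset (Fin (q + 1) → ℤ)}
    (hS₁ : ∀ w, w ∈ S₁ ↔ (w ≠ 0 ∧ integralHyperplane b w = integralHyperplane b v₀) ∧
      ∀ l, (minorMatrix b I).cramer w l ∈ Set.Ico 0 (M : ℤ))
    (hS₃ : ∀ w, w ∈ S₃ ↔ (w ≠ 0 ∧ integralHyperplane b w = integralHyperplane b v₀) ∧
      ∀ l, (minorMatrix b I).cramer w l ∈ Set.Ico 0 ((3 * M : ℕ) : ℤ)) :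
    #S₃ ≤ 2 * (if M ≤ subspaceHeight (integralHyperplane b v₀) then 1 else 0) + 5 * #S₁ := by
  obtain ⟨v, l₀, g, hg, hgl₀, hv, hray, hle, -⟩ := hb.exists_ray_generator hI hv₀ hnonneg
  simp only [hray] at hS₁ hS₃
  rw [card_multiples_eq _ hg hgl₀ hv hS₁, card_multiples_eq _ hg hgl₀ hv hS₃]
  refine (three_mul_sub_one_div_le hg).trans ?_
  gcongr
  split_ifs <;> omega

theorem IsIntegralBasis.subspaceHeight_integralHyperplane_le (hb : IsIntegralBasis W b)
    (hI : |minor b I| = subspaceHeight W) {v₀ : Fin (q + 1) → ℤ} (hv₀ : v₀ ≠ 0) {N : ℕ}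
    (hbox : ∀ l, (minorMatrix b I).cramer v₀ l ∈ Set.Ico 0 (N : ℤ)) :
    subspaceHeight (integralHyperplane b v₀) ≤ (q + 1) ^ q * N := by
  obtain ⟨v, l₀, g, hg, hgl₀, -, hray, -, hle⟩ :=
    hb.exists_ray_generator hI hv₀ fun l => (hbox l).1
  refine hle.trans (Nat.mul_le_mul_left _ ?_)
  obtain ⟨j, hj, hvj⟩ := (hray v₀).1 ⟨hv₀, rfl⟩
  obtain ⟨hnonneg, hlt⟩ := hbox l₀
  rw [hvj, map_smul, Pi.smul_apply, smul_eq_mul, hgl₀] at hnonneg hlt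
  have hgZ : (0 : ℤ) < g := by exact_mod_cast hg
  have hj1 : 1 ≤ j := by
    have := nonneg_of_mul_nonneg_left hnonneg hgZ
    omega
  have : (g : ℤ) ≤ N := (le_mul_of_one_le_left hgZ.le hj1).trans hlt.le
  exact_mod_cast this

theorem exists_card_ne_zero_cramer_mem_Ico (hI : |minor b I| = subspaceHeight W) {t : ℕ}
    (ht : 1 ≤ t) :
    ∃ V : Finset (Fin (q + 1) → ℤ),
      (∀ w, w ∈ V ↔ w ≠ 0 ∧
        ∀ l, (minorMatrix b I).cramer w l ∈ Set.Ico 0 ((t * subspaceHeight W : ℕ) : ℤ)) ∧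
      #V = subspaceHeight W * t ^ (q + 1) - 1 := by
  obtain ⟨V, hV, hcard⟩ := exists_card_cramer_mem_Ico (minor_ne_zero_of_abs_eq hI) 0 t
  rw [← minor, ← Nat.cast_inj (R := ℤ), Nat.cast_mul, ← Int.abs_eq_natAbs, hI] at hcard
  have hcard : #V = subspaceHeight W * t ^ (q + 1) := by
    simpa [← Nat.cast_inj (R := ℤ)] using hcard
  have hV (w) : w ∈ V ↔
      ∀ l, (minorMatrix b I).cramer w l ∈ Set.Ico 0 ((t * subspaceHeight W : ℕ) : ℤ) := by
    rw [hV, ← minor, hI, zero_mul, Nat.cast_mul]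
  have h0 : 0 ∈ V := by
    have : 0 < ((t * subspaceHeight W : ℕ) : ℤ) := by
      exact_mod_cast Nat.mul_pos ht (subspaceHeight_pos W)
    rw [hV]
    simpa using this
  exact ⟨V.erase 0, fun w => by rw [mem_erase, hV], by rw [card_erase_of_mem h0, hcard]⟩

theorem IsIntegralBasis.card_box_le [DecidableEq (Submodule ℚ (ι → ℚ))] (hb : IsIntegralBasis W b)
    (hI : |minor b I| = subspaceHeight W) {M : ℕ} {V₁ V₃ : Finset (Fin (q + 1) → ℤ)}
    (hV₁ : ∀ w, w ∈ V₁ ↔ w ≠ 0 ∧ ∀ l, (minorMatrix b I).cramer w l ∈ Set.Ico 0 (M : ℤ))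
    (hV₃ : ∀ w, w ∈ V₃ ↔
      w ≠ 0 ∧ ∀ l, (minorMatrix b I).cramer w l ∈ Set.Ico 0 ((3 * M : ℕ) : ℤ)) :
    #V₃ ≤ 2 * #{Θ ∈ V₃.image (integralHyperplane b) | M ≤ subspaceHeight Θ} + 5 * #V₁ := by
  calc #V₃ = ∑ Θ ∈ V₃.image (integralHyperplane b), #{w ∈ V₃ | integralHyperplane b w = Θ} :=
        card_eq_sum_card_fiberwise fun v hv => mem_image_of_mem _ hv
    _ ≤ ∑ Θ ∈ V₃.image (integralHyperplane b), (2 * (if M ≤ subspaceHeight Θ then 1 else 0) +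
          5 * #{w ∈ V₁ | integralHyperplane b w = Θ}) := by
        refine sum_le_sum <| forall_mem_image.2 fun v₀ hv₀ => ?_
        obtain ⟨hv₀, hbox⟩ := (hV₃ _).1 hv₀
        refine hb.card_ray_le hI hv₀ (fun l => (hbox l).1) (fun w => ?_) fun w => ?_
        · rw [mem_filter, hV₁, and_right_comm]
        · rw [mem_filter, hV₃, and_right_comm]
    _ ≤ 2 * #{Θ ∈ V₃.image (integralHyperplane b) | M ≤ subspaceHeight Θ} + 5 * #V₁ := by
        rw [sum_add_distrib, ← mul_sum, ← mul_sum, card_filter]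
        simp only [card_eq_sum_ones]
        gcongr
        exact sum_fiberwise_le_sum_of_sum_fiber_nonneg fun _ _ => zero_le

/-- On a ray whose generator has largest coordinate `g`, the boxes of side `3 * K * H(W)` and
`K * H(W)` contain `(3 * K * H(W) - 1) / g` and `(K * H(W) - 1) / g` nonzero points. As the first
box has `3 ^ (q + 1) ≥ 9` times the volume of the second, many rays have `g ≥ K * H(W)`. -/
theorem exists_hyperplanes_height_ge (hW : finrank ℚ W = q + 1) (hq : 1 ≤ q) {K : ℕ}
    (hK : 1 ≤ K) :
    ∃ T : Finset (Submodule ℚ (ι → ℚ)), subspaceHeight W ≤ #T ∧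
      ∀ Θ ∈ T, Θ ≤ W ∧ finrank ℚ Θ = q ∧ K * subspaceHeight W ≤ subspaceHeight Θ ∧
        subspaceHeight Θ ≤ (q + 1) ^ q * (3 * (K * subspaceHeight W)) := by
  classical
  obtain ⟨b, hb⟩ := exists_isIntegralBasis hW
  obtain ⟨I, hI⟩ := hb.exists_abs_minor_eq
  have hH : 0 < subspaceHeight W := subspaceHeight_pos W
  obtain ⟨V₁, hV₁, hcard₁⟩ := exists_card_ne_zero_cramer_mem_Ico hI hK
  obtain ⟨V₃, hV₃, hcard₃⟩ := exists_card_ne_zero_cramer_mem_Ico hI (t := 3 * K) (by omega)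
  simp only [mul_assoc] at hV₃
  let T := {Θ ∈ V₃.image (integralHyperplane b) | K * subspaceHeight W ≤ subspaceHeight Θ}
  refine ⟨T, ?_, fun Θ hΘ => ?_⟩
  · have hcount : #V₃ ≤ 2 * #T + 5 * #V₁ := hb.card_box_le hI hV₁ hV₃
    rw [hcard₃, hcard₁, mul_pow] at hcount
    have h9 : 9 ≤ 3 ^ (q + 1) := Nat.pow_le_pow_right (n := 3) (by norm_num) (by omega : 2 ≤ q + 1)
    have : subspaceHeight W ≤ subspaceHeight W * K ^ (q + 1) :=
      Nat.le_mul_of_pos_right _ (by positivity)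
    have : 9 * (subspaceHeight W * K ^ (q + 1)) ≤ subspaceHeight W * (3 ^ (q + 1) * K ^ (q + 1)) :=
      by rw [mul_left_comm (subspaceHeight W)]; exact Nat.mul_le_mul_right _ h9
    omega
  · obtain ⟨hΘV, hle⟩ := mem_filter.1 hΘ
    obtain ⟨v₀, hv₀, rfl⟩ := mem_image.1 hΘV
    obtain ⟨hv₀, hbox⟩ := (hV₃ _).1 hv₀
    exact ⟨hb.integralHyperplane_le v₀, finrank_integralHyperplane hb.linearIndependent hv₀, hle,
      hb.subspaceHeight_integralHyperplane_le hI hv₀ hbox⟩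

end Ray

/-! ### Linear subspaces contained in a hypersurface -/

section GenericLine

variable {K V : Type*} [Field K] [AddCommGroup V] [Module K V] {S : Submodule K V}

theorem exists_mem_forall_notMem [Infinite K] {T : Finset (Submodule K V)} (hT : ∀ U ∈ T, ¬S ≤ U) :
    ∃ e ∈ S, ∀ U ∈ T, e ∉ U := by
  classical
  have h := Subspace.biUnion_ne_univ_of_top_notMem (k := K) (E := S)
    (s := T.image fun U => U.comap S.subtype) fun h => by
      obtain ⟨U, hU, htop⟩ := mem_image.1 h
      exact hT U hU (Submodule.comap_subtype_eq_top.1 htop)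
  obtain ⟨e, he⟩ := (Set.ne_univ_iff_exists_notMem _).1 h
  refine ⟨e, e.2, fun U hU heU => he ?_⟩
  simp only [Set.mem_iUnion]
  exact ⟨U.comap S.subtype, mem_image_of_mem _ hU, heU⟩

theorem exists_sub_smul_mem [FiniteDimensional K V] {W : Submodule K V} (hWS : W ≤ S)
    (hrank : finrank K S = finrank K W + 1) {x e : V} (hx : x ∈ S) (heS : e ∈ S) (heW : e ∉ W) :
    ∃ t : K, x - t • e ∈ W := by
  have hlt : W < W ⊔ K ∙ e := le_sup_left.lt_of_ne fun h =>
    heW (h ▸ Submodule.mem_sup_right (Submodule.mem_span_singleton_self e))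
  have hsup : W ⊔ K ∙ e = S := Submodule.eq_of_le_of_finrank_le
    (sup_le hWS ((Submodule.span_singleton_le_iff_mem _ _).2 heS))
    (hrank.trans_le (Submodule.finrank_lt_finrank_of_lt hlt))
  rw [← hsup, Submodule.mem_sup] at hx
  obtain ⟨w, hw, z, hz, rfl⟩ := hx
  obtain ⟨t, rfl⟩ := Submodule.mem_span_singleton.1 hz
  exact ⟨t, by rwa [add_sub_cancel_right]⟩

/-- The directions of the lines through `x` meeting two of the hyperplanes of `T` in the same point
lie in finitely many proper subspaces of `S`. -/
theorem exists_direction_injOn [Infinite K] [FiniteDimensional K V] {q : ℕ}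
    (hS : finrank K S = q + 2) {T : Finset (Submodule K V)}
    (hT : ∀ W ∈ T, W ≤ S ∧ finrank K W = q + 1) {x : V} (hxS : x ∈ S) (hxT : ∀ W ∈ T, x ∉ W) :
    ∃ (e : V) (t : Submodule K V → K), Set.InjOn t T ∧ ∀ W ∈ T, x - t W • e ∈ W := by
  classical
  obtain ⟨e, heS, he⟩ := exists_mem_forall_notMem (S := S)
    (T := T ∪ T.offDiag.image fun p => p.1 ⊓ p.2 ⊔ K ∙ x) fun U hU hle => by
      have hrank := hS.ge.trans (Submodule.finrank_mono hle)
      rcases mem_union.1 hU with h | h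
      · have := (hT U h).2
        omega
      · obtain ⟨⟨W, W'⟩, hp, rfl⟩ := mem_image.1 h
        obtain ⟨hW, hW', hne⟩ := mem_offDiag.1 hp
        dsimp only at hrank
        have := Submodule.finrank_add_le_finrank_add_finrank (W ⊓ W') (K ∙ x)
        have := finrank_inf_le (hT W hW).2 (hT W' hW').2 hne
        have : finrank K (K ∙ x) ≤ 1 := by
          simpa using finrank_span_le_card (R := K) ({x} : Set V)
        omega
  choose! t ht using fun W hW => exists_sub_smul_mem (hT W hW).1
    (by rw [hS, (hT W hW).2]) hxS heS (he W (mem_union_left _ hW))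
  refine ⟨e, t, fun W hW W' hW' heq => by_contra fun hne => ?_, ht⟩
  have htW := ht W hW
  have ht0 : t W ≠ 0 := fun h0 => hxT W hW (by rwa [h0, zero_smul, sub_zero] at htW)
  refine he (W ⊓ W' ⊔ K ∙ x)
    (mem_union_right _ (mem_image.2 ⟨(W, W'), mem_offDiag.2 ⟨hW, hW', hne⟩, rfl⟩)) ?_
  rw [← Submodule.smul_mem_iff _ ht0, ← sub_sub_cancel x (t W • e)]
  exact sub_mem (Submodule.mem_sup_right (Submodule.mem_span_singleton_self x))
    (Submodule.mem_sup_left ⟨htW, heq ▸ ht W' hW'⟩)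

end GenericLine

section VanishesOn

variable {R K : Type*} [CommRing R] [Field K] [Algebra R K]

/-- The polynomial `F` is zero at every point of the subspace `W`; for a form `F` this says that the
projective linear space defined by `W` lies in the hypersurface `F = 0`. -/
def VanishesOn (F : MvPolynomial ι R) (W : Submodule K (ι → K)) : Prop :=
  ∀ x ∈ W, MvPolynomial.aeval x F = 0

theorem aeval_ratVec (F : MvPolynomial ι ℤ) (x : ι → ℤ) :
    MvPolynomial.aeval (ratVec x) F = (MvPolynomial.eval x F : ℚ) :=
  MvPolynomial.aeval_algebraMap_apply ℚ x F

variable {F : MvPolynomial ι R} {W W' : Submodule K (ι → K)}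

theorem VanishesOn.mono (h : VanishesOn F W') (hle : W ≤ W') : VanishesOn F W :=
  fun x hx => h x (hle hx)

theorem exists_polynomial_eval_sub_smul (F : MvPolynomial ι R) (x e : ι → K) :
    ∃ g : Polynomial K, g.natDegree ≤ F.totalDegree ∧
      ∀ t, g.eval t = MvPolynomial.aeval (x - t • e) F := by
  let f : ι → Polynomial K := fun i => Polynomial.C (x i) - Polynomial.X * Polynomial.C (e i)
  refine ⟨MvPolynomial.aeval f F, ?_, fun t => ?_⟩
  · rw [← MvPolynomial.aeval_map_algebraMap K f F]
    have hdeg : (MvPolynomial.map (algebraMap R K) F).totalDegree ≤ F.totalDegree :=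
      sup_mono (MvPolynomial.support_map_subset _ _)
    refine (MvPolynomial.aeval_natDegree_le _ hdeg f (n := 1) fun i => ?_).trans_eq (mul_one _)
    refine (Polynomial.natDegree_sub_le _ _).trans (max_le ?_ ?_)
    · rw [Polynomial.natDegree_C]; exact zero_le_one
    · refine Polynomial.natDegree_mul_le.trans ?_
      simp
  · rw [← Polynomial.coe_aeval_eq_eval, ← AlgHom.restrictScalars_apply R (Polynomial.aeval t),
      MvPolynomial.comp_aeval_apply]
    congr 2
    ext i
    simp only [f, AlgHom.restrictScalars_apply, map_sub, map_mul, Polynomial.aeval_C,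
      Polynomial.aeval_X, Algebra.algebraMap_self, RingHom.id_apply, Pi.sub_apply, Pi.smul_apply,
      smul_eq_mul]

theorem card_le_totalDegree_of_vanishesOn [Infinite K] [Finite ι] {q : ℕ}
    {S : Submodule K (ι → K)} (hS : finrank K S = q + 2) (hF : ¬VanishesOn F S)
    {T : Finset (Submodule K (ι → K))}
    (hT : ∀ W ∈ T, W ≤ S ∧ finrank K W = q + 1 ∧ VanishesOn F W) : #T ≤ F.totalDegree := by
  classical
  obtain ⟨x, hxS, hx⟩ : ∃ x ∈ S, MvPolynomial.aeval x F ≠ 0 := by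
    simpa only [VanishesOn, not_forall, exists_prop] using hF
  obtain ⟨e, t, htinj, ht⟩ := exists_direction_injOn hS
    (fun W hW => ⟨(hT W hW).1, (hT W hW).2.1⟩) hxS fun W hW h => hx ((hT W hW).2.2 x h)
  obtain ⟨g, hgdeg, hg⟩ := exists_polynomial_eval_sub_smul F x e
  have hg0 : g ≠ 0 := by
    rintro rfl
    have := hg 0
    rw [Polynomial.eval_zero, zero_smul, sub_zero] at this
    exact hx this.symm
  have hroots : T.image t ⊆ g.roots.toFinset := by
    refine image_subset_iff.2 fun W hW => ?_
    rw [Multiset.mem_toFinset, Polynomial.mem_roots hg0, Polynomial.IsRoot, hg]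
    exact (hT W hW).2.2 _ (ht W hW)
  calc #T = #(T.image t) := (card_image_of_injOn htinj).symm
    _ ≤ #g.roots.toFinset := card_le_card hroots
    _ ≤ g.natDegree := (Multiset.toFinset_card_le _).trans (Polynomial.card_roots' g)
    _ ≤ F.totalDegree := hgdeg

end VanishesOn

section CommonZero

variable {σ κ K : Type*} [Field K]

/-- The substitution of `0` for the variables in `S`. -/
def substZero (K : Type*) [Field K] (S : Set σ) : MvPolynomial σ K →ₐ[K] MvPolynomial σ K :=
  open Classical in MvPolynomial.aeval fun i => if i ∈ S then 0 else MvPolynomial.X i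

theorem substZero_X_of_mem {S : Set σ} {i : σ} (hi : i ∈ S) :
    substZero K S (MvPolynomial.X i) = 0 := by
  simp [substZero, hi]

theorem substZero_X_of_notMem {S : Set σ} {i : σ} (hi : i ∉ S) :
    substZero K S (MvPolynomial.X i) = MvPolynomial.X i := by
  simp [substZero, hi]

theorem substZero_comp_of_subset {S T : Set σ} (hST : S ⊆ T) :
    (substZero K T).comp (substZero K S) = substZero K T := by
  refine MvPolynomial.algHom_ext fun i => ?_
  rw [AlgHom.comp_apply]
  by_cases hi : i ∈ S
  · rw [substZero_X_of_mem hi, map_zero, substZero_X_of_mem (hST hi)]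
  · rw [substZero_X_of_notMem hi]

theorem card_le_height_ker_substZero (S : Finset σ) :
    (#S : ℕ∞) ≤ (RingHom.ker (substZero K (S : Set σ))).height := by
  classical
  induction S using Finset.induction_on with
  | empty => simp
  | insert i S hi ih =>
    have := RingHom.ker_isPrime (substZero K (S : Set σ))
    have := RingHom.ker_isPrime (substZero K ((insert i S : Finset σ) : Set σ))
    have hlt : RingHom.ker (substZero K (S : Set σ)) <
        RingHom.ker (substZero K ((insert i S : Finset σ) : Set σ)) := by
      refine SetLike.lt_iff_le_and_exists.2 ⟨fun p hp => ?_, MvPolynomial.X i, ?_, ?_⟩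
      · rw [RingHom.mem_ker] at hp ⊢
        rw [← substZero_comp_of_subset (coe_subset.2 (subset_insert i S)), AlgHom.comp_apply, hp,
          map_zero]
      · exact substZero_X_of_mem (mem_coe.2 (mem_insert_self i S))
      · rw [RingHom.mem_ker, substZero_X_of_notMem (mem_coe.not.2 hi)]
        exact MvPolynomial.X_ne_zero i
    rw [card_insert_of_notMem hi, Nat.cast_add_one]
    exact le_trans (by gcongr) (Ideal.height_add_one_le_of_lt_of_isPrime hlt)

/-- Otherwise the maximal ideal of the origin, which has height `#σ`, would be minimal over the
ideal generated by the `f j`, contradicting Krull's height theorem. -/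
theorem exists_ne_zero_forall_eval_eq_zero [IsAlgClosed K] [Fintype σ] [Fintype κ]
    (hcard : Fintype.card κ < Fintype.card σ) {f : κ → MvPolynomial σ K}
    (hf : ∀ j, MvPolynomial.eval 0 (f j) = 0) :
    ∃ a : σ → K, a ≠ 0 ∧ ∀ j, MvPolynomial.eval a (f j) = 0 := by
  classical
  by_contra! hcon
  let I := Ideal.span (Set.range f)
  have hzero : MvPolynomial.zeroLocus K I = {0} := by
    rw [MvPolynomial.zeroLocus_span]
    ext a
    simp only [Set.forall_mem_range, MvPolynomial.aeval_eq_eval, Set.mem_ofPred_eq,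
      Set.mem_singleton_iff]
    refine ⟨fun h => by_contra fun ha => ?_, ?_⟩
    · obtain ⟨j, hj⟩ := hcon a ha
      exact hj (h j)
    · rintro rfl
      exact hf
  have hrad := MvPolynomial.vanishingIdeal_zeroLocus_eq_radical (K := K) I
  rw [hzero] at hrad
  have hmin : MvPolynomial.vanishingIdeal K ({0} : Set (σ → K)) ∈ I.minimalPrimes := by
    refine ⟨⟨inferInstance, hrad ▸ Ideal.le_radical⟩, fun J hJ _ => ?_⟩
    rw [hrad]
    exact hJ.1.radical_le_iff.2 hJ.2
  have hker : RingHom.ker (substZero K ((univ : Finset σ) : Set σ)) ≤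
      MvPolynomial.vanishingIdeal K ({0} : Set (σ → K)) := by
    intro p hp
    have h := congrArg (MvPolynomial.aeval (0 : σ → K)) (RingHom.mem_ker.1 hp)
    rw [substZero, MvPolynomial.comp_aeval_apply, map_zero] at h
    rw [MvPolynomial.mem_vanishingIdeal_singleton_iff, ← h]
    congr 2
    ext i
    simp
  have hle := ((card_le_height_ker_substZero univ).trans (Ideal.height_mono hker)).trans
    (Ideal.height_le_card_of_mem_minimalPrimes_span (Set.finite_range f) hmin)
  have hrange : (Set.range f).ncard ≤ Fintype.card κ := by
    rw [← Set.image_univ, ← Nat.card_eq_fintype_card, ← Set.ncard_univ]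
    exact Set.ncard_image_le Set.finite_univ
  have : Fintype.card σ ≤ (Set.range f).ncard := by exact_mod_cast hle
  omega

end CommonZero

section Pullback

variable {κ R : Type*} [CommRing R] [Fintype κ]

/-- The pull-back of polynomials along the linear map `a ↦ ∑ k, a k • b k`. -/
def pullback (b : κ → ι → R) : MvPolynomial ι R →ₐ[R] MvPolynomial κ R :=
  MvPolynomial.bind₁ fun i => ∑ k, MvPolynomial.C (b k i) * MvPolynomial.X k

theorem eval_pullback (b : κ → ι → R) (F : MvPolynomial ι R) (a : κ → R) :
    MvPolynomial.eval a (pullback b F) = MvPolynomial.eval (∑ k, a k • b k) F := by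
  rw [pullback, ← MvPolynomial.aeval_eq_eval, MvPolynomial.aeval_bind₁, MvPolynomial.aeval_eq_eval]
  congr 2
  ext i
  simp [mul_comm]

theorem map_pullback {S : Type*} [CommRing S] (φ : R →+* S) (b : κ → ι → R)
    (F : MvPolynomial ι R) :
    MvPolynomial.map φ (pullback b F) = pullback (fun k i => φ (b k i)) (MvPolynomial.map φ F) := by
  simp [pullback, MvPolynomial.map_bind₁]

theorem pderiv_pullback [Fintype ι] (b : κ → ι → R) (F : MvPolynomial ι R) (k : κ) :
    MvPolynomial.pderiv k (pullback b F) =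
      ∑ i, MvPolynomial.C (b k i) * pullback b (MvPolynomial.pderiv i F) := by
  classical
  induction F using MvPolynomial.induction_on with
  | C a => simp [pullback]
  | add F G hF hG => simp only [map_add, hF, hG, mul_add, sum_add_distrib]
  | mul_X F i hF =>
    have hX : MvPolynomial.pderiv k (pullback b (MvPolynomial.X i)) = MvPolynomial.C (b k i) := by
      simp [pullback, MvPolynomial.pderiv_X, Pi.single_apply]
    simp only [map_mul, Derivation.leibniz, hF, hX, MvPolynomial.pderiv_X, smul_eq_mul, map_add,
      mul_add, sum_add_distrib, mul_sum]
    congr 1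
    · rw [sum_eq_single i (fun j _ hj => by simp [hj]) (by simp)]
      simp [mul_comm]
    · exact sum_congr rfl fun j _ => by ring

theorem two_mul_card_le_card_of_pullback_eq_zero {K : Type*} [Field K] [IsAlgClosed K] [Fintype ι]
    {F : MvPolynomial ι K} {d : ℕ} (hd : 2 ≤ d) (hF : F.IsHomogeneous d)
    (hsing : ∀ z : ι → K, (∀ i, MvPolynomial.eval z (MvPolynomial.pderiv i F) = 0) → z = 0)
    {b : κ → ι → K} (hb : LinearIndependent K b) (hbF : pullback b F = 0) :
    2 * Fintype.card κ ≤ Fintype.card ι := by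
  by_contra! hlt
  obtain ⟨W, hW⟩ := Submodule.exists_isCompl (Submodule.span K (Set.range b))
  have hrank := Submodule.finrank_add_eq_of_isCompl hW
  rw [finrank_span_eq_card hb, finrank_fintype_fun_eq_card] at hrank
  let c := finBasis K W
  obtain ⟨a, ha, hac⟩ := exists_ne_zero_forall_eval_eq_zero (σ := κ) (κ := Fin (finrank K W))
    (f := fun j => ∑ i, MvPolynomial.C ((c j : ι → K) i) * pullback b (MvPolynomial.pderiv i F))
    (by rw [Fintype.card_fin]; omega) fun j => by
      rw [map_sum]
      refine sum_eq_zero fun i _ => ?_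
      have hconst : MvPolynomial.eval 0 (MvPolynomial.pderiv i F) = 0 := by
        rw [MvPolynomial.eval_zero, MvPolynomial.constantCoeff_eq]
        exact hF.pderiv.coeff_eq_zero (by rw [map_zero]; omega)
      simp only [map_mul, eval_pullback, Pi.zero_apply, zero_smul, sum_const_zero, hconst, mul_zero]
  let φ := Fintype.linearCombination K fun i =>
    MvPolynomial.eval (∑ k, a k • b k) (MvPolynomial.pderiv i F)
  have hφ : LinearMap.ker φ = ⊤ := by
    refine top_le_iff.1 (hW.sup_eq_top.ge.trans (sup_le ?_ fun x hx => ?_))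
    · rw [Submodule.span_le]
      rintro _ ⟨k, rfl⟩
      have h := congrArg (MvPolynomial.eval a) (pderiv_pullback b F k)
      simp only [hbF, map_zero, map_sum, map_mul, MvPolynomial.eval_C, eval_pullback] at h
      exact h.symm
    · rw [← show W.subtype _ = x from congrArg W.subtype (c.sum_repr ⟨x, hx⟩), map_sum]
      refine sum_mem fun j _ => ?_
      rw [map_smul]
      refine Submodule.smul_mem _ _ ?_
      have h := hac j
      simp only [map_sum, map_mul, MvPolynomial.eval_C, eval_pullback] at h
      exact h
  have hw := hsing (∑ k, a k • b k) fun i => by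
    classical
    have h : φ (Pi.single i 1) = 0 := LinearMap.mem_ker.1 (hφ ▸ Submodule.mem_top)
    rwa [Fintype.linearCombination_apply_single, one_smul] at h
  exact ha (funext (Fintype.linearIndependent_iff.1 hb a hw))

end Pullback

theorem two_mul_finrank_le_card_of_vanishesOn {K : Type*} [Field K] [CharZero K] [IsAlgClosed K]
    [Fintype ι] {F : MvPolynomial ι ℤ} {d : ℕ} (hd : 2 ≤ d) (hF : F.IsHomogeneous d)
    (hsing : ∀ z : ι → K, (∀ i, MvPolynomial.aeval z (MvPolynomial.pderiv i F) = 0) → z = 0)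
    {W : Submodule ℚ (ι → ℚ)} (hW : VanishesOn F W) : 2 * finrank ℚ W ≤ Fintype.card ι := by
  obtain ⟨b, hb⟩ := exists_isIntegralBasis (W := W) rfl
  have hbF : pullback b F = 0 := MvPolynomial.funext fun a => by
    have h := hW _ (sum_mem (t := univ) fun k _ => W.smul_mem (a k : ℚ) (hb.mem k))
    simp_rw [← ratVec_smul, ← map_sum] at h
    rw [aeval_ratVec, Int.cast_eq_zero] at h
    rw [eval_pullback, h, map_zero]
  have hli : LinearIndependent K fun k i => (Int.castRingHom K) (b k i) := by
    obtain ⟨J, hJ⟩ := exists_minor_ne_zero_iff.2 hb.linearIndependent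
    rw [minor_ratVec, Int.cast_ne_zero] at hJ
    exact exists_minor_ne_zero_iff.1
      ⟨J, by rwa [minor_map, eq_intCast, Int.cast_ne_zero]⟩
  rw [← Fintype.card_fin (finrank ℚ W)]
  refine two_mul_card_le_card_of_pullback_eq_zero hd (hF.map (Int.castRingHom K))
    (fun z hz => hsing z fun i => ?_) hli (by rw [← map_pullback, hbF, map_zero])
  rw [← hz i, MvPolynomial.pderiv_map, MvPolynomial.eval_map, MvPolynomial.aeval_def]
  rfl

/-! ### Isolated subspaces -/

section Incidence

variable {α β : Type*} [DecidableEq β]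

theorem sum_card_eq_sum_card_filter (V : Finset α) (T : α → Finset β) {U : Finset β}
    (hU : ∀ w ∈ V, T w ⊆ U) : ∑ w ∈ V, #(T w) = ∑ θ ∈ U, #{w ∈ V | θ ∈ T w} := by
  refine .trans (sum_congr rfl fun w hw => ?_)
    (sum_card_bipartiteAbove_eq_sum_card_bipartiteBelow fun w θ => θ ∈ T w)
  rw [bipartiteAbove, filter_mem_eq_inter, inter_eq_right.2 (hU w hw)]

theorem sum_card_inter_eq_sum_sq_card_filter (V : Finset α) (T : α → Finset β) {U : Finset β}
    (hU : ∀ w ∈ V, T w ⊆ U) :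
    ∑ w ∈ V, ∑ w' ∈ V, #(T w ∩ T w') = ∑ θ ∈ U, #{w ∈ V | θ ∈ T w} ^ 2 := by
  rw [← sum_product' V V fun w w' => #(T w ∩ T w'),
    sum_card_eq_sum_card_filter (V ×ˢ V) (fun w => T w.1 ∩ T w.2) (U := U) fun w hw =>
      inter_subset_left.trans (hU _ (mem_product.1 hw).1)]
  refine sum_congr rfl fun θ _ => ?_
  simp only [mem_inter, sq, ← card_product, filter_product (fun w => θ ∈ T w) fun w => θ ∈ T w]

theorem sum_card_le_mul_card_biUnion [DecidableEq α] {V : Finset α} {T : α → Finset β} {E : ℕ}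
    (h : ∀ w ∈ V, ∑ w' ∈ V.erase w, #(T w ∩ T w') ≤ E * #(T w)) :
    ∑ w ∈ V, #(T w) ≤ (1 + E) * #(V.biUnion T) := by
  have hU : ∀ w ∈ V, T w ⊆ V.biUnion T := fun w hw => subset_biUnion_of_mem T hw
  have hpairs : ∑ w ∈ V, ∑ w' ∈ V, #(T w ∩ T w') ≤ (1 + E) * ∑ w ∈ V, #(T w) := by
    rw [mul_sum]
    refine sum_le_sum fun w hw => ?_
    rw [← add_sum_erase V _ hw, inter_self]
    linarith [h w hw]
  have hCS := sq_sum_le_card_mul_sum_sq (s := V.biUnion T) (f := fun θ => #{w ∈ V | θ ∈ T w})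
  rw [← sum_card_eq_sum_card_filter V T hU, ← sum_card_inter_eq_sum_sq_card_filter V T hU] at hCS
  rcases (∑ w ∈ V, #(T w)).eq_zero_or_pos with h0 | hpos
  · rw [h0]; exact Nat.zero_le _
  refine Nat.le_of_mul_le_mul_left ?_ hpos
  calc (∑ w ∈ V, #(T w)) * ∑ w ∈ V, #(T w) = (∑ w ∈ V, #(T w)) ^ 2 := (sq _).symm
    _ ≤ #(V.biUnion T) * ((1 + E) * ∑ w ∈ V, #(T w)) := hCS.trans (Nat.mul_le_mul_left _ hpairs)
    _ = (∑ w ∈ V, #(T w)) * ((1 + E) * #(V.biUnion T)) := by ring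

end Incidence

section Isolated

variable [Fintype ι] {F : MvPolynomial ι ℤ} {W W' Θ : Submodule ℚ (ι → ℚ)} {q K m : ℕ}

theorem card_neighbours_le (hW : finrank ℚ W = q + 1) {ρ : ℕ} {V : Finset (Submodule ℚ (ι → ℚ))}
    (hV : ∀ W' ∈ V, finrank ℚ W' = q + 1 ∧ VanishesOn F W' ∧ finrank ℚ ↥(W ⊔ W') = q + 2 ∧
      subspaceHeight (W ⊔ W') ≤ ρ * subspaceHeight W ∧ ¬VanishesOn F (W ⊔ W')) :
    #V ≤ F.totalDegree * (subspaceHeight W * (2 * ρ + 1) ^ Fintype.card ι) := by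
  classical
  have hsups : #(V.image (W ⊔ ·)) ≤ subspaceHeight W * (2 * ρ + 1) ^ Fintype.card ι := by
    refine card_le_of_subspaceHeight_le (forall_mem_image.2 fun W' hW' => ?_)
    obtain ⟨-, -, hsup, hheight, -⟩ := hV W' hW'
    exact ⟨le_sup_left, by rw [hsup, hW], hheight⟩
  refine (card_le_mul_card_image V F.totalDegree (forall_mem_image.2 fun W₀ hW₀ => ?_)).trans
    (Nat.mul_le_mul_left _ hsups)
  obtain ⟨-, -, hsup, -, hF⟩ := hV W₀ hW₀
  refine card_le_totalDegree_of_vanishesOn hsup hF fun W' hW' => ?_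
  obtain ⟨hW', heq⟩ := mem_filter.1 hW'
  exact ⟨heq ▸ le_sup_right, (hV W' hW').1, (hV W' hW').2.1⟩

theorem subspaceHeight_sup_mul_le_of_mul_le (hΘ : finrank ℚ Θ = q) (hW : finrank ℚ W = q + 1)
    (hW' : finrank ℚ W' = q + 1) (hΘW : Θ ≤ W) (hΘW' : Θ ≤ W') (hne : W ≠ W')
    (hK : K * subspaceHeight W ≤ subspaceHeight Θ) :
    subspaceHeight (W ⊔ W') * K ≤ (q + 2) * (q + 1) * subspaceHeight W' := by
  refine Nat.le_of_mul_le_mul_left ?_ (subspaceHeight_pos W)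
  calc subspaceHeight W * (subspaceHeight (W ⊔ W') * K)
      = subspaceHeight (W ⊔ W') * (K * subspaceHeight W) := by ring
    _ ≤ subspaceHeight (W ⊔ W') * subspaceHeight Θ := Nat.mul_le_mul_left _ hK
    _ ≤ (q + 2) * (q + 1) * (subspaceHeight W * subspaceHeight W') :=
      subspaceHeight_sup_mul_le hΘ hW hW' hΘW hΘW' hne
    _ = subspaceHeight W * ((q + 2) * (q + 1) * subspaceHeight W') := by ring

/-- An `r`-dimensional subspace of height between `m / 2` and `m` on which `F` vanishes, and which
is a hyperplane in no subspace of height `≤ (r + 1) r m / K` on which `F` vanishes. Two such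
subspaces meeting in a hyperplane of height `≥ K m` have a sum on which `F` does not vanish. -/
structure IsIsolated (F : MvPolynomial ι ℤ) (r K m : ℕ) (W : Submodule ℚ (ι → ℚ)) : Prop where
  finrank_eq : finrank ℚ W = r
  vanishesOn : VanishesOn F W
  height_le : subspaceHeight W ≤ m
  le_two_mul_height : m ≤ 2 * subspaceHeight W
  not_vanishesOn : ∀ S, W ≤ S → finrank ℚ S = r + 1 →
    subspaceHeight S * K ≤ (r + 1) * r * m → ¬VanishesOn F S

theorem IsIsolated.sup_of_common_hyperplane (hW : IsIsolated F (q + 1) K m W)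
    (hW' : IsIsolated F (q + 1) K m W') (hK : 1 ≤ K) (hΘ : finrank ℚ Θ = q) (hΘW : Θ ≤ W)
    (hΘW' : Θ ≤ W') (hne : W ≠ W') (hKΘ : K * subspaceHeight W ≤ subspaceHeight Θ) :
    finrank ℚ ↥(W ⊔ W') = q + 2 ∧
      subspaceHeight (W ⊔ W') ≤ 2 * ((q + 2) * (q + 1)) * subspaceHeight W ∧
      ¬VanishesOn F (W ⊔ W') := by
  have hsup := finrank_sup_eq hΘ hW.finrank_eq hW'.finrank_eq hΘW hΘW' hne
  have hheight : subspaceHeight (W ⊔ W') * K ≤ (q + 2) * (q + 1) * m :=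
    (subspaceHeight_sup_mul_le_of_mul_le hΘ hW.finrank_eq hW'.finrank_eq hΘW hΘW' hne hKΘ).trans
      (Nat.mul_le_mul_left _ hW'.height_le)
  refine ⟨hsup, ?_, hW.not_vanishesOn _ le_sup_left hsup hheight⟩
  calc subspaceHeight (W ⊔ W') ≤ subspaceHeight (W ⊔ W') * K := Nat.le_mul_of_pos_right _ hK
    _ ≤ (q + 2) * (q + 1) * m := hheight
    _ ≤ (q + 2) * (q + 1) * (2 * subspaceHeight W) := Nat.mul_le_mul_left _ hW.le_two_mul_height
    _ = 2 * ((q + 2) * (q + 1)) * subspaceHeight W := by ring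

theorem sum_card_inter_le_of_isIsolated [DecidableEq (Submodule ℚ (ι → ℚ))]
    {V : Finset (Submodule ℚ (ι → ℚ))} (hV : ∀ W ∈ V, IsIsolated F (q + 1) K m W) (hK : 1 ≤ K)
    {T : Submodule ℚ (ι → ℚ) → Finset (Submodule ℚ (ι → ℚ))}
    (hT : ∀ W ∈ V, ∀ Θ ∈ T W, Θ ≤ W ∧ finrank ℚ Θ = q ∧ K * subspaceHeight W ≤ subspaceHeight Θ)
    (hW : W ∈ V) :
    ∑ W' ∈ V.erase W, #(T W ∩ T W') ≤ F.totalDegree *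
      (subspaceHeight W * (2 * (2 * ((q + 2) * (q + 1))) + 1) ^ Fintype.card ι) := by
  have hcommon : ∀ W' ∈ V.erase W, ∀ Θ ∈ T W ∩ T W',
      W ≠ W' ∧ W' ∈ V ∧ finrank ℚ Θ = q ∧ Θ ≤ W ∧ Θ ≤ W' ∧
        K * subspaceHeight W ≤ subspaceHeight Θ := fun W' hW' Θ hΘ => by
    obtain ⟨hne, hW'⟩ := mem_erase.1 hW'
    obtain ⟨hΘT, hΘT'⟩ := mem_inter.1 hΘ
    obtain ⟨hΘW, hΘq, hKΘ⟩ := hT W hW Θ hΘT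
    exact ⟨hne.symm, hW', hΘq, hΘW, (hT W' hW' Θ hΘT').1, hKΘ⟩
  calc ∑ W' ∈ V.erase W, #(T W ∩ T W')
      ≤ ∑ W' ∈ V.erase W, if (T W ∩ T W').Nonempty then 1 else 0 := sum_le_sum fun W' hW' => by
        split_ifs with hne
        · refine card_le_one.2 fun Θ hΘ Θ' hΘ' => ?_
          obtain ⟨hne, hW'V, hΘq, hΘW, hΘW', -⟩ := hcommon W' hW' Θ hΘ
          obtain ⟨-, -, hΘq', hΘ'W, hΘ'W', -⟩ := hcommon W' hW' Θ' hΘ'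
          have hr := (hV W hW).finrank_eq
          have hr' := (hV W' hW'V).finrank_eq
          rw [eq_inf_of_finrank_eq hΘq hr hr' hΘW hΘW' hne,
            eq_inf_of_finrank_eq hΘq' hr hr' hΘ'W hΘ'W' hne]
        · rw [not_nonempty_iff_eq_empty.1 hne, card_empty]
    _ = #{W' ∈ V.erase W | (T W ∩ T W').Nonempty} := (card_filter _ _).symm
    _ ≤ _ := card_neighbours_le (hV W hW).finrank_eq fun W' hW' => by
        obtain ⟨hW', Θ, hΘ⟩ := mem_filter.1 hW'
        obtain ⟨hne, hW'V, hΘq, hΘW, hΘW', hKΘ⟩ := hcommon W' hW' Θ hΘ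
        have hisol' := hV W' hW'V
        exact ⟨hisol'.finrank_eq, hisol'.vanishesOn,
          (hV W hW).sup_of_common_hyperplane hisol' hK hΘq hΘW hΘW' hne hKΘ⟩

theorem card_mul_le_of_isIsolated (hq : 1 ≤ q) (hK : 1 ≤ K) {L : ℕ}
    {V : Finset (Submodule ℚ (ι → ℚ))} (hV : ∀ W ∈ V, IsIsolated F (q + 1) K m W)
    (hL : ∀ U : Finset (Submodule ℚ (ι → ℚ)), (∀ Θ ∈ U, finrank ℚ Θ = q ∧ VanishesOn F Θ ∧
      subspaceHeight Θ ≤ (q + 1) ^ q * (3 * (K * m))) → #U ≤ L) :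
    #V * m ≤ 2 * ((1 + F.totalDegree *
      (2 * (2 * ((q + 2) * (q + 1))) + 1) ^ Fintype.card ι) * L) := by
  classical
  choose! T hT_card hT using
    fun W hW => exists_hyperplanes_height_ge (hV W hW).finrank_eq hq hK
  have hunion : #(V.biUnion T) ≤ L := hL _ fun Θ hΘ => by
    obtain ⟨W, hW, hΘ⟩ := mem_biUnion.1 hΘ
    obtain ⟨hle, hrank, -, hheight⟩ := hT W hW Θ hΘ
    refine ⟨hrank, (hV W hW).vanishesOn.mono hle, hheight.trans ?_⟩
    gcongr
    exact (hV W hW).height_le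
  have hincidence := sum_card_le_mul_card_biUnion (V := V) (T := T)
    (E := F.totalDegree * (2 * (2 * ((q + 2) * (q + 1))) + 1) ^ Fintype.card ι) fun W hW => by
      refine (sum_card_inter_le_of_isIsolated hV hK (fun W hW Θ hΘ => ?_) hW).trans ?_
      · obtain ⟨hle, hrank, hheight, -⟩ := hT W hW Θ hΘ
        exact ⟨hle, hrank, hheight⟩
      · rw [mul_left_comm, mul_comm (subspaceHeight W)]
        exact Nat.mul_le_mul_left _ (hT_card W hW)
  calc #V * m ≤ ∑ W ∈ V, 2 * #(T W) := by
        rw [← smul_eq_mul]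
        refine card_nsmul_le_sum _ _ _ fun W hW => ?_
        exact (hV W hW).le_two_mul_height.trans (Nat.mul_le_mul_left _ (hT_card W hW))
    _ = 2 * ∑ W ∈ V, #(T W) := (mul_sum ..).symm
    _ ≤ _ := Nat.mul_le_mul_left _ (hincidence.trans (Nat.mul_le_mul_left _ hunion))

end Isolated

/-! ### Primes in `[P, 4P]` -/

/-- The primes between `P` and `4 P`, used as moduli. -/
def primeWindow (P : ℕ) : Finset ℕ := {p ∈ Icc P (4 * P) | p.Prime}

theorem mem_primeWindow {P p : ℕ} : p ∈ primeWindow P ↔ (P ≤ p ∧ p ≤ 4 * P) ∧ p.Prime := by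
  rw [primeWindow, mem_filter, mem_Icc]

theorem one_le_card_primeWindow {P : ℕ} (hP : 1 ≤ P) : 1 ≤ #(primeWindow P) := by
  obtain ⟨p, hp, hlt, hle⟩ := Nat.exists_prime_lt_and_le_two_mul P (by lia)
  exact card_pos.2 ⟨p, mem_primeWindow.2 ⟨⟨hlt.le, by lia⟩, hp⟩⟩

theorem theta_sub_theta_le (P : ℕ) :
    Chebyshev.theta (4 * P : ℕ) - Chebyshev.theta P ≤
      #(primeWindow P) * Real.log (4 * P : ℕ) := by
  have hsub : {p ∈ Icc 0 P | p.Prime} ⊆ {p ∈ Icc 0 (4 * P) | p.Prime} :=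
    filter_subset_filter _ (Icc_subset_Icc_right (by lia))
  simp only [Chebyshev.theta_eq_sum_Icc, Nat.floor_natCast]
  rw [← sum_sdiff hsub, add_sub_cancel_right, ← nsmul_eq_mul]
  refine (sum_le_sum_of_subset_of_nonneg (t := primeWindow P) (fun p hp => ?_)
    fun p _ _ => Real.log_natCast_nonneg p).trans (sum_le_card_nsmul _ _ _ fun p hp => ?_)
  · simp only [mem_sdiff, mem_filter, mem_Icc] at hp
    exact mem_primeWindow.2 ⟨by lia, by lia⟩
  · have hp := mem_primeWindow.1 hp
    exact Real.log_le_log (mod_cast hp.2.pos) (mod_cast hp.1.2)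

theorem eventually_log_error_le : ∀ᶠ x : ℝ in Filter.atTop,
    Real.log (x + 1) + 2 * √x * Real.log x ≤ x / 4 * Real.log 2 := by
  have hlittleO := (isLittleO_log_rpow_atTop (r := 1 / 2) (by norm_num)).bound
    (c := Real.log 2 / 12) (by positivity)
  filter_upwards [hlittleO, Filter.eventually_ge_atTop 4] with x hlog hx
  rw [Real.norm_of_nonneg (Real.log_nonneg (by linarith)), Real.norm_of_nonneg (by positivity),
    ← Real.sqrt_eq_rpow] at hlog
  have hlog0 : 0 ≤ Real.log x := Real.log_nonneg (by linarith)
  have hsqrt : 2 ≤ √x := Real.le_sqrt_of_sq_le (by linarith)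
  have hsucc : Real.log (x + 1) ≤ √x * Real.log x :=
    calc Real.log (x + 1) ≤ Real.log (x ^ 2) := Real.log_le_log (by linarith) (by nlinarith)
      _ = 2 * Real.log x := by rw [Real.log_pow]; norm_num
      _ ≤ √x * Real.log x := by gcongr
  have hmain : √x * Real.log x ≤ x / 12 * Real.log 2 :=
    calc √x * Real.log x ≤ √x * (Real.log 2 / 12 * √x) := by gcongr
      _ = √x * √x / 12 * Real.log 2 := by ring
      _ = x / 12 * Real.log 2 := by rw [Real.mul_self_sqrt (by linarith)]
  linarith

theorem eventually_mul_log_two_le : ∀ᶠ P : ℕ in Filter.atTop,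
    P * Real.log 2 ≤ #(primeWindow P) * Real.log (4 * P : ℕ) := by
  have hcast : Filter.Tendsto (fun P : ℕ => ((4 * P : ℕ) : ℝ)) Filter.atTop Filter.atTop :=
    tendsto_natCast_atTop_atTop.comp (Filter.tendsto_id.const_mul_atTop' (by norm_num))
  filter_upwards [hcast.eventually eventually_log_error_le] with P herror
  have hlog4 : Real.log 4 = 2 * Real.log 2 := by
    rw [show (4 : ℝ) = 2 ^ 2 by norm_num, Real.log_pow, Nat.cast_ofNat]
  have hupper := Chebyshev.theta_le_log4_mul_x (x := (P : ℝ)) P.cast_nonneg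
  have hlower := Chebyshev.theta_ge (4 * P)
  have hwindow := theta_sub_theta_le P
  rw [hlog4] at hupper
  push_cast at *
  linarith

theorem exists_le_mul_card_primeWindow {δ : ℝ} (hδ : 0 < δ) : ∃ C : ℝ, 0 < C ∧ ∀ P : ℕ, 1 ≤ P →
    (P : ℝ) ≤ C * (P : ℝ) ^ δ * #(primeWindow P) := by
  have hl2 : 0 < Real.log 2 := Real.log_pos (by norm_num)
  obtain ⟨N, hN⟩ := Filter.eventually_atTop.1 eventually_mul_log_two_le
  refine ⟨N + 4 ^ δ / δ / Real.log 2 + 1, by positivity, fun P hP => ?_⟩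
  rcases le_total P N with hPN | hNP
  · have hPδ : (1 : ℝ) ≤ (P : ℝ) ^ δ := Real.one_le_rpow (mod_cast hP) hδ.le
    have hcard : (1 : ℝ) ≤ #(primeWindow P) := mod_cast one_le_card_primeWindow hP
    calc (P : ℝ) ≤ N * 1 * 1 := by simpa using hPN
      _ ≤ (N + 4 ^ δ / δ / Real.log 2 + 1) * (P : ℝ) ^ δ * #(primeWindow P) := by
        gcongr
        linarith [show (0 : ℝ) ≤ 4 ^ δ / δ / Real.log 2 by positivity]
  · have hlog : Real.log (4 * P : ℕ) ≤ 4 ^ δ * (P : ℝ) ^ δ / δ := by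
      rw [← Real.mul_rpow (by norm_num) P.cast_nonneg]
      exact_mod_cast Real.log_le_rpow_div (4 * P : ℕ).cast_nonneg hδ
    calc (P : ℝ) ≤ #(primeWindow P) * Real.log (4 * P : ℕ) / Real.log 2 :=
          (le_div_iff₀ hl2).2 (hN P hNP)
      _ ≤ #(primeWindow P) * (4 ^ δ * (P : ℝ) ^ δ / δ) / Real.log 2 := by gcongr
      _ = 4 ^ δ / δ / Real.log 2 * (P : ℝ) ^ δ * #(primeWindow P) := by ring
      _ ≤ (N + 4 ^ δ / δ / Real.log 2 + 1) * (P : ℝ) ^ δ * #(primeWindow P) := by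
        gcongr
        linarith [N.cast_nonneg (α := ℝ)]

/-! ### Lines and their residues -/

section Reduction

theorem exists_eq_C_mul_map_ne_zero {F : MvPolynomial ι ℤ} (hF : F ≠ 0) :
    ∃ (c : ℤ) (G : MvPolynomial ι ℤ), c ≠ 0 ∧ F = MvPolynomial.C c * G ∧
      ∀ p : ℕ, p.Prime → MvPolynomial.map (Int.castRingHom (ZMod p)) G ≠ 0 := by
  let c : ℤ := F.support.gcd F.coeff
  have hc : c ≠ 0 := fun h => by
    obtain ⟨s, hs⟩ := MvPolynomial.exists_coeff_ne_zero hF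
    exact hs (Finset.gcd_eq_zero_iff.1 h s (MvPolynomial.mem_support_iff.2 hs))
  have hdvd : ∀ s, c ∣ F.coeff s := fun s => by
    by_cases hs : s ∈ F.support
    · exact gcd_dvd hs
    · exact MvPolynomial.notMem_support_iff.1 hs ▸ dvd_zero c
  obtain ⟨G, hG⟩ := (MvPolynomial.C_dvd_iff_dvd_coeff c F).2 hdvd
  have hcoeff : ∀ s, F.coeff s = c * G.coeff s := fun s => by rw [hG, MvPolynomial.coeff_C_mul]
  refine ⟨c, G, hc, hG, fun p hp hG0 => hp.one_lt.ne' ?_⟩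
  have hpG : ∀ s, (p : ℤ) ∣ G.coeff s := fun s => by
    rw [← ZMod.intCast_zmod_eq_zero_iff_dvd, ← eq_intCast (Int.castRingHom (ZMod p)),
      ← MvPolynomial.coeff_map, hG0, MvPolynomial.coeff_zero]
  have hcp : c * p ∣ c * 1 := by
    rw [mul_one]
    exact dvd_gcd fun s _ => hcoeff s ▸ mul_dvd_mul_left c (hpG s)
  exact Nat.dvd_one.1 (Int.natCast_dvd_natCast.1 ((mul_dvd_mul_iff_left hc).1 hcp))

theorem card_eval_eq_zero_le {k : Type*} [Field k] [Fintype k] [DecidableEq k] {n : ℕ}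
    {G : MvPolynomial (Fin (n + 1)) k} (hG : G ≠ 0) :
    #{v | MvPolynomial.eval v G = 0} ≤ G.totalDegree * Fintype.card k ^ n := by
  have hk : (0 : ℚ≥0) < Fintype.card k := mod_cast Fintype.card_pos
  have h := MvPolynomial.schwartz_zippel_totalDegree hG univ
  rw [Fintype.piFinset_univ, card_univ, div_le_div_iff₀ (by positivity) hk, pow_succ,
    ← mul_assoc] at h
  exact_mod_cast le_of_mul_le_mul_right h hk

theorem exists_dvd_sub_mul_of_isCoprime {a b : ℤ} (hab : IsCoprime a b) {x x' : ι → ℤ}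
    (ha : ∃ μ, ∀ i, a ∣ x' i - μ * x i) (hb : ∃ μ, ∀ i, b ∣ x' i - μ * x i) :
    ∃ μ, ∀ i, a * b ∣ x' i - μ * x i := by
  obtain ⟨α, hα⟩ := ha
  obtain ⟨β, hβ⟩ := hb
  obtain ⟨s, t, hst⟩ := id hab
  refine ⟨α * (t * b) + β * (s * a), fun i => hab.mul_dvd ?_ ?_⟩
  · have : x' i - (α * (t * b) + β * (s * a)) * x i =
        x' i - α * x i + a * ((α - β) * s * x i) := by
      linear_combination -α * x i * hst
    exact this ▸ (hα i).add (dvd_mul_right _ _)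
  · have : x' i - (α * (t * b) + β * (s * a)) * x i =
        x' i - β * x i + b * ((β - α) * t * x i) := by
      linear_combination -β * x i * hst
    exact this ▸ (hβ i).add (dvd_mul_right _ _)

end Reduction

section Line

variable {x x' : ι → ℤ}

theorem ratVec_ne_zero (hx : x ≠ 0) : ratVec x ≠ 0 :=
  (map_ne_zero_iff _ ratVec_injective).2 hx

theorem linearIndependent_pair_of_span_ne {K V : Type*} [Field K] [AddCommGroup V] [Module K V]
    {u v : V} (hu : u ≠ 0) (hv : v ≠ 0)
    (hne : Submodule.span K {u} ≠ Submodule.span K {v}) : LinearIndependent K ![u, v] := by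
  refine (LinearIndependent.pair_iff' hu).2 fun a ha => hne ?_
  have ha0 : a ≠ 0 := by
    rintro rfl
    exact hv (by rw [← ha, zero_smul])
  rw [← ha, Submodule.span_singleton_smul_eq ha0.isUnit]

variable [Fintype ι]

theorem exists_span_eq_of_finrank_eq_one {W : Submodule ℚ (ι → ℚ)} (hW : finrank ℚ W = 1) :
    ∃ x : ι → ℤ, Submodule.span ℚ {ratVec x} = W ∧ x ≠ 0 ∧ ∀ i, |x i| ≤ subspaceHeight W := by
  obtain ⟨b, hb⟩ := exists_isIntegralBasis hW
  refine ⟨b 0, ?_, fun h => hb.linearIndependent.ne_zero 0 (by simp [h]), fun i => ?_⟩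
  · rw [← hb.span_eq, Set.range_unique, Fin.default_eq_zero]
  · simpa [minor] using hb.abs_minor_le fun _ => i

theorem maxMinor_pair_le {A B : ℕ} (hA : ∀ i, |x i| ≤ A) (hB : ∀ i, |x' i| ≤ B) :
    maxMinor ![x, x'] ≤ 2 * (A * B) := by
  refine maxMinor_le fun J => ?_
  have hAB : ∀ i j, |x i * x' j| ≤ A * B := fun i j => by
    rw [abs_mul]
    gcongr
    exacts [hA i, hB j]
  rw [minor, Matrix.det_fin_two]
  push_cast
  calc |x (J 0) * x' (J 1) - x (J 1) * x' (J 0)|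
      ≤ |x (J 0) * x' (J 1)| + |x (J 1) * x' (J 0)| := abs_sub _ _
    _ ≤ 2 * (A * B) := by linarith [hAB (J 0) (J 1), hAB (J 1) (J 0)]

omit [Fintype ι] in
theorem finrank_sup_span_eq_two [Finite ι] (hx : x ≠ 0) (hx' : x' ≠ 0)
    (hne : Submodule.span ℚ {ratVec x} ≠ Submodule.span ℚ {ratVec x'}) :
    finrank ℚ ↥(Submodule.span ℚ {ratVec x} ⊔ Submodule.span ℚ {ratVec x'}) = 2 :=
  finrank_sup_eq (finrank_bot ℚ _) (finrank_span_singleton (ratVec_ne_zero hx))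
    (finrank_span_singleton (ratVec_ne_zero hx')) bot_le bot_le hne

theorem subspaceHeight_sup_span_mul_le (hx : x ≠ 0) (hx' : x' ≠ 0)
    (hne : Submodule.span ℚ {ratVec x} ≠ Submodule.span ℚ {ratVec x'}) {A B N : ℕ}
    (hA : ∀ i, |x i| ≤ A) (hB : ∀ i, |x' i| ≤ B) (hdvd : ∃ μ, ∀ i, (N : ℤ) ∣ x' i - μ * x i) :
    subspaceHeight (Submodule.span ℚ {ratVec x} ⊔ Submodule.span ℚ {ratVec x'}) * N ≤
      2 * (A * B) := by
  obtain ⟨μ, hμ⟩ := hdvd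
  choose y hy using hμ
  set S := Submodule.span ℚ {ratVec x} ⊔ Submodule.span ℚ {ratVec x'}
  have hxS : ratVec x ∈ S := Submodule.mem_sup_left (Submodule.mem_span_singleton_self _)
  have hx'S : ratVec x' ∈ S := Submodule.mem_sup_right (Submodule.mem_span_singleton_self _)
  have hS : finrank ℚ S = 2 := finrank_sup_span_eq_two hx hx' hne
  have hx'_eq : x' = μ • x + (N : ℤ) • y := by
    ext i
    simp only [Pi.add_apply, Pi.smul_apply, smul_eq_mul]
    linarith [hy i]
  have hminor : maxMinor ![x, x'] = N * maxMinor ![x, y] := by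
    rw [maxMinor_eq_natAbs_det_mul (b := ![x, y]) (U := !![1, 0; μ, N])]
    · simp
    · simp [Fin.forall_fin_two, Fin.sum_univ_two, hx'_eq]
  have hne0 : maxMinor ![x, x'] ≠ 0 := by
    have hpair : (fun k => ratVec (![x, x'] k)) = ![ratVec x, ratVec x'] := by
      ext k : 1
      fin_cases k <;> rfl
    rw [maxMinor_ne_zero_iff, hpair]
    exact linearIndependent_pair_of_span_ne (ratVec_ne_zero hx) (ratVec_ne_zero hx') hne
  rw [hminor, mul_ne_zero_iff] at hne0
  have hyS : ratVec y ∈ S := by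
    have hN : (N : ℚ) ≠ 0 := Nat.cast_ne_zero.2 hne0.1
    refine (Submodule.smul_mem_iff S hN).1 ?_
    have : (N : ℚ) • ratVec y = ratVec x' - (μ : ℚ) • ratVec x := by
      rw [hx'_eq, map_add, ratVec_smul, ratVec_smul, add_sub_cancel_left, Int.cast_natCast]
    exact this ▸ sub_mem hx'S (S.smul_mem _ hxS)
  calc subspaceHeight S * N ≤ maxMinor ![x, y] * N :=
        Nat.mul_le_mul_right _ (subspaceHeight_le hS (maxMinor_ne_zero_iff.1 hne0.2)
          (Fin.forall_fin_two.2 ⟨hxS, hyS⟩))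
    _ = maxMinor ![x, x'] := by rw [hminor, mul_comm]
    _ ≤ 2 * (A * B) := maxMinor_pair_le hA hB

end Line

section Residue

variable [Fintype ι] {x x' : ι → ℤ} {p P m : ℕ}

/-- The reductions modulo `p` of the multiples `l x`, `0 < l < p`: for a prime `p` not dividing `x`,
the points of `(ℤ / p)^ι` representing the reduction of the projective point `x`. -/
def residueMultiples (x : ι → ℤ) (p : ℕ) : Finset (ι → ZMod p) :=
  (Ico 1 p).image fun l : ℕ => fun i => (l : ZMod p) * x i

/-- The incidences of the projective point `x` with the points of the affine spaces over `ℤ / p`,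
where `p` runs over the primes in `[P, 4P]`. -/
def pointIncidences (P : ℕ) (x : ι → ℤ) : Finset (Σ p : ℕ, ι → ZMod p) :=
  (primeWindow P).sigma (residueMultiples x)

theorem mem_pointIncidences {t : Σ p : ℕ, ι → ZMod p} :
    t ∈ pointIncidences P x ↔ t.1 ∈ primeWindow P ∧ t.2 ∈ residueMultiples x t.1 :=
  mem_sigma

theorem card_residueMultiples_le : #(residueMultiples x p) ≤ p :=
  card_image_le.trans (by simp)

theorem card_residueMultiples (hp : p.Prime) (hx : x ≠ 0) (hxp : ∀ i, |x i| < p) :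
    #(residueMultiples x p) = p - 1 := by
  have := Fact.mk hp
  obtain ⟨i, hi⟩ := Function.ne_iff.1 hx
  have hi' : (x i : ZMod p) ≠ 0 := fun h =>
    hi (Int.eq_zero_of_abs_lt_dvd ((ZMod.intCast_zmod_eq_zero_iff_dvd _ _).1 h) (hxp i))
  rw [residueMultiples, card_image_of_injOn, Nat.card_Ico]
  intro l hl l' hl' h
  have hmod := (ZMod.natCast_eq_natCast_iff' _ _ _).1 (mul_right_cancel₀ hi' (congrFun h i))
  simp only [coe_Ico, Set.mem_Ico] at hl hl'
  rwa [Nat.mod_eq_of_lt hl.2, Nat.mod_eq_of_lt hl'.2] at hmod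

theorem exists_dvd_sub_mul_of_mem_residueMultiples (hp : p.Prime) {v : ι → ZMod p}
    (hv : v ∈ residueMultiples x p) (hv' : v ∈ residueMultiples x' p) :
    ∃ μ : ℤ, ∀ i, (p : ℤ) ∣ x' i - μ * x i := by
  have := Fact.mk hp
  obtain ⟨l, -, rfl⟩ := mem_image.1 hv
  obtain ⟨l', hl', heq⟩ := mem_image.1 hv'
  have hl'0 : (l' : ZMod p) ≠ 0 := by
    rw [Ne, ZMod.natCast_eq_zero_iff]
    obtain ⟨hpos, hlt⟩ := mem_Ico.1 hl'
    exact Nat.not_dvd_of_pos_of_lt hpos hlt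
  obtain ⟨μ, hμ⟩ := ZMod.intCast_surjective ((l' : ZMod p)⁻¹ * (l : ZMod p))
  refine ⟨μ, fun i => (ZMod.intCast_zmod_eq_zero_iff_dvd _ _).1 ?_⟩
  have hi : (l' : ZMod p) * x' i = l * x i := congrFun heq i
  push_cast
  rw [hμ, mul_assoc, ← hi, inv_mul_cancel_left₀ hl'0, sub_self]

theorem eval_eq_zero_of_mem_residueMultiples {G : MvPolynomial ι ℤ}
    (hG : ∀ z : ℤ, MvPolynomial.eval (z • x) G = 0) {v : ι → ZMod p}
    (hv : v ∈ residueMultiples x p) :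
    MvPolynomial.eval v (MvPolynomial.map (Int.castRingHom (ZMod p)) G) = 0 := by
  obtain ⟨l, -, rfl⟩ := mem_image.1 hv
  have heq : (fun i => (l : ZMod p) * x i) = Int.castRingHom (ZMod p) ∘ ((l : ℤ) • x) := by
    ext i
    simp
  rw [heq, MvPolynomial.eval_map, ← MvPolynomial.eval₂_comp, hG, map_zero]

theorem mul_card_primeWindow_le (hP : 2 * m ≤ P) (hP0 : P ≠ 0) (hx : x ≠ 0) (hxm : ∀ i, |x i| ≤ m) :
    P * #(primeWindow P) ≤ 2 * #(pointIncidences P x) := by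
  rw [pointIncidences, card_sigma, mul_sum, mul_comm, ← smul_eq_mul]
  refine card_nsmul_le_sum _ _ _ fun p hp => ?_
  obtain ⟨⟨hPp, -⟩, hp⟩ := mem_primeWindow.1 hp
  rw [card_residueMultiples hp hx fun i => (hxm i).trans_lt (by lia)]
  have := hp.two_le
  lia

theorem fst_eq_of_mem_inter_pointIncidences (hP : 2 * m ≤ P) (hx : x ≠ 0) (hx' : x' ≠ 0)
    (hxm : ∀ i, |x i| ≤ m) (hxm' : ∀ i, |x' i| ≤ m)
    (hne : Submodule.span ℚ {ratVec x} ≠ Submodule.span ℚ {ratVec x'})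
    {t t' : Σ p : ℕ, ι → ZMod p} (ht : t ∈ pointIncidences P x ∧ t ∈ pointIncidences P x')
    (ht' : t' ∈ pointIncidences P x ∧ t' ∈ pointIncidences P x') : t.1 = t'.1 := by
  simp only [mem_pointIncidences] at ht ht'
  obtain ⟨⟨hPp, -⟩, hp⟩ := mem_primeWindow.1 ht.1.1
  obtain ⟨⟨hPp', -⟩, hp'⟩ := mem_primeWindow.1 ht'.1.1
  by_contra hpp'
  have hdvd := exists_dvd_sub_mul_of_isCoprime
    (Nat.isCoprime_iff_coprime.2 ((Nat.coprime_primes hp hp').2 hpp'))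
    (exists_dvd_sub_mul_of_mem_residueMultiples hp ht.1.2 ht.2.2)
    (exists_dvd_sub_mul_of_mem_residueMultiples hp' ht'.1.2 ht'.2.2)
  rw [← Nat.cast_mul] at hdvd
  have hheight := subspaceHeight_sup_span_mul_le hx hx' hne hxm hxm' hdvd
  have hpos := subspaceHeight_pos (Submodule.span ℚ {ratVec x} ⊔ Submodule.span ℚ {ratVec x'})
  have hm : 0 < m := by
    obtain ⟨i, hi⟩ := Function.ne_iff.1 hx
    exact_mod_cast (abs_pos.2 hi).trans_le (hxm i)
  have : (2 * m) * (2 * m) ≤ t.1 * t'.1 := Nat.mul_le_mul (hP.trans hPp) (hP.trans hPp')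
  nlinarith

theorem card_inter_pointIncidences_le (hP : 2 * m ≤ P) (hx : x ≠ 0) (hx' : x' ≠ 0)
    (hxm : ∀ i, |x i| ≤ m) (hxm' : ∀ i, |x' i| ≤ m)
    (hne : Submodule.span ℚ {ratVec x} ≠ Submodule.span ℚ {ratVec x'}) :
    #(pointIncidences P x ∩ pointIncidences P x') ≤ 4 * P := by
  rcases (pointIncidences P x ∩ pointIncidences P x').eq_empty_or_nonempty with h | ⟨t, ht⟩
  · simp [h]
  have hsub : pointIncidences P x ∩ pointIncidences P x' ⊆
      ({t.1} : Finset ℕ).sigma (residueMultiples x) := fun t' ht' => by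
    refine mem_sigma.2 ⟨mem_singleton.2 ?_, (mem_pointIncidences.1 (mem_inter.1 ht').1).2⟩
    exact fst_eq_of_mem_inter_pointIncidences hP hx hx' hxm hxm' hne (mem_inter.1 ht')
      (mem_inter.1 ht)
  refine (card_le_card hsub).trans ?_
  rw [card_sigma, sum_singleton]
  exact card_residueMultiples_le.trans
    (mem_primeWindow.1 (mem_pointIncidences.1 (mem_inter.1 ht).1).1).1.2

theorem subspaceHeight_sup_span_mul_le_of_inter_nonempty (hx : x ≠ 0) (hx' : x' ≠ 0)
    (hxm : ∀ i, |x i| ≤ m) (hxm' : ∀ i, |x' i| ≤ m)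
    (hne : Submodule.span ℚ {ratVec x} ≠ Submodule.span ℚ {ratVec x'})
    (hinter : (pointIncidences P x ∩ pointIncidences P x').Nonempty) :
    subspaceHeight (Submodule.span ℚ {ratVec x} ⊔ Submodule.span ℚ {ratVec x'}) * P ≤
      2 * (m * m) := by
  obtain ⟨t, ht⟩ := hinter
  simp only [mem_inter, mem_pointIncidences] at ht
  obtain ⟨⟨hPp, -⟩, hp⟩ := mem_primeWindow.1 ht.1.1
  exact (Nat.mul_le_mul_left _ hPp).trans (subspaceHeight_sup_span_mul_le hx hx' hne hxm hxm'
    (exists_dvd_sub_mul_of_mem_residueMultiples hp ht.1.2 ht.2.2))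

theorem card_biUnion_pointIncidences_le {n : ℕ} {F : MvPolynomial (Fin (n + 1)) ℤ} (hF : F ≠ 0)
    {α : Type*} {V : Finset α} {x : α → Fin (n + 1) → ℤ}
    (hx : ∀ a ∈ V, ∀ z : ℤ, MvPolynomial.eval (z • x a) F = 0) :
    #(V.biUnion fun a => pointIncidences P (x a)) ≤
      #(primeWindow P) * (F.totalDegree * (4 * P) ^ n) := by
  classical
  obtain ⟨c, G, hc, rfl, hG⟩ := exists_eq_C_mul_map_ne_zero hF
  have hGx : ∀ a ∈ V, ∀ z : ℤ, MvPolynomial.eval (z • x a) G = 0 := fun a ha z => by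
    have h := hx a ha z
    rw [map_mul, MvPolynomial.eval_C] at h
    exact (mul_eq_zero.1 h).resolve_left hc
  have hG0 : G ≠ 0 := right_ne_zero_of_mul hF
  rw [MvPolynomial.totalDegree_mul_of_isDomain (left_ne_zero_of_mul hF) hG0,
    MvPolynomial.totalDegree_C, zero_add]
  let T : (p : ℕ) → Finset (Fin (n + 1) → ZMod p) := fun p =>
    V.biUnion fun a => residueMultiples (x a) p
  have hsub : (V.biUnion fun a => pointIncidences P (x a)) ⊆ (primeWindow P).sigma T := by
    intro t ht
    obtain ⟨a, ha, ht⟩ := mem_biUnion.1 ht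
    exact mem_sigma.2 ⟨(mem_pointIncidences.1 ht).1,
      mem_biUnion.2 ⟨a, ha, (mem_pointIncidences.1 ht).2⟩⟩
  refine (card_le_card hsub).trans ?_
  rw [card_sigma, ← smul_eq_mul (a := #(primeWindow P))]
  refine sum_le_card_nsmul _ _ _ fun p hp => ?_
  obtain ⟨⟨-, hpP⟩, hp⟩ := mem_primeWindow.1 hp
  have := Fact.mk hp
  calc #(T p) ≤ #{v | MvPolynomial.eval v (MvPolynomial.map (Int.castRingHom (ZMod p)) G) = 0} := by
        refine card_le_card fun v hv => ?_
        obtain ⟨a, ha, hv⟩ := mem_biUnion.1 hv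
        exact mem_filter.2 ⟨mem_univ v, eval_eq_zero_of_mem_residueMultiples (hGx a ha) hv⟩
    _ ≤ (MvPolynomial.map (Int.castRingHom (ZMod p)) G).totalDegree *
          Fintype.card (ZMod p) ^ n := card_eval_eq_zero_le (hG p hp)
    _ ≤ G.totalDegree * (4 * P) ^ n := by
        rw [ZMod.card]
        gcongr
        exact sup_mono (MvPolynomial.support_map_subset _ _)

end Residue

section IsolatedPoints

variable [Fintype ι] {K m : ℕ} {F : MvPolynomial ι ℤ} {V : Finset (Submodule ℚ (ι → ℚ))}
  {x : Submodule ℚ (ι → ℚ) → ι → ℤ} {W : Submodule ℚ (ι → ℚ)}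

omit [Fintype ι] in
theorem VanishesOn.eval_zsmul_eq_zero (h : VanishesOn F W) {y : ι → ℤ}
    (hy : Submodule.span ℚ {ratVec y} = W) (z : ℤ) : MvPolynomial.eval (z • y) F = 0 := by
  have hyW : ratVec y ∈ W := hy ▸ Submodule.mem_span_singleton_self _
  have hzero := h _ (W.smul_mem (z : ℚ) hyW)
  rw [← ratVec_smul, aeval_ratVec] at hzero
  exact_mod_cast hzero

theorem card_incident_points_le (hK : 2 ≤ K) (hm : 1 ≤ m) (hV : ∀ W ∈ V, IsIsolated F 1 K m W)
    (hspan : ∀ W ∈ V, Submodule.span ℚ {ratVec (x W)} = W) (hx : ∀ W ∈ V, x W ≠ 0)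
    (hxm : ∀ W ∈ V, ∀ i, |x W i| ≤ m) (hW : W ∈ V) :
    #{W' ∈ V.erase W | (pointIncidences (K * m) (x W) ∩
      pointIncidences (K * m) (x W')).Nonempty} ≤
      F.totalDegree * (m * 9 ^ Fintype.card ι) := by
  have hWF := hV W hW
  refine (card_neighbours_le (ρ := 4) hWF.finrank_eq fun W' hW' => ?_).trans
    (Nat.mul_le_mul_left _ (Nat.mul_le_mul_right _ hWF.height_le))
  obtain ⟨hW', hinter⟩ := mem_filter.1 hW'
  obtain ⟨hne, hW'⟩ := mem_erase.1 hW'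
  have hspan_ne : Submodule.span ℚ {ratVec (x W)} ≠ Submodule.span ℚ {ratVec (x W')} := by
    rw [hspan W hW, hspan W' hW']
    exact hne.symm
  have hrank := finrank_sup_span_eq_two (hx W hW) (hx W' hW') hspan_ne
  have hheight := subspaceHeight_sup_span_mul_le_of_inter_nonempty (hx W hW) (hx W' hW')
    (hxm W hW) (hxm W' hW') hspan_ne hinter
  rw [hspan W hW, hspan W' hW'] at hrank hheight
  have hsmall : subspaceHeight (W ⊔ W') * K ≤ 2 * m := by
    refine Nat.le_of_mul_le_mul_right ?_ hm
    linarith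
  refine ⟨(hV W' hW').finrank_eq, (hV W' hW').vanishesOn, hrank, ?_,
    hWF.not_vanishesOn _ le_sup_left hrank hsmall⟩
  have := hWF.le_two_mul_height
  have := Nat.mul_le_mul_left (subspaceHeight (W ⊔ W')) hK
  lia

theorem sum_card_inter_pointIncidences_le (hK : 2 ≤ K) (hm : 1 ≤ m)
    (hV : ∀ W ∈ V, IsIsolated F 1 K m W)
    (hspan : ∀ W ∈ V, Submodule.span ℚ {ratVec (x W)} = W) (hx : ∀ W ∈ V, x W ≠ 0)
    (hxm : ∀ W ∈ V, ∀ i, |x W i| ≤ m) (hW : W ∈ V) :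
    ∑ W' ∈ V.erase W, #(pointIncidences (K * m) (x W) ∩ pointIncidences (K * m) (x W')) ≤
      F.totalDegree * (m * 9 ^ Fintype.card ι) * (4 * (K * m)) := by
  rw [← sum_filter_of_ne fun W' _ h => card_pos.1 (Nat.pos_of_ne_zero h)]
  refine (sum_le_card_nsmul _ _ (4 * (K * m)) fun W' hW' => ?_).trans
    (Nat.mul_le_mul_right _ (card_incident_points_le hK hm hV hspan hx hxm hW))
  obtain ⟨hne, hW'⟩ := mem_erase.1 (mem_filter.1 hW').1
  refine card_inter_pointIncidences_le (Nat.mul_le_mul_right m hK) (hx W hW) (hx W' hW')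
    (hxm W hW) (hxm W' hW') ?_
  rw [hspan W hW, hspan W' hW']
  exact hne.symm

theorem card_mul_le_of_isIsolated_one {n : ℕ} {F : MvPolynomial (Fin (n + 1)) ℤ} (hF : F ≠ 0)
    (hK : 2 ≤ K) (hm : 1 ≤ m) {V : Finset (Submodule ℚ (Fin (n + 1) → ℚ))}
    (hV : ∀ W ∈ V, IsIsolated F 1 K m W) {E : ℕ}
    (hE : 8 * F.totalDegree * 9 ^ (n + 1) * m ≤ E * #(primeWindow (K * m))) :
    #V * (K * m) ≤ 2 * (1 + E) * F.totalDegree * (4 * (K * m)) ^ n := by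
  choose! x hspan hx hxH using fun W (hW : W ∈ V) =>
    exists_span_eq_of_finrank_eq_one (hV W hW).finrank_eq
  have hxm : ∀ W ∈ V, ∀ i, |x W i| ≤ m := fun W hW i =>
    (hxH W hW i).trans (mod_cast (hV W hW).height_le)
  have hP0 : K * m ≠ 0 := by positivity
  have hinc : ∀ W ∈ V, K * m * #(primeWindow (K * m)) ≤ 2 * #(pointIncidences (K * m) (x W)) :=
    fun W hW => mul_card_primeWindow_le (Nat.mul_le_mul_right m hK) hP0 (hx W hW) (hxm W hW)
  have hinter : ∀ W ∈ V, ∑ W' ∈ V.erase W,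
      #(pointIncidences (K * m) (x W) ∩ pointIncidences (K * m) (x W')) ≤
        E * #(pointIncidences (K * m) (x W)) := fun W hW => by
    have hsum := sum_card_inter_pointIncidences_le hK hm hV hspan hx hxm hW
    rw [Fintype.card_fin] at hsum
    have := Nat.mul_le_mul_right (K * m) hE
    have := Nat.mul_le_mul_left E (hinc W hW)
    linarith
  have hunion := card_biUnion_pointIncidences_le (P := K * m) hF
    fun W hW => (hV W hW).vanishesOn.eval_zsmul_eq_zero (hspan W hW)
  have hsum := card_nsmul_le_sum _ _ _ hinc
  rw [← mul_sum, smul_eq_mul] at hsum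
  refine Nat.le_of_mul_le_mul_right ?_ (one_le_card_primeWindow (Nat.pos_of_ne_zero hP0))
  calc #V * (K * m) * #(primeWindow (K * m)) = #V * (K * m * #(primeWindow (K * m))) :=
        mul_assoc _ _ _
    _ ≤ 2 * ((1 + E) * (#(primeWindow (K * m)) * (F.totalDegree * (4 * (K * m)) ^ n))) :=
        hsum.trans (Nat.mul_le_mul_left 2 ((sum_card_le_mul_card_biUnion hinter).trans
          (Nat.mul_le_mul_left _ hunion)))
    _ = 2 * (1 + E) * F.totalDegree * (4 * (K * m)) ^ n * #(primeWindow (K * m)) := by ring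

end IsolatedPoints

/-! ### Dyadic summation -/

section Dyadic

theorem dyadic_induction {p : ℝ → Prop} (small : ∀ D < 1, p D)
    (step : ∀ D, 1 ≤ D → (∀ D' ≤ D / 2, p D') → p D) (D : ℝ) : p D := by
  suffices h : ∀ k : ℕ, ∀ D < (2 : ℝ) ^ k, p D by
    obtain ⟨k, hk⟩ := pow_unbounded_of_one_lt D one_lt_two
    exact h k D hk
  intro k
  induction k with
  | zero => simpa using small
  | succ k ih =>
    intro D hD
    rcases lt_or_ge D 1 with hD1 | hD1
    · exact small D hD1
    · refine step D hD1 fun D' hD' => ih D' ?_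
      rw [pow_succ] at hD
      linarith

variable {α : Type*} {S : Finset α} {h : α → ℝ} {C r a D D₀ : ℝ}

theorem sum_dyadic_rpow_neg_le (hr : 0 ≤ r) (hD : 0 < D)
    (hcount : #{i ∈ S | h i ≤ D} ≤ C * D ^ (r + a)) :
    ∑ i ∈ S with h i ≤ D ∧ ¬h i ≤ D / 2, h i ^ (-r) ≤ C * 2 ^ r * D ^ a := by
  calc ∑ i ∈ S with h i ≤ D ∧ ¬h i ≤ D / 2, h i ^ (-r)
      ≤ #{i ∈ S | h i ≤ D ∧ ¬h i ≤ D / 2} • (D / 2) ^ (-r) := by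
        refine sum_le_card_nsmul _ _ _ fun i hi => ?_
        exact Real.rpow_le_rpow_of_nonpos (by positivity) (not_le.1 (mem_filter.1 hi).2.2).le
          (by linarith)
    _ ≤ C * D ^ (r + a) * (D / 2) ^ (-r) := by
        rw [nsmul_eq_mul]
        gcongr
        refine le_trans (Nat.cast_le.2 (card_le_card fun i hi => ?_)) hcount
        simp only [mem_filter] at hi ⊢
        exact ⟨hi.1, hi.2.1⟩
    _ = C * 2 ^ r * D ^ a := by
        rw [Real.div_rpow hD.le zero_le_two, Real.rpow_add hD, Real.rpow_neg hD.le,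
          Real.rpow_neg zero_le_two]
        field_simp

theorem two_rpow_neg_lt_one (ha : 0 < a) : (2 : ℝ) ^ (-a) < 1 :=
  Real.rpow_lt_one_of_one_lt_of_neg one_lt_two (neg_neg_of_pos ha)

theorem sum_rpow_neg_le_of_card_le (h1 : ∀ i ∈ S, 1 ≤ h i) (ha : 0 < a) (hr : 0 ≤ r) (hC : 0 ≤ C)
    (hcount : ∀ D, 0 < D → D ≤ D₀ → #{i ∈ S | h i ≤ D} ≤ C * D ^ (r + a)) (hD : 0 < D)
    (hDD₀ : D ≤ D₀) :
    ∑ i ∈ S with h i ≤ D, h i ^ (-r) ≤ C * (2 ^ r / (1 - 2 ^ (-a))) * D ^ a := by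
  have h2a := sub_pos.2 (two_rpow_neg_lt_one ha)
  induction D using dyadic_induction with
  | small D hD1 =>
    rw [filter_false_of_mem fun i hi hle => (hD1.trans_le (h1 i hi)).not_ge hle, sum_empty]
    positivity
  | step D hD1 ih =>
    have hhalf : ({i ∈ S | h i ≤ D ∧ h i ≤ D / 2} : Finset α) = {i ∈ S | h i ≤ D / 2} :=
      filter_congr fun i _ => and_iff_right_of_imp fun hi => by linarith
    rw [← sum_filter_add_sum_filter_not _ fun i => h i ≤ D / 2, filter_filter, filter_filter, hhalf]
    calc _ ≤ C * (2 ^ r / (1 - 2 ^ (-a))) * (D / 2) ^ a + C * 2 ^ r * D ^ a :=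
          add_le_add (ih _ le_rfl (by positivity) (by linarith))
            (sum_dyadic_rpow_neg_le hr hD (hcount D hD hDD₀))
      _ = C * (2 ^ r / (1 - 2 ^ (-a))) * D ^ a := by
        rw [Real.div_rpow hD.le zero_le_two, div_eq_mul_inv _ ((2 : ℝ) ^ a),
          ← Real.rpow_neg zero_le_two]
        field_simp
        ring

end Dyadic

section CountBound

variable [Fintype ι] {F : MvPolynomial ι ℤ} {r : ℕ} {e a M D Δ Δ' K : ℝ}

/-- At most `M * D ^ e` subspaces of rank `r` and height at most `D` are contained in `F = 0`, for
every `D` up to `Δ`. -/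
def CountBound (F : MvPolynomial ι ℤ) (r : ℕ) (e M Δ : ℝ) : Prop :=
  ∀ D, 0 < D → D ≤ Δ → ∀ U : Finset (Submodule ℚ (ι → ℚ)),
    (∀ W ∈ U, finrank ℚ W = r ∧ VanishesOn F W ∧ subspaceHeight W ≤ D) → #U ≤ M * D ^ e

theorem CountBound.mono (h : CountBound F r e M Δ) (hle : Δ' ≤ Δ) : CountBound F r e M Δ' :=
  fun D hD hDΔ => h D hD (hDΔ.trans hle)

theorem CountBound.of_half (hM : 0 ≤ M) (he : 1 ≤ e)
    (step : ∀ D, 1 ≤ D → D ≤ Δ → CountBound F r e M (D / 2) →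
      ∀ U : Finset (Submodule ℚ (ι → ℚ)), (∀ W ∈ U, finrank ℚ W = r ∧ VanishesOn F W ∧
        D / 2 < subspaceHeight W ∧ subspaceHeight W ≤ D) → #U ≤ M * D ^ e / 2) :
    CountBound F r e M Δ := by
  intro D
  induction D using dyadic_induction with
  | small D hD1 =>
    intro hD _ U hU
    have : U = ∅ := eq_empty_of_forall_notMem fun W hW => by
      have hpos : (1 : ℝ) ≤ subspaceHeight W := mod_cast subspaceHeight_pos W
      linarith [(hU W hW).2.2]
    rw [this, card_empty, Nat.cast_zero]
    positivity
  | step D hD1 ih =>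
    intro hD hDΔ U hU
    have hhalf : CountBound F r e M (D / 2) := fun D' hD' hD'D =>
      ih D' hD'D hD' (by linarith)
    have hlow := hhalf (D / 2) (by positivity) le_rfl
      {W ∈ U | (subspaceHeight W : ℝ) ≤ D / 2} fun W hW => by
        obtain ⟨hW, hle⟩ := mem_filter.1 hW
        exact ⟨(hU W hW).1, (hU W hW).2.1, hle⟩
    have hhigh := step D hD1 hDΔ hhalf {W ∈ U | ¬(subspaceHeight W : ℝ) ≤ D / 2} fun W hW => by
      obtain ⟨hW, hlt⟩ := mem_filter.1 hW
      exact ⟨(hU W hW).1, (hU W hW).2.1, not_le.1 hlt, (hU W hW).2.2⟩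
    have hpow : M * (D / 2) ^ e ≤ M * D ^ e / 2 := by
      rw [Real.div_rpow hD.le zero_le_two, mul_div_assoc]
      gcongr
      exact Real.self_le_rpow_of_one_le one_le_two he
    rw [← card_filter_add_card_filter_not fun W => (subspaceHeight W : ℝ) ≤ D / 2]
    push_cast
    linarith

theorem CountBound.sum_rpow_neg_le {s : ℝ} (hb : CountBound F r (s + a) M Δ) (ha : 0 < a)
    (hs : 0 ≤ s) (hM : 0 ≤ M) (hΔ : 0 < Δ) {V : Finset (Submodule ℚ (ι → ℚ))}
    (hV : ∀ W ∈ V, finrank ℚ W = r ∧ VanishesOn F W ∧ subspaceHeight W ≤ Δ) :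
    ∑ W ∈ V, (subspaceHeight W : ℝ) ^ (-s) ≤ M * (2 ^ s / (1 - 2 ^ (-a))) * Δ ^ a := by
  have h := sum_rpow_neg_le_of_card_le (h := fun W => (subspaceHeight W : ℝ))
    (fun W (_ : W ∈ V) => mod_cast subspaceHeight_pos W) ha hs hM
    (fun D hD hDΔ => hb D hD hDΔ _ fun W hW => by
      obtain ⟨hW, hle⟩ := mem_filter.1 hW
      exact ⟨(hV W hW).1, (hV W hW).2.1, hle⟩) hΔ le_rfl
  rwa [filter_true_of_mem fun W hW => (hV W hW).2.2] at h

theorem card_hyperplanes_le_rpow {T : Submodule ℚ (ι → ℚ)} (hT : finrank ℚ T = r + 1)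
    (hTD : subspaceHeight T ≤ D) {S : Finset (Submodule ℚ (ι → ℚ))}
    (hS : ∀ Θ ∈ S, Θ ≤ T ∧ finrank ℚ Θ = r ∧ subspaceHeight Θ ≤ D) :
    #S ≤ 4 ^ (r + 1) * D ^ (r + 1) * (subspaceHeight T : ℝ) ^ (-(r : ℝ)) := by
  have hT0 : (0 : ℝ) < subspaceHeight T := mod_cast subspaceHeight_pos T
  have hD : 0 ≤ D := hT0.le.trans hTD
  have hcard := card_hyperplanes_le hT (Z := ⌊D⌋₊) fun Θ hΘ =>
    ⟨(hS Θ hΘ).1, (hS Θ hΘ).2.1, Nat.le_floor (hS Θ hΘ).2.2⟩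
  have hfactor : 2 * ((⌊D⌋₊ / subspaceHeight T : ℕ) + 1 : ℝ) ≤ 4 * D / subspaceHeight T := by
    have hdiv : ((⌊D⌋₊ / subspaceHeight T : ℕ) : ℝ) ≤ D / subspaceHeight T :=
      Nat.cast_div_le.trans (by gcongr; exact Nat.floor_le hD)
    have hone : 1 ≤ D / subspaceHeight T := (one_le_div hT0).2 hTD
    rw [mul_div_assoc]
    linarith
  calc (#S : ℝ) ≤ subspaceHeight T *
        (2 * ((⌊D⌋₊ / subspaceHeight T : ℕ) + 1 : ℝ)) ^ (r + 1) := mod_cast hcard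
    _ ≤ subspaceHeight T * (4 * D / subspaceHeight T) ^ (r + 1) := by gcongr
    _ = 4 ^ (r + 1) * D ^ (r + 1) * (subspaceHeight T : ℝ) ^ (-(r : ℝ)) := by
      rw [Real.rpow_neg hT0.le, Real.rpow_natCast, div_pow, mul_pow,
        pow_succ (subspaceHeight T : ℝ) r]
      field_simp

/-- The constant in the bound for the subspaces of rank `r` lying in a subspace of `F = 0` of rank
`r + 1` and small height, when the latter are counted with exponent `r + a`. -/
def exceptionalConst (r : ℕ) (a : ℝ) : ℝ :=
  4 ^ (r + 1) * (2 ^ (r : ℝ) / (1 - 2 ^ (-a))) * ((r + 1) * r) ^ a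

theorem exceptionalConst_nonneg (r : ℕ) (ha : 0 < a) : 0 ≤ exceptionalConst r a := by
  have := sub_pos.2 (two_rpow_neg_lt_one ha)
  unfold exceptionalConst
  positivity

theorem CountBound.card_le_of_exists_le (ha : 0 < a) (hM : 0 ≤ M) (hD : 0 < D) (hr : 1 ≤ r)
    (hK : ((r : ℝ) + 1) * r ≤ K) (hb : CountBound F (r + 1) (r + a) M ((r + 1) * r * D / K))
    {V : Finset (Submodule ℚ (ι → ℚ))}
    (hV : ∀ W ∈ V, finrank ℚ W = r ∧ subspaceHeight W ≤ D ∧ ∃ S, W ≤ S ∧ finrank ℚ S = r + 1 ∧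
      VanishesOn F S ∧ subspaceHeight S ≤ (r + 1) * r * D / K) :
    #V ≤ exceptionalConst r a * M * K ^ (-a) * D ^ (r + 1 + a) := by
  classical
  choose! S hle hrank hvanish hheight using fun W hW => (hV W hW).2.2
  have hr0 : (0 : ℝ) < (r + 1) * r := by positivity
  have hK0 : 0 < K := hr0.trans_le hK
  have hDK : (r + 1) * r * D / K ≤ D := by
    rw [div_le_iff₀ hK0, mul_comm D]
    gcongr
  have hsum := hb.sum_rpow_neg_le (V := V.image S) ha (Nat.cast_nonneg r) hM (by positivity)
    (forall_mem_image.2 fun W hW => ⟨hrank W hW, hvanish W hW, hheight W hW⟩)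
  have hfibre : ∀ T ∈ V.image S, (#{W ∈ V | S W = T} : ℝ) ≤
      4 ^ (r + 1) * D ^ (r + 1) * (subspaceHeight T : ℝ) ^ (-(r : ℝ)) :=
    forall_mem_image.2 fun W hW =>
      card_hyperplanes_le_rpow (hrank W hW) ((hheight W hW).trans hDK) fun W' hW' => by
        obtain ⟨hW', heq⟩ := mem_filter.1 hW'
        exact ⟨heq ▸ hle W' hW', (hV W' hW').1, (hV W' hW').2.1⟩
  calc (#V : ℝ) = ∑ T ∈ V.image S, (#{W ∈ V | S W = T} : ℝ) :=
        mod_cast card_eq_sum_card_image S V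
    _ ≤ 4 ^ (r + 1) * D ^ (r + 1) * ∑ T ∈ V.image S, (subspaceHeight T : ℝ) ^ (-(r : ℝ)) := by
        rw [mul_sum]
        exact sum_le_sum hfibre
    _ ≤ 4 ^ (r + 1) * D ^ (r + 1) *
          (M * (2 ^ (r : ℝ) / (1 - 2 ^ (-a))) * ((r + 1) * r * D / K) ^ a) := by gcongr
    _ = exceptionalConst r a * M * K ^ (-a) * D ^ (r + 1 + a) := by
        have hpow : D ^ ((r : ℝ) + 1) = D ^ (r + 1) := by exact_mod_cast Real.rpow_natCast D (r + 1)
        rw [Real.div_rpow (by positivity) hK0.le, Real.mul_rpow hr0.le hD.le, Real.rpow_neg hK0.le,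
          Real.rpow_add hD, hpow, exceptionalConst]
        ring

end CountBound

/-! ### Induction on the dimension -/

section Induction

variable {n d r q K : ℕ} {ε : ℝ}

/-- The forms of degree at most `d` to which the induction applies: all that is used of the
non-singularity is the resulting bound on the dimension of the subspaces of `F = 0`. -/
structure IsAdmissible (n d : ℕ) (F : MvPolynomial (Fin (n + 1)) ℤ) : Prop where
  ne_zero : F ≠ 0
  totalDegree_le : F.totalDegree ≤ d
  two_mul_finrank_le : ∀ W : Submodule ℚ (Fin (n + 1) → ℚ), VanishesOn F W →
    2 * finrank ℚ W ≤ n + 1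

/-- A bound for the number of subspaces of rank `r` up to height `c * Δ` yields one for rank `r + 1`
up to height `Δ`, with the exponent expected in each rank and uniformly over admissible forms. -/
def StepBound (n d : ℕ) (ε : ℝ) (r : ℕ) : Prop :=
  ∃ C c : ℝ, 0 < C ∧ 1 ≤ c ∧ ∀ F, IsAdmissible n d F → ∀ M Δ : ℝ, 0 < M → 0 < Δ →
    CountBound F r (n - r + ε) M (c * Δ) →
      CountBound F (r + 1) (n - (r + 1 : ℕ) + ε) (C * M) Δ

theorem stepBound_of_lt (h : n + 1 < 2 * (r + 1)) : StepBound n d ε r := by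
  refine ⟨1, 1, one_pos, le_rfl, fun F hF M Δ hM _ _ D hD _ U hU => ?_⟩
  have : U = ∅ := eq_empty_of_forall_notMem fun W hW => by
    have := hF.two_mul_finrank_le W (hU W hW).2.1
    have := (hU W hW).1
    lia
  rw [this, card_empty, Nat.cast_zero]
  positivity

theorem exists_nat_mul_rpow_neg_le (hε : 0 < ε) (A B : ℝ) :
    ∃ K : ℕ, 2 ≤ K ∧ A ≤ K ∧ B * (K : ℝ) ^ (-ε) ≤ 1 / 4 := by
  have hlim : Filter.Tendsto (fun K : ℕ => B * (K : ℝ) ^ (-ε)) Filter.atTop (nhds (B * 0)) :=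
    ((tendsto_rpow_neg_atTop hε).comp tendsto_natCast_atTop_atTop).const_mul B
  have hsmall := hlim.eventually (eventually_le_nhds (b := 1 / 4) (by norm_num))
  obtain ⟨K, hK⟩ := ((Filter.eventually_ge_atTop 2).and
    ((tendsto_natCast_atTop_atTop.eventually (Filter.eventually_ge_atTop A)).and hsmall)).exists
  exact ⟨K, hK⟩

/-- `W` lies in a subspace of rank `r + 1` on which `F` vanishes and whose height is small compared
with the size `D` of the height of `W`: the alternative to `IsIsolated`. -/
def LiesInLowSubspace (F : MvPolynomial (Fin (n + 1)) ℤ) (r K : ℕ) (D : ℝ)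
    (W : Submodule ℚ (Fin (n + 1) → ℚ)) : Prop :=
  ∃ S, W ≤ S ∧ finrank ℚ S = r + 1 ∧ VanishesOn F S ∧ subspaceHeight S ≤ (r + 1) * r * D / K

theorem CountBound.card_le_quarter {F : MvPolynomial (Fin (n + 1)) ℤ}
    (hF : ∀ W : Submodule ℚ (Fin (n + 1) → ℚ), VanishesOn F W → 2 * finrank ℚ W ≤ n + 1)
    (hε : 0 < ε) (hr : 1 ≤ r) {M C Δ D : ℝ} (hM : 0 < M) (hC : 0 < C) (hD : 0 < D) (hK1 : 1 ≤ K)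
    (hK : ((r : ℝ) + 1) * r ≤ K) (hKΔ : (r + 1) * r * D / K ≤ Δ)
    (hKε : exceptionalConst r (n - 2 * r - 1 + ε) * C * (K : ℝ) ^ (-ε) ≤ 1 / 4)
    (hb : CountBound F (r + 1) (n - (r + 1 : ℕ) + ε) (C * M) Δ)
    {V : Finset (Submodule ℚ (Fin (n + 1) → ℚ))}
    (hV : ∀ W ∈ V, finrank ℚ W = r ∧ subspaceHeight W ≤ D ∧ LiesInLowSubspace F r K D W) :
    #V ≤ M * D ^ (n - r + ε) / 4 := by
  rcases V.eq_empty_or_nonempty with rfl | ⟨W, hW⟩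
  · rw [card_empty, Nat.cast_zero]
    positivity
  obtain ⟨S, -, hS, hFS, -⟩ := (hV W hW).2.2
  have hrn : 2 * ((r : ℝ) + 1) ≤ n + 1 := by exact_mod_cast hS ▸ hF S hFS
  set a : ℝ := n - 2 * r - 1 + ε with ha_def
  have hεa : ε ≤ a := by linarith
  have hexp : (n : ℝ) - (r + 1 : ℕ) + ε = r + a := by
    rw [ha_def]
    push_cast
    ring
  rw [hexp] at hb
  have hcard := (hb.mono hKΔ).card_le_of_exists_le (hε.trans_le hεa) (by positivity) hD hr hK hV
  have hconst := exceptionalConst_nonneg r (hε.trans_le hεa)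
  have hK1' : (1 : ℝ) ≤ K := mod_cast hK1
  calc (#V : ℝ) ≤ exceptionalConst r a * (C * M) * (K : ℝ) ^ (-a) * D ^ (r + 1 + a) := hcard
    _ ≤ exceptionalConst r a * (C * M) * (K : ℝ) ^ (-ε) * D ^ (r + 1 + a) := by gcongr
    _ = exceptionalConst r a * C * (K : ℝ) ^ (-ε) * (M * D ^ (r + 1 + a)) := by ring
    _ ≤ 1 / 4 * (M * D ^ (r + 1 + a)) := by gcongr
    _ = M * D ^ (n - r + ε) / 4 := by
      rw [ha_def]
      ring_nf

theorem isIsolated_floor {F : MvPolynomial (Fin (n + 1)) ℤ} {D : ℝ} (hD : 0 ≤ D) (hK : 1 ≤ K)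
    {W : Submodule ℚ (Fin (n + 1) → ℚ)} (hrank : finrank ℚ W = r) (hFW : VanishesOn F W)
    (hlt : D < 2 * subspaceHeight W) (hle : subspaceHeight W ≤ D)
    (hW : ¬LiesInLowSubspace F r K D W) : IsIsolated F r K ⌊D⌋₊ W := by
  have hfloor : (⌊D⌋₊ : ℝ) ≤ D := Nat.floor_le hD
  refine ⟨hrank, hFW, Nat.le_floor hle, ?_, fun S hWS hS hheight hFS => hW ⟨S, hWS, hS, hFS, ?_⟩⟩
  · have : (⌊D⌋₊ : ℝ) ≤ 2 * subspaceHeight W := by linarith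
    exact_mod_cast this
  · rw [le_div_iff₀ (by positivity)]
    have : (subspaceHeight S : ℝ) * K ≤ (r + 1) * r * ⌊D⌋₊ := mod_cast hheight
    exact this.trans (by gcongr)

theorem StepBound.exists_forall_countBound (h : StepBound n d ε r) (hε : 0 < ε) (hr : 1 ≤ r)
    (hrn : r + 1 ≤ n) :
    ∃ K : ℕ, 2 ≤ K ∧ ∀ F, IsAdmissible n d F → ∀ M Δ : ℝ, 0 < M →
      (∀ m : ℕ, 1 ≤ m → m ≤ Δ → ∀ V : Finset (Submodule ℚ (Fin (n + 1) → ℚ)),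
        (∀ W ∈ V, IsIsolated F r K m W) → #V ≤ M / 4 * (m : ℝ) ^ (n - r + ε)) →
      CountBound F r (n - r + ε) M Δ := by
  classical
  obtain ⟨C, c, hC, hc, hstep⟩ := h
  obtain ⟨K, hK2, hKc, hKε⟩ := exists_nat_mul_rpow_neg_le hε (2 * c * ((r + 1) * r))
    (exceptionalConst r (n - 2 * r - 1 + ε) * C)
  refine ⟨K, hK2, fun F hF M Δ hM hisol => ?_⟩
  have he : 1 ≤ (n : ℝ) - r + ε := by
    have : (r : ℝ) + 1 ≤ n := mod_cast hrn
    linarith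
  refine CountBound.of_half hM.le he fun D hD1 hDΔ hhalf U hU => ?_
  have hD : 0 < D := one_pos.trans_le hD1
  have hfloor : (⌊D⌋₊ : ℝ) ≤ D := Nat.floor_le hD.le
  have hlow : #{W ∈ U | LiesInLowSubspace F r K D W} ≤ M * D ^ (n - r + ε) / 4 := by
    refine CountBound.card_le_quarter (Δ := D / (2 * c)) hF.two_mul_finrank_le hε hr hM hC hD
      (by lia) ?_ ?_ hKε (hstep F hF M _ hM (by positivity) (hhalf.mono ?_)) fun W hW => ?_
    · refine le_trans ?_ hKc
      exact le_mul_of_one_le_left (by positivity) (by linarith)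
    · rw [div_le_div_iff₀ (by positivity) (by positivity)]
      nlinarith
    · field_simp
      rfl
    · obtain ⟨hW, hS⟩ := mem_filter.1 hW
      exact ⟨(hU W hW).1, (hU W hW).2.2.2, hS⟩
  have hisolated : #{W ∈ U | ¬LiesInLowSubspace F r K D W} ≤
      M / 4 * (⌊D⌋₊ : ℝ) ^ (n - r + ε) := by
    refine hisol _ (Nat.le_floor (by simpa using hD1)) (hfloor.trans hDΔ) _ fun W hW => ?_
    obtain ⟨hW, hnot⟩ := mem_filter.1 hW
    obtain ⟨hrank, hvanish, hlt, hle⟩ := hU W hW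
    exact isIsolated_floor hD.le (by lia) hrank hvanish (by linarith) hle hnot
  have hpow : M / 4 * (⌊D⌋₊ : ℝ) ^ (n - r + ε) ≤ M / 4 * D ^ (n - r + ε) := by gcongr
  rw [← card_filter_add_card_filter_not (LiesInLowSubspace F r K D)]
  push_cast
  linarith

theorem exists_card_le_of_isIsolated_of_countBound (n d : ℕ) (ε : ℝ) (hq : 1 ≤ q) (hK : 1 ≤ K) :
    ∃ C c : ℝ, 0 < C ∧ 1 ≤ c ∧ ∀ F, IsAdmissible n d F → ∀ M Δ : ℝ, 0 < M →
      CountBound F q (n - q + ε) M (c * Δ) → ∀ m : ℕ, 1 ≤ m → m ≤ Δ →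
      ∀ V : Finset (Submodule ℚ (Fin (n + 1) → ℚ)), (∀ W ∈ V, IsIsolated F (q + 1) K m W) →
        #V ≤ C * M * (m : ℝ) ^ (n - (q + 1 : ℕ) + ε) := by
  let c : ℕ := (q + 1) ^ q * (3 * K)
  let N : ℕ := (2 * (2 * ((q + 2) * (q + 1))) + 1) ^ (n + 1)
  have hc : 1 ≤ c := Nat.one_le_iff_ne_zero.2 (by positivity)
  refine ⟨2 * (1 + d * N) * (c : ℝ) ^ (n - q + ε), c, by positivity, mod_cast hc,
    fun F hF M Δ hM hb m hm hmΔ V hV => ?_⟩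
  have hm0 : (0 : ℝ) < m := mod_cast hm
  set L : ℝ := M * ((c : ℝ) * m) ^ (n - q + ε) with hL
  have hcount := card_mul_le_of_isIsolated hq hK (L := ⌊L⌋₊) hV fun U hU => by
    refine Nat.le_floor (hb _ (by positivity) (by gcongr) U fun Θ hΘ => ?_)
    refine ⟨(hU Θ hΘ).1, (hU Θ hΘ).2.1, (Nat.cast_le.2 (hU Θ hΘ).2.2).trans_eq ?_⟩
    push_cast [c]
    ring
  rw [Fintype.card_fin] at hcount
  refine le_of_mul_le_mul_right ?_ hm0
  calc (#V : ℝ) * m ≤ 2 * ((1 + F.totalDegree * N) * ⌊L⌋₊) := mod_cast hcount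
    _ ≤ 2 * ((1 + d * N) * L) := by
      gcongr
      · exact hF.totalDegree_le
      · exact Nat.floor_le (by positivity)
    _ = 2 * (1 + d * N) * (c : ℝ) ^ (n - q + ε) * M * ((m : ℝ) ^ (n - (q + 1 : ℕ) + ε) * m) := by
      rw [hL, Real.mul_rpow (by positivity) hm0.le, ← Real.rpow_add_one hm0.ne']
      push_cast
      ring_nf
    _ = _ := by ring

theorem StepBound.of_succ (hε : 0 < ε) (hq : 1 ≤ q) (hqn : q + 2 ≤ n)
    (h : StepBound n d ε (q + 1)) : StepBound n d ε q := by
  obtain ⟨K, hK, hcount⟩ := h.exists_forall_countBound hε (by lia) (by lia)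
  obtain ⟨C, c, hC, hc, hisol⟩ :=
    exists_card_le_of_isIsolated_of_countBound n d ε hq (one_le_two.trans hK)
  refine ⟨4 * C, c, by positivity, hc, fun F hF M Δ hM _ hb => ?_⟩
  refine hcount F hF _ _ (by positivity) fun m hm hmΔ V hV => ?_
  exact (hisol F hF M Δ hM hb m hm hmΔ V hV).trans_eq (by ring)

theorem stepBound (n d : ℕ) (hε : 0 < ε) : ∀ q, 1 ≤ q → StepBound n d ε q := fun q hq => by
  obtain hlt | hle := lt_or_ge (n + 1) (2 * (q + 1))
  · exact stepBound_of_lt hlt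
  · exact (stepBound n d hε (q + 1) (by lia)).of_succ hε hq (by lia)
termination_by q => n - q

theorem card_mul_le_of_isIsolated_one_of_rpow_le {A : ℝ} (hA : 0 ≤ A) (hε : 0 ≤ ε) (hK : 2 ≤ K)
    {F : MvPolynomial (Fin (n + 1)) ℤ} (hF : IsAdmissible n d F) {m : ℕ} (hm : 1 ≤ m)
    (hprimes : 8 * d * 9 ^ (n + 1) * m ≤ A * ((K * m : ℕ) : ℝ) ^ ε * #(primeWindow (K * m)))
    {V : Finset (Submodule ℚ (Fin (n + 1) → ℚ))} (hV : ∀ W ∈ V, IsIsolated F 1 K m W) :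
    (#V : ℝ) * (K * m : ℕ) ≤
      2 * ((2 + A) * ((K * m : ℕ) : ℝ) ^ ε) * d * (4 * (K * m : ℕ)) ^ n := by
  set E : ℕ := ⌈A * ((K * m : ℕ) : ℝ) ^ ε⌉₊
  have hE : (8 : ℝ) * F.totalDegree * 9 ^ (n + 1) * m ≤ E * #(primeWindow (K * m)) :=
    calc (8 : ℝ) * F.totalDegree * 9 ^ (n + 1) * m ≤ 8 * d * 9 ^ (n + 1) * m := by
          gcongr
          exact hF.totalDegree_le
      _ ≤ A * ((K * m : ℕ) : ℝ) ^ ε * #(primeWindow (K * m)) := hprimes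
      _ ≤ E * #(primeWindow (K * m)) := by
          gcongr
          exact Nat.le_ceil _
  have hcount := card_mul_le_of_isIsolated_one hF.ne_zero hK hm hV (mod_cast hE)
  have hP : 1 ≤ K * m := Nat.mul_pos (by lia) hm
  have hE' : (1 + E : ℝ) ≤ (2 + A) * ((K * m : ℕ) : ℝ) ^ ε := by
    have := Nat.ceil_lt_add_one (a := A * ((K * m : ℕ) : ℝ) ^ ε) (by positivity)
    have := Real.one_le_rpow (Nat.one_le_cast.2 hP) hε
    linarith
  calc (#V : ℝ) * (K * m : ℕ)
      ≤ 2 * (1 + E) * F.totalDegree * (4 * (K * m : ℕ)) ^ n := mod_cast hcount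
    _ ≤ 2 * ((2 + A) * ((K * m : ℕ) : ℝ) ^ ε) * d * (4 * (K * m : ℕ)) ^ n := by
      gcongr
      exact hF.totalDegree_le

theorem exists_card_le_of_isIsolated_one (n d : ℕ) (hε : 0 < ε) (hK : 2 ≤ K) :
    ∃ C : ℝ, 0 ≤ C ∧ ∀ F, IsAdmissible n d F → ∀ m : ℕ, 1 ≤ m →
      ∀ V : Finset (Submodule ℚ (Fin (n + 1) → ℚ)), (∀ W ∈ V, IsIsolated F 1 K m W) →
        #V ≤ C * (m : ℝ) ^ (n - (1 : ℕ) + ε) := by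
  obtain ⟨C₀, hC₀, hprimes⟩ := exists_le_mul_card_primeWindow hε
  let A : ℝ := 8 * d * 9 ^ (n + 1) * C₀
  refine ⟨2 * (2 + A) * d * 4 ^ n * (K : ℝ) ^ (n - (1 : ℕ) + ε), by positivity,
    fun F hF m hm V hV => ?_⟩
  have hmP : m ≤ K * m := Nat.le_mul_of_pos_left _ (by lia)
  have hP0 : (0 : ℝ) < (K * m : ℕ) := mod_cast hm.trans hmP
  have hwindow : 8 * d * 9 ^ (n + 1) * m ≤ A * ((K * m : ℕ) : ℝ) ^ ε * #(primeWindow (K * m)) :=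
    calc (8 : ℝ) * d * 9 ^ (n + 1) * m
        ≤ 8 * d * 9 ^ (n + 1) * (C₀ * ((K * m : ℕ) : ℝ) ^ ε * #(primeWindow (K * m))) := by
          gcongr
          exact (Nat.cast_le.2 hmP).trans (hprimes _ (hm.trans hmP))
      _ = A * ((K * m : ℕ) : ℝ) ^ ε * #(primeWindow (K * m)) := by ring
  refine le_of_mul_le_mul_right ?_ hP0
  calc (#V : ℝ) * (K * m : ℕ)
      ≤ 2 * ((2 + A) * ((K * m : ℕ) : ℝ) ^ ε) * d * (4 * (K * m : ℕ)) ^ n :=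
        card_mul_le_of_isIsolated_one_of_rpow_le (by positivity) hε.le hK hF hm hwindow hV
    _ = 2 * (2 + A) * d * 4 ^ n * (((K * m : ℕ) : ℝ) ^ (n : ℝ) * ((K * m : ℕ) : ℝ) ^ ε) := by
      rw [Real.rpow_natCast]
      ring
    _ = 2 * (2 + A) * d * 4 ^ n * (((K * m : ℕ) : ℝ) ^ (n - (1 : ℕ) + ε) * (K * m : ℕ)) := by
      rw [← Real.rpow_add hP0, ← Real.rpow_add_one hP0.ne']
      push_cast
      ring_nf
    _ = _ := by
      rw [Nat.cast_mul, Real.mul_rpow (by positivity) (by positivity)]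
      ring

theorem exists_forall_countBound_one (d : ℕ) (hε : 0 < ε) (hn : 2 ≤ n) :
    ∃ C : ℝ, 0 < C ∧ ∀ F, IsAdmissible n d F → ∀ Δ : ℝ, CountBound F 1 (n - (1 : ℕ) + ε) C Δ := by
  obtain ⟨K, hK, hcount⟩ := (stepBound n d hε 1 le_rfl).exists_forall_countBound hε le_rfl hn
  obtain ⟨C, hC, hisol⟩ := exists_card_le_of_isIsolated_one n d hε hK
  refine ⟨4 * (C + 1), by positivity, fun F hF Δ => ?_⟩
  refine hcount F hF _ _ (by positivity) fun m hm _ V hV => (hisol F hF m hm V hV).trans ?_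
  gcongr
  linarith

end Induction

/-! ### Primitive vectors and the points of the hypersurface -/

theorem aeval_smul_of_isHomogeneous {σ R S : Type*} [CommSemiring R] [CommSemiring S]
    [Algebra R S] {F : MvPolynomial σ R} {d : ℕ} (hF : F.IsHomogeneous d) (a : S) (x : σ → S) :
    MvPolynomial.aeval (a • x) F = a ^ d * MvPolynomial.aeval x F := by
  simp only [MvPolynomial.aeval_def, MvPolynomial.eval₂_eq, mul_sum]
  refine sum_congr rfl fun m hm => ?_
  have hdeg : ∑ i ∈ m.support, m i = d :=
    (DFunLike.congr_fun Finsupp.degree_eq_weight_one m).trans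
      (hF (MvPolynomial.mem_support_iff.1 hm))
  simp only [Pi.smul_apply, smul_eq_mul, mul_pow, prod_mul_distrib, prod_pow_eq_pow_sum, hdeg]
  ring

theorem isAdmissible_of_nonsingularZ {n d : ℕ} (hd : 2 ≤ d) {F : MvPolynomial (Fin (n + 1)) ℤ}
    (hF : F.IsHomogeneous d) (hns : NonsingularZ F) : IsAdmissible n d F where
  ne_zero := by
    rintro rfl
    simpa using congrFun (hns 1 (by simp)) 0
  totalDegree_le := hF.totalDegree_le
  two_mul_finrank_le W hW := by
    simpa using two_mul_finrank_le_card_of_vanishesOn hd hF hns hW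

section Primitive

variable {n : ℕ} {x y : Fin n → ℤ}

theorem ne_zero_of_isPrimitiveVec (hx : IsPrimitiveVec x) : x ≠ 0 := by
  rintro rfl
  exact zero_ne_one ((gcd_eq_zero_iff.2 fun _ _ => rfl).symm.trans hx)

theorem eq_or_eq_neg_of_smul_eq_smul (hx : IsPrimitiveVec x) (hy : IsPrimitiveVec y) {a b : ℤ}
    (ha : a ≠ 0) (h : a • y = b • x) : y = x ∨ y = -x := by
  have hgcd : (univ.gcd fun i => a * y i) = univ.gcd fun i => b * x i := congrArg _ h
  rw [Finset.gcd_mul_left, Finset.gcd_mul_left, hx, hy, mul_one, mul_one,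
    normalize_eq_normalize_iff_associated, Int.associated_iff] at hgcd
  obtain rfl | rfl := hgcd
  · exact .inl (smul_right_injective _ ha h)
  · exact .inr (smul_right_injective _ ha (h.trans (neg_smul_neg b x).symm))

theorem eq_or_eq_neg_of_mem_span_ratVec (hx : IsPrimitiveVec x) (hy : IsPrimitiveVec y)
    (h : ratVec y ∈ Submodule.span ℚ {ratVec x}) : y = x ∨ y = -x := by
  obtain ⟨a, ha⟩ := Submodule.mem_span_singleton.1 h
  refine eq_or_eq_neg_of_smul_eq_smul hx hy (a := a.den) (b := a.num) (by simp)
    (ratVec_injective ?_)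
  rw [ratVec_smul, ratVec_smul, ← ha, smul_smul, Int.cast_natCast, Rat.den_mul_eq_num]

theorem card_le_two_mul_card_image_span [DecidableEq (Submodule ℚ (Fin n → ℚ))]
    {A : Finset (Fin n → ℤ)} (hA : ∀ x ∈ A, IsPrimitiveVec x) :
    #A ≤ 2 * #(A.image fun x => Submodule.span ℚ {ratVec x}) := by
  refine card_le_mul_card_image A 2 (forall_mem_image.2 fun x hx => ?_)
  refine (card_le_card fun y hy => ?_).trans (card_le_two (a := x) (b := -x))
  obtain ⟨hyA, hspan⟩ := mem_filter.1 hy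
  rw [mem_insert, mem_singleton]
  exact eq_or_eq_neg_of_mem_span_ratVec (hA x hx) (hA y hyA)
    (hspan ▸ Submodule.mem_span_singleton_self _)

theorem heightVec_le_iff {B : ℝ} (hB : 0 ≤ B) : heightVec x ≤ B ↔ ∀ i, |x i| ≤ ⌊B⌋₊ := by
  rw [heightVec, ← Nat.le_floor_iff hB, Finset.sup_le_iff]
  simp only [mem_univ, forall_const, Int.abs_eq_natAbs, Nat.cast_le]

theorem finite_setOf_heightVec_le (n : ℕ) {B : ℝ} (hB : 0 ≤ B) :
    {x : Fin n → ℤ | heightVec x ≤ B}.Finite := by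
  refine (Set.Finite.pi' fun _ => Set.finite_Icc (-(⌊B⌋₊ : ℤ)) ⌊B⌋₊).subset fun x hx i => ?_
  exact abs_le.1 ((heightVec_le_iff hB).1 hx i)

theorem subspaceHeight_span_singleton_le (hx : x ≠ 0) {m : ℕ} (hm : ∀ i, |x i| ≤ m) :
    subspaceHeight (Submodule.span ℚ {ratVec x}) ≤ m := by
  have hli : LinearIndependent ℚ fun _ : Fin 1 => ratVec x :=
    linearIndependent_unique_iff.2 (ratVec_ne_zero hx)
  refine (subspaceHeight_le (b := fun _ : Fin 1 => x) (finrank_span_singleton (ratVec_ne_zero hx))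
    hli fun _ => Submodule.mem_span_singleton_self _).trans (maxMinor_le fun J => ?_)
  simpa [minor] using hm (J 0)

end Primitive

theorem vanishesOn_span_singleton {σ : Type*} {F : MvPolynomial σ ℤ} {d : ℕ}
    (hF : F.IsHomogeneous d) {x : σ → ℤ} (hx : MvPolynomial.eval x F = 0) :
    VanishesOn F (Submodule.span ℚ {ratVec x}) := by
  intro y hy
  obtain ⟨a, rfl⟩ := Submodule.mem_span_singleton.1 hy
  rw [aeval_smul_of_isHomogeneous hF, aeval_ratVec, hx, Int.cast_zero, mul_zero]

theorem statement0_general (ε : ℝ) (hε : 0 < ε) (d n : ℕ) (hd : 2 ≤ d) (hn : 2 ≤ n) :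
    ∃ C : ℝ, 0 < C ∧ ∀ F : MvPolynomial (Fin (n + 1)) ℤ,
      F.IsHomogeneous d → NonsingularZ F → ∀ B : ℝ, 1 ≤ B →
      (Set.ncard {x : Fin (n + 1) → ℤ | IsPrimitiveVec x ∧ heightVec x ≤ B ∧
          MvPolynomial.eval x F = 0} : ℝ) ≤ C * B ^ ((n : ℝ) - 1 + ε) := by
  classical
  obtain ⟨C, hC, hcount⟩ := exists_forall_countBound_one d hε hn
  refine ⟨2 * C, by positivity, fun F hF hns B hB => ?_⟩
  have hB0 : 0 ≤ B := zero_le_one.trans hB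
  set A := {x : Fin (n + 1) → ℤ | IsPrimitiveVec x ∧ heightVec x ≤ B ∧ MvPolynomial.eval x F = 0}
  have hfin : A.Finite := (finite_setOf_heightVec_le _ hB0).subset fun x hx => hx.2.1
  have hprim : ∀ x ∈ hfin.toFinset, IsPrimitiveVec x := fun x hx => (hfin.mem_toFinset.1 hx).1
  have hlines := hcount F (isAdmissible_of_nonsingularZ hd hF hns) B B (one_pos.trans_le hB) le_rfl
    (hfin.toFinset.image fun x => Submodule.span ℚ {ratVec x}) <| forall_mem_image.2 fun x hx => by
      obtain ⟨hx, hxB, hFx⟩ := hfin.mem_toFinset.1 hx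
      have hx0 := ne_zero_of_isPrimitiveVec hx
      exact ⟨finrank_span_singleton (ratVec_ne_zero hx0), vanishesOn_span_singleton hF hFx,
        (Nat.le_floor_iff hB0).1
          (subspaceHeight_span_singleton_le hx0 ((heightVec_le_iff hB0).1 hxB))⟩
  rw [Nat.cast_one] at hlines
  rw [Set.ncard_eq_toFinset_card A hfin, mul_assoc]
  calc (#hfin.toFinset : ℝ)
      ≤ 2 * #(hfin.toFinset.image fun x => Submodule.span ℚ {ratVec x}) :=
        mod_cast card_le_two_mul_card_image_span hprim
    _ ≤ 2 * (C * B ^ ((n : ℝ) - 1 + ε)) := by gcongr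

end DimensionGrowth

/-- **Theorem 1 (main theorem).** For d ∈ {3,4}, n ∈ {5,6,7,8}, ε > 0 and any
non-singular form F of degree d in n+1 variables, the number of rational points of
height at most B on the hypersurface X = {F = 0} satisfies
N_X(B) = O_{d,ε,n}(B^{n-1+ε}).  Rational points of height at most B are counted via
primitive integer solutions x of F(x) = 0 with max|x_i| ≤ B (each projective point
corresponds to exactly two such vectors). -/
theorem statement0 (ε : ℝ) (hε : 0 < ε) (d n : ℕ) (hd : d = 3 ∨ d = 4)
    (hn : n = 5 ∨ n = 6 ∨ n = 7 ∨ n = 8) :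
    ∃ C : ℝ, 0 < C ∧ ∀ F : MvPolynomial (Fin (n + 1)) ℤ,
      F.IsHomogeneous d → NonsingularZ F → ∀ B : ℝ, 1 ≤ B →
      (Set.ncard {x : Fin (n + 1) → ℤ | IsPrimitiveVec x ∧ heightVec x ≤ B ∧
          MvPolynomial.eval x F = 0} : ℝ) ≤ C * B ^ ((n : ℝ) - 1 + ε) := by
  exact DimensionGrowth.statement0_general ε hε d n (by lia) (by lia)

end
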